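/- There exists a constant C > 0 such that for every prime q and every positive integer a coprime to q, writing a/q = [b_0; b_1, …, b_κ] for the continued fraction expansion, one has: (i) |M(a,q) − Σ_{1≤j≤κ, j odd} b_j^{1/2}·(log b_j + γ − log(8π)) + (π/2)·Σ_{1≤j≤κ, j even} b_j^{1/2}| ≤ C·κ; and (ii) for each choice of sign ±, |(q^{1/2}/φ(q)) Σ*_{χ mod q, χ(−1)=±1} |L(1/2,χ)|²·χ(a mod q) − (±1)·(1/2)·Σ_{j=1}^κ (±1)^j·b_j^{1/2}·(log b_j + γ − log(8π) ∓ π/2)| ≤ C·κ. -/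

import Mathlib

open Complex Real Finset

open scoped Classical in
/-- `M(a,q)`: the twisted second moment over primitive (= nontrivial, for prime `q`)
characters mod `q`. -/
noncomputable def Mtw (a : ℤ) (q : ℕ) [NeZero q] : ℂ :=
  (Real.sqrt q / (Nat.totient q : ℝ)) *
    ∑ χ : DirichletCharacter ℂ q, if χ = 1 then 0 else
      (‖χ.LFunction (1/2)‖^2 : ℂ) * χ (a : ZMod q)

open scoped Classical in
/-- The twisted second moment restricted to primitive characters of parity
`χ(-1) = ε`. -/
noncomputable def MtwParity (ε : ℤ) (a : ℤ) (q : ℕ) [NeZero q] : ℂ :=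
  (Real.sqrt q / (Nat.totient q : ℝ)) *
    ∑ χ : DirichletCharacter ℂ q, if χ ≠ 1 ∧ χ (-1 : ZMod q) = (ε : ℂ) then
      (‖χ.LFunction (1/2)‖^2 : ℂ) * χ (a : ZMod q) else 0

/-- The list `[b_0, b_1, …, b_κ]` of partial quotients of `a/q` produced by the
Euclidean algorithm. -/
def cfList : ℕ → ℕ → List ℕ
  | a, q =>
    if h : q = 0 then [] else (a / q) :: cfList q (a % q)
termination_by a q => q
decreasing_by exact Nat.mod_lt _ (Nat.pos_of_ne_zero h)

/-!
By orthogonality of characters and `L(1/2, χ) = q ^ (-1/2) ∑ χ(h) ζ(1/2, h/q)`, the twisted moment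
is, up to `O(1)`, the correlation `S(a, q) = q ^ (-1/2) ∑_{h mod q} Z(h/q) Z(ah/q)`, where `Z` is
the `1`-periodic extension of the Hurwitz zeta value `ζ(1/2, ·)`. The even and odd characters
correspond to the combinations `(S(a, q) ± S(-a, q)) / 2`.

With `θ = a/q`, `S(a, q)` is a regularised limit of `∑ Z(mθ) / √m`. Now
`∑_{k < y} 1 / √(k (y - k)) = π + (ζ(1/2) + Z(y)) / √y - E(y)` with `E(y) = O(y ^ (-3/2))`;
inserting this at `y = mθ` and exchanging the sums over `m` and `k` gives the reciprocity law
`S(a, q) - S(-q, a) = √θ (f(θ) + π/2) - ζ(1/2) ^ 2` with `f(θ) = ∑ E(mθ)`. The term `√θ f(θ)` is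
bounded for `θ ≥ 1`. For `θ ≤ 1`, the variation of `E` controls `θ f(θ) - (θ/n) f(θ/n)` up to the
expected logarithm, so `f(θ)` is determined by its values at `θ = 1/Q`, that is, by the mean square
`(1/Q) ∑ ζ(1/2, h/Q) ^ 2 = log Q + γ - log (8π) + o(1)`. Each step of the Euclidean algorithm thus
contributes one partial quotient with error `O(1)`, and the sign change from `S(a, q)` to `S(-q, a)`
produces the alternation in its index.
-/

open Filter Topology

namespace TwistedMoment

/-! ### The Hurwitz zeta function at `1/2` -/

lemma abs_sum_range_sub_le_of_telescope {f u v : ℕ → ℝ} {N : ℕ}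
    (h : ∀ n < N, |f n - (u n - u (n + 1))| ≤ v n - v (n + 1)) :
    |∑ n ∈ range N, f n - (u 0 - u N)| ≤ v 0 - v N := by
  rw [← sum_range_sub' u, ← sum_sub_distrib, ← sum_range_sub' v]
  exact (abs_sum_le_sum_abs _ _).trans (sum_le_sum fun n hn => h n (mem_range.1 hn))

lemma tendsto_sqrt_natCast_add (y : ℝ) : Tendsto (fun N : ℕ => √(y + N)) atTop atTop :=
  Real.tendsto_sqrt_atTop.comp (tendsto_atTop_add_const_left _ _ tendsto_natCast_atTop_atTop)

lemma tendsto_inv_sqrt_natCast : Tendsto (fun N : ℕ => (√(N : ℝ))⁻¹) atTop (𝓝 0) :=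
  (Real.tendsto_sqrt_atTop.comp tendsto_natCast_atTop_atTop).inv_tendsto_atTop

/-- The `n`-th term of the regularised series for `ζ(1/2, y)` is `sqrtDefect (y + n)`:
the summand `t^(-1/2)` minus its integral over `[t, t + 1]`. -/
noncomputable def sqrtDefect (t : ℝ) : ℝ := 1 / √t - 2 * (√(t + 1) - √t)

lemma exists_sqrt_eq_sqrt_add_one_eq {t : ℝ} (ht : 0 < t) :
    ∃ p r : ℝ, 0 < p ∧ p < r ∧ √t = p ∧ √(t + 1) = r ∧ t = p ^ 2 ∧ t + 1 = r ^ 2 ∧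
      r - p = 1 / (r + p) := by
  have ht1 : 0 ≤ t + 1 := by linarith
  refine ⟨√t, √(t + 1), by positivity, Real.sqrt_lt_sqrt ht.le (by linarith), rfl, rfl,
    (Real.sq_sqrt ht.le).symm, (Real.sq_sqrt ht1).symm, ?_⟩
  rw [eq_div_iff (by positivity)]
  linear_combination Real.sq_sqrt ht1 - Real.sq_sqrt ht.le

lemma sqrtDefect_nonneg {t : ℝ} (ht : 0 < t) : 0 ≤ sqrtDefect t := by
  obtain ⟨p, r, hp, hpr, hsp, hsr, -, -, hdiff⟩ := exists_sqrt_eq_sqrt_add_one_eq ht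
  have hr : 0 < r := hp.trans hpr
  have heq : 1 / p - 2 * (1 / (r + p)) = (r - p) / (p * (r + p)) := by field_simp; ring
  rw [sqrtDefect, hsp, hsr, hdiff, heq]
  exact div_nonneg (sub_nonneg.2 hpr.le) (by positivity)

lemma sqrtDefect_le {t : ℝ} (ht : 0 < t) : sqrtDefect t ≤ 1 / √t - 1 / √(t + 1) := by
  obtain ⟨p, r, hp, hpr, hsp, hsr, -, -, hdiff⟩ := exists_sqrt_eq_sqrt_add_one_eq ht
  have hr : 0 < r := hp.trans hpr
  rw [sqrtDefect, hsp, hsr, hdiff]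
  have : 1 / r ≤ 2 * (1 / (r + p)) := by
    rw [mul_one_div, div_le_div_iff₀ hr (by positivity)]
    linarith
  linarith

lemma abs_sqrtDefect_sub_le {t : ℝ} (ht : 0 < t) :
    |sqrtDefect t - (1 / √t / 2 - 1 / √(t + 1) / 2)| ≤
      1 / (t * √t) / 2 - 1 / ((t + 1) * √(t + 1)) / 2 := by
  obtain ⟨p, r, hp, hpr, hsp, hsr, htp, htr, hdiff⟩ := exists_sqrt_eq_sqrt_add_one_eq ht
  have hr : 0 < r := hp.trans hpr
  have : 0 < r - p := sub_pos.2 hpr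
  rw [sqrtDefect, hsp, hsr, htr, htp, hdiff]
  have hleft : 1 / p - 2 * (1 / (r + p)) - (1 / p / 2 - 1 / r / 2) =
      (r - p) * (1 / (r + p)) / (2 * p * r * (r + p)) := by
    trans (r - p) * (r - p) / (2 * p * r * (r + p))
    · field_simp; ring
    · nth_rw 2 [hdiff]
  have hright : 1 / (p ^ 2 * p) / 2 - 1 / (r ^ 2 * r) / 2 =
      (r - p) * (r ^ 2 + r * p + p ^ 2) / (2 * (p ^ 3 * r ^ 3)) := by field_simp; ring
  have hpoly : p * r * (p * r) ≤ (r ^ 2 + r * p + p ^ 2) * (r + p) ^ 2 := by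
    apply mul_le_mul <;> nlinarith
  rw [hleft, hright, abs_of_nonneg (by positivity), mul_one_div, div_div,
    div_le_div_iff₀ (by positivity) (by positivity)]
  have : 0 ≤ 2 * (r - p) * (p * r) := by positivity
  nlinarith [mul_le_mul_of_nonneg_left hpoly this]

lemma sum_sqrtDefect_le {y : ℝ} (hy : 0 < y) (N : ℕ) :
    ∑ n ∈ range N, sqrtDefect (y + n) ≤ 1 / √y :=
  calc ∑ n ∈ range N, sqrtDefect (y + n)
      ≤ ∑ n ∈ range N, (1 / √(y + n) - 1 / √(y + (n + 1 : ℕ))) := by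
        gcongr with n
        simpa [add_assoc] using sqrtDefect_le (t := y + n) (by positivity)
    _ = 1 / √y - 1 / √(y + N) := by
        rw [sum_range_sub' fun n : ℕ => 1 / √(y + n), Nat.cast_zero, add_zero]
    _ ≤ 1 / √y := sub_le_self _ (by positivity)

lemma summable_sqrtDefect {y : ℝ} (hy : 0 < y) : Summable fun n : ℕ => sqrtDefect (y + n) :=
  summable_of_sum_range_le (fun _ => sqrtDefect_nonneg (by positivity)) (sum_sqrtDefect_le hy)

/-- The Hurwitz zeta value `ζ(1/2, y)` for real `y > 0`, as a regularised series. -/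
noncomputable def hurwitzHalf (y : ℝ) : ℝ := ∑' n : ℕ, sqrtDefect (y + n) - 2 * √y

lemma hurwitzHalf_eq_add {y : ℝ} (hy : 0 < y) : hurwitzHalf y = 1 / √y + hurwitzHalf (y + 1) := by
  have hshift (n : ℕ) : y + (n + 1 : ℕ) = y + 1 + n := by push_cast; ring
  rw [hurwitzHalf, (summable_sqrtDefect hy).tsum_eq_zero_add, hurwitzHalf]
  simp only [hshift, Nat.cast_zero, add_zero]
  rw [sqrtDefect]
  ring

lemma hurwitzHalf_eq_sum_add {y : ℝ} (hy : 0 < y) (N : ℕ) :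
    hurwitzHalf y = ∑ n ∈ range N, 1 / √(y + n) + hurwitzHalf (y + N) := by
  induction N with
  | zero => simp
  | succ N ih =>
    rw [ih, sum_range_succ, hurwitzHalf_eq_add (y := y + N) (by positivity), Nat.cast_succ,
      add_assoc y]
    ring

lemma abs_hurwitzHalf_asymptotic_le {y : ℝ} (hy : 0 < y) :
    |hurwitzHalf y + 2 * √y - 1 / (2 * √y)| ≤ 1 / (y * √y) := by
  have hpartial (N : ℕ) :
      |∑ n ∈ range N, sqrtDefect (y + n) - (1 / √y / 2 - 1 / √(y + N) / 2)| ≤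
        1 / (y * √y) / 2 - 1 / ((y + N) * √(y + N)) / 2 := by
    have := abs_sum_range_sub_le_of_telescope (f := fun n : ℕ => sqrtDefect (y + n))
      (u := fun n : ℕ => 1 / √(y + n) / 2) (v := fun n : ℕ => 1 / ((y + n) * √(y + n)) / 2)
      (N := N) fun n _ => by
        simpa [add_assoc] using abs_sqrtDefect_sub_le (t := y + n) (by positivity)
    simpa using this
  have htail : Tendsto (fun N : ℕ => 1 / √(y + N) / 2) atTop (𝓝 0) := by
    simpa using ((tendsto_sqrt_natCast_add y).inv_tendsto_atTop.div_const 2)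
  have hlim := ((summable_sqrtDefect hy).hasSum.tendsto_sum_nat.sub
    (htail.const_sub (1 / √y / 2))).abs
  have heq : hurwitzHalf y + 2 * √y - 1 / (2 * √y) =
      ∑' n : ℕ, sqrtDefect (y + n) - (1 / √y / 2 - 0) := by
    rw [hurwitzHalf, div_div, mul_comm √y 2]; ring
  have hnonneg (t : ℝ) (ht : 0 ≤ t) : 0 ≤ 1 / (t * √t) := by positivity
  rw [heq]
  refine le_of_tendsto hlim (.of_forall fun N => (hpartial N).trans ?_)
  linarith [hnonneg y hy.le, hnonneg (y + N) (by positivity)]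

/-- The constant `ζ(1/2)`. -/
noncomputable def zetaHalf : ℝ := hurwitzHalf 1

/-- The `1`-periodic function agreeing with `ζ(1/2, x)` on `(0, 1]`. -/
noncomputable def periodicHurwitz (x : ℝ) : ℝ := hurwitzHalf (x - ⌈x⌉ + 1)

lemma periodicHurwitz_add_intCast (x : ℝ) (n : ℤ) :
    periodicHurwitz (x + n) = periodicHurwitz x := by
  rw [periodicHurwitz, Int.ceil_add_intCast, Int.cast_add, add_sub_add_right_eq_sub,
    periodicHurwitz]

lemma periodicHurwitz_eq_hurwitzHalf {x : ℝ} (h0 : 0 < x) (h1 : x ≤ 1) :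
    periodicHurwitz x = hurwitzHalf x := by
  have : ⌈x⌉ = 1 := Int.ceil_eq_iff.2 (by simpa using ⟨h0, h1⟩)
  rw [periodicHurwitz, this, Int.cast_one, sub_add_cancel]

lemma periodicHurwitz_zero : periodicHurwitz 0 = zetaHalf := by simp [periodicHurwitz, zetaHalf]

lemma periodicHurwitz_intCast (n : ℤ) : periodicHurwitz n = zetaHalf := by
  simpa [periodicHurwitz_zero] using periodicHurwitz_add_intCast 0 n

lemma exists_eq_add_natCast_of_pos {y : ℝ} (hy : 0 < y) :
    ∃ (n : ℕ) (x : ℝ), 0 < x ∧ x ≤ 1 ∧ y = x + n ∧ ⌈y⌉₊ = n + 1 := by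
  obtain ⟨n, hn⟩ := Nat.exists_eq_succ_of_ne_zero (Nat.ceil_pos.2 hy).ne'
  refine ⟨n, y - n, sub_pos.2 (Nat.lt_ceil.1 (hn ▸ n.lt_succ_self)), ?_, by ring, hn⟩
  have := Nat.le_ceil y
  rw [hn, Nat.cast_succ] at this
  linarith

lemma periodicHurwitz_add_natCast {x : ℝ} (h0 : 0 < x) (h1 : x ≤ 1) (n : ℕ) :
    periodicHurwitz (x + n) = ∑ j ∈ range n, 1 / √(x + j) + hurwitzHalf (x + n) := by
  rw [← hurwitzHalf_eq_sum_add h0 n, ← periodicHurwitz_eq_hurwitzHalf h0 h1]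
  exact_mod_cast periodicHurwitz_add_intCast x n

/-! ### Sums of `√t / (√y + √(y - t))` -/

lemma abs_sub_trapezoid_le {F f f' : ℝ → ℝ} {a V : ℝ}
    (hF : ∀ t ∈ Set.Icc a (a + 1), HasDerivAt F (f t) t)
    (hf : ∀ t ∈ Set.Icc a (a + 1), HasDerivAt f (f' t) t)
    (hV : ∀ s ∈ Set.Icc a (a + 1), ∀ t ∈ Set.Icc a (a + 1), |f' s - f' t| ≤ V) :
    |F (a + 1) - F a - (f a + f (a + 1)) / 2| ≤ V := by
  have hV0 : 0 ≤ V :=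
    (abs_nonneg _).trans (hV a ⟨le_rfl, by linarith⟩ a ⟨le_rfl, by linarith⟩)
  set err : ℝ → ℝ := fun t => F t - F a - (t - a) * (f a + f t) / 2 with herr
  set err' : ℝ → ℝ := fun t => f t - (1 * (f a + f t) + (t - a) * f' t) / 2 with herr'
  have hderiv : ∀ t ∈ Set.Icc a (a + 1), HasDerivWithinAt err (err' t) (Set.Icc a (a + 1)) t :=
    fun t ht => (((hF t ht).sub_const (F a)).sub
      ((((hasDerivAt_id t).sub_const a).mul ((hf t ht).const_add (f a))).div_const 2)
      ).hasDerivWithinAt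
  have hbound : ∀ t ∈ Set.Ico a (a + 1), ‖err' t‖ ≤ V := by
    intro t ht
    rcases ht.1.eq_or_lt with rfl | hat
    · simpa [herr', ← two_mul] using hV0
    obtain ⟨ξ, hξ, hslope⟩ := exists_hasDerivAt_eq_slope f f' hat
      (fun u hu => (hf u ⟨hu.1, by linarith [hu.2, ht.2]⟩).continuousAt.continuousWithinAt)
      (fun u hu => hf u ⟨hu.1.le, by linarith [hu.2, ht.2]⟩)
    have herr_eq : err' t = (t - a) / 2 * (f' ξ - f' t) := by
      have : t - a ≠ 0 := by linarith
      rw [herr', hslope]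
      field_simp
      ring
    rw [herr_eq, norm_mul, Real.norm_eq_abs, Real.norm_eq_abs, abs_of_pos (by linarith)]
    calc (t - a) / 2 * |f' ξ - f' t| ≤ 1 * |f' ξ - f' t| := by gcongr; linarith [ht.2]
      _ ≤ V := by
        rw [one_mul]
        exact hV ξ ⟨hξ.1.le, by linarith [hξ.2, ht.2]⟩ t ⟨ht.1, ht.2.le⟩
  have hmvt := norm_image_sub_le_of_norm_deriv_le_segment' hderiv hbound (a + 1)
    ⟨by linarith, le_rfl⟩
  simpa [herr] using hmvt

lemma abs_sum_sub_trapezoid_le {F f f' W : ℝ → ℝ} {b : ℝ} (N : ℕ)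
    (hF : ∀ t ∈ Set.Icc b (b + N), HasDerivAt F (f t) t)
    (hf : ∀ t ∈ Set.Icc b (b + N), HasDerivAt f (f' t) t)
    (hW : ∀ s ∈ Set.Icc b (b + N), ∀ t ∈ Set.Icc b (b + N), s ≤ t → |f' s - f' t| ≤ W t - W s) :
    |∑ j ∈ range (N + 1), f (b + j) - (F (b + N) - F b) - (f b + f (b + N)) / 2| ≤
      W (b + N) - W b := by
  have hWmono : ∀ s ∈ Set.Icc b (b + N), ∀ t ∈ Set.Icc b (b + N), s ≤ t → W s ≤ W t :=
    fun s hs t ht hst => sub_nonneg.1 ((abs_nonneg _).trans (hW s hs t ht hst))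
  have hcell : ∀ j < N, |F (b + j + 1) - F (b + j) - (f (b + j) + f (b + j + 1)) / 2| ≤
      W (b + j + 1) - W (b + j) := by
    intro j hj
    have hjN : (j : ℝ) + 1 ≤ N := by exact_mod_cast hj
    have hsub : Set.Icc (b + j) (b + j + 1) ⊆ Set.Icc b (b + N) :=
      Set.Icc_subset_Icc (by simp) (by linarith)
    refine abs_sub_trapezoid_le (fun t ht => hF t (hsub ht)) (fun t ht => hf t (hsub ht)) ?_
    intro s hs t ht
    have hleft : b + j ∈ Set.Icc (b + j) (b + j + 1) := ⟨le_rfl, by linarith⟩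
    have hright : b + j + 1 ∈ Set.Icc (b + j) (b + j + 1) := ⟨by linarith, le_rfl⟩
    rcases le_total s t with hst | hts
    · linarith [hW s (hsub hs) t (hsub ht) hst, hWmono _ (hsub hleft) _ (hsub hs) hs.1,
        hWmono _ (hsub ht) _ (hsub hright) ht.2]
    · rw [abs_sub_comm]
      linarith [hW t (hsub ht) s (hsub hs) hts, hWmono _ (hsub hleft) _ (hsub ht) ht.1,
        hWmono _ (hsub hs) _ (hsub hright) hs.2]
  have hsum (M : ℕ) : ∑ j ∈ range (M + 1), f (b + j) - (F (b + M) - F b) - (f b + f (b + M)) / 2 =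
      -∑ j ∈ range M, (F (b + j + 1) - F (b + j) - (f (b + j) + f (b + j + 1)) / 2) := by
    induction M with
    | zero => simp
    | succ M ih =>
      rw [sum_range_succ, sum_range_succ (fun j : ℕ => F (b + j + 1) - _ - _), neg_add, ← ih,
        Nat.cast_succ, ← add_assoc b]
      ring
  rw [hsum, abs_neg]
  calc |∑ j ∈ range N, (F (b + j + 1) - F (b + j) - (f (b + j) + f (b + j + 1)) / 2)|
      ≤ ∑ j ∈ range N, (W (b + (j + 1 : ℕ)) - W (b + j)) := by
        refine (abs_sum_le_sum_abs _ _).trans (sum_le_sum fun j hj => ?_)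
        simpa [add_assoc] using hcell j (mem_range.1 hj)
    _ = W (b + N) - W b := by
        rw [sum_range_sub fun j : ℕ => W (b + j), Nat.cast_zero, add_zero]

/-- The function `√t / (√y + √(y - t))`, which is what remains of `(y / t)^(1/2) (y - t)^(-1/2)`
after removing its singular parts at `t = 0` and `t = y`. -/
noncomputable def sqrtRatio (y t : ℝ) : ℝ := √t / (√y + √(y - t))

/-- The derivative of `sqrtRatio y`, split into monotone pieces. -/
noncomputable def sqrtRatioDeriv (y t : ℝ) : ℝ :=
  1 / (2 * y) * (√t / √(y - t) + √(y - t) / √t - √y / √t / 2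
    - (sqrtRatio y t + sqrtRatio y t ^ 3) / 4)

/-- A monotone function whose increments dominate those of `sqrtRatioDeriv y`. -/
noncomputable def sqrtRatioVariation (y t : ℝ) : ℝ :=
  1 / (2 * y) * (√t / √(y - t) - √(y - t) / √t - √y / √t / 2
    + (sqrtRatio y t + sqrtRatio y t ^ 3) / 4)

/-- A primitive of `sqrtRatio y`. -/
noncomputable def sqrtRatioPrimitive (y t : ℝ) : ℝ :=
  2 * √y * √t - y * Real.arcsin √(t / y) - √t * √(y - t)

section SqrtRatio

variable {y s t : ℝ}

lemma hasDerivAt_sqrt_const_sub (h : t < y) :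
    HasDerivAt (fun t => √(y - t)) (-1 / (2 * √(y - t))) t := by
  simpa using ((hasDerivAt_id t).const_sub y).sqrt (by simpa [sub_eq_zero] using h.ne')

lemma exists_sqrt_pythagorean (h0 : 0 < t) (h1 : t < y) :
    ∃ P Q Y : ℝ, 0 < P ∧ 0 < Q ∧ 0 < Y ∧ √t = P ∧ √(y - t) = Q ∧ √y = Y ∧ y = Y ^ 2 ∧
      P ^ 2 = Y ^ 2 - Q ^ 2 := by
  have hy : 0 < y := h0.trans h1
  have hyt : 0 < y - t := sub_pos.2 h1
  refine ⟨√t, √(y - t), √y, by positivity, by positivity, by positivity, rfl, rfl, rfl,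
    (Real.sq_sqrt hy.le).symm, ?_⟩
  rw [Real.sq_sqrt hy.le, Real.sq_sqrt h0.le, Real.sq_sqrt hyt.le]
  ring

lemma hasDerivAt_sqrtRatio (h0 : 0 < t) (h1 : t < y) :
    HasDerivAt (sqrtRatio y) (sqrtRatioDeriv y t) t := by
  have hraw := (Real.hasDerivAt_sqrt h0.ne').div ((hasDerivAt_sqrt_const_sub h1).const_add √y)
    (by have := Real.sqrt_pos.2 (h0.trans h1); positivity)
  refine hraw.congr_deriv ?_
  obtain ⟨P, Q, Y, hP, hQ, hY, hsP, hsQ, hsY, hyY, hpyth⟩ := exists_sqrt_pythagorean h0 h1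
  rw [sqrtRatioDeriv, sqrtRatio, hsP, hsQ, hsY, hyY]
  have hP4 : P ^ 4 = (Y ^ 2 - Q ^ 2) ^ 2 := by rw [← hpyth]; ring
  field_simp
  ring_nf
  simp only [hP4, hpyth]
  ring

lemma hasDerivAt_sqrtRatioPrimitive (h0 : 0 < t) (h1 : t < y) :
    HasDerivAt (sqrtRatioPrimitive y) (sqrtRatio y t) t := by
  have hy : 0 < y := h0.trans h1
  have hty : 0 < t / y := by positivity
  have hty1 : √(t / y) < 1 := by
    rwa [Real.sqrt_lt' one_pos, one_pow, div_lt_one hy]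
  have hsqrt := Real.hasDerivAt_sqrt h0.ne'
  have hsqrt_div : HasDerivAt (fun t => √(t / y)) (1 / y / (2 * √(t / y))) t := by
    simpa using ((hasDerivAt_id t).div_const y).sqrt (by simpa using hty.ne')
  have harcsin := (Real.hasDerivAt_arcsin (x := √(t / y))
    (by linarith [Real.sqrt_nonneg (t / y)]) hty1.ne).comp t hsqrt_div
  have hraw := ((hsqrt.const_mul (2 * √y)).sub (harcsin.const_mul y)).sub
    (hsqrt.mul (hasDerivAt_sqrt_const_sub h1))
  refine hraw.congr_deriv ?_
  have hcos : √(1 - √(t / y) ^ 2) = √(y - t) / √y := by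
    rw [Real.sq_sqrt hty.le, ← Real.sqrt_div (by linarith), sub_div, div_self hy.ne']
  obtain ⟨P, Q, Y, hP, hQ, hY, hsP, hsQ, hsY, hyY, hpyth⟩ := exists_sqrt_pythagorean h0 h1
  rw [hcos, Real.sqrt_div h0.le, sqrtRatio, hsP, hsQ, hsY, hyY]
  field_simp
  ring_nf
  simp only [hpyth]
  ring

lemma sqrtRatio_nonneg (y t : ℝ) : 0 ≤ sqrtRatio y t := by unfold sqrtRatio; positivity

lemma sqrtRatio_le_div_sqrt (hy : 0 < y) (t : ℝ) : sqrtRatio y t ≤ √t / √y := by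
  have := Real.sqrt_pos.2 hy
  exact div_le_div_of_nonneg_left (by positivity) this (le_add_of_nonneg_right (by positivity))

lemma sqrtRatio_le_one (hy : 0 < y) (hty : t ≤ y) : sqrtRatio y t ≤ 1 :=
  (sqrtRatio_le_div_sqrt hy t).trans
    ((div_le_one (Real.sqrt_pos.2 hy)).2 (Real.sqrt_le_sqrt hty))

lemma monotone_sqrtRatio (hy : 0 < y) : Monotone (sqrtRatio y) := by
  intro s t hst
  have := Real.sqrt_pos.2 hy
  unfold sqrtRatio
  gcongr

lemma sqrtRatio_le_two_div (hy : 0 < y) (ht : t ≤ 2) : sqrtRatio y t ≤ 2 / √y := by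
  refine (sqrtRatio_le_div_sqrt hy t).trans ?_
  gcongr
  rw [Real.sqrt_le_left (by norm_num)]
  linarith

lemma one_sub_sqrtRatio_le (hy : 1 ≤ y) (h0 : 0 ≤ t) (hyt : y - t ≤ 2) :
    1 - sqrtRatio y t ≤ 4 / √y := by
  have hY : 1 ≤ √y := Real.one_le_sqrt.2 hy
  have hQ : √(y - t) ≤ 2 := by
    rw [Real.sqrt_le_left (by norm_num)]; linarith
  have hP : √y - √t ≤ 2 := by
    nlinarith [Real.sq_sqrt h0, Real.sq_sqrt (show 0 ≤ y by linarith), Real.sqrt_nonneg t]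
  have heq : 1 - sqrtRatio y t = (√y - √t + √(y - t)) / (√y + √(y - t)) := by
    unfold sqrtRatio; field_simp; ring
  rw [heq]
  exact div_le_div₀ (by norm_num) (by linarith) (by linarith)
    (le_add_of_nonneg_right (Real.sqrt_nonneg _))

lemma continuous_sqrtRatioPrimitive (y : ℝ) : Continuous (sqrtRatioPrimitive y) := by
  unfold sqrtRatioPrimitive
  fun_prop

lemma sqrtRatioPrimitive_zero (y : ℝ) : sqrtRatioPrimitive y 0 = 0 := by
  simp [sqrtRatioPrimitive]

lemma sqrtRatioPrimitive_self (hy : 0 < y) : sqrtRatioPrimitive y y = y * (2 - π / 2) := by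
  simp only [sqrtRatioPrimitive, div_self hy.ne', Real.sqrt_one, Real.arcsin_one, sub_self,
    Real.sqrt_zero, mul_zero, sub_zero]
  linear_combination 2 * Real.mul_self_sqrt hy.le

lemma exists_sqrtRatioPrimitive_sub_eq (h0 : 0 ≤ s) (hst : s < t) (hty : t ≤ y) :
    ∃ ξ ∈ Set.Ioo s t,
      sqrtRatioPrimitive y t - sqrtRatioPrimitive y s = sqrtRatio y ξ * (t - s) := by
  obtain ⟨ξ, hξ, hslope⟩ := exists_hasDerivAt_eq_slope (sqrtRatioPrimitive y) (sqrtRatio y) hst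
    (continuous_sqrtRatioPrimitive y).continuousOn
    (fun u hu => hasDerivAt_sqrtRatioPrimitive (by linarith [hu.1]) (by linarith [hu.2]))
  exact ⟨ξ, hξ, by rw [hslope, div_mul_cancel₀ _ (sub_ne_zero.2 hst.ne')]⟩

lemma abs_sqrtRatioDeriv_sub_le (h0 : 0 < s) (hst : s ≤ t) (hty : t < y) :
    |sqrtRatioDeriv y s - sqrtRatioDeriv y t| ≤
      sqrtRatioVariation y t - sqrtRatioVariation y s := by
  have hy : 0 < y := by linarith
  have := Real.sqrt_pos.2 h0
  have := Real.sqrt_pos.2 (sub_pos.2 hty)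
  have hinc₁ : √s / √(y - s) ≤ √t / √(y - t) := by gcongr
  have hdec₁ : √(y - t) / √t ≤ √(y - s) / √s := by gcongr
  have hdec₂ : √y / √t / 2 ≤ √y / √s / 2 := by gcongr
  have hinc₂ : sqrtRatio y s ≤ sqrtRatio y t := monotone_sqrtRatio hy hst
  have hinc₃ : sqrtRatio y s ^ 3 ≤ sqrtRatio y t ^ 3 :=
    pow_le_pow_left₀ (sqrtRatio_nonneg _ _) hinc₂ 3
  unfold sqrtRatioDeriv sqrtRatioVariation
  rw [← mul_sub, ← mul_sub, abs_mul, abs_of_pos (by positivity)]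
  refine mul_le_mul_of_nonneg_left (abs_le.2 ⟨?_, ?_⟩) (by positivity) <;> linarith

lemma sqrtRatioVariation_sub_le (hs : 1 ≤ s) (hst : s ≤ t) (hty : t ≤ y - 1) :
    sqrtRatioVariation y t - sqrtRatioVariation y s ≤ 2 / √y := by
  have hy : 0 < y := by linarith
  have hs1 : 1 ≤ √s := Real.one_le_sqrt.2 hs
  have hyt1 : 1 ≤ √(y - t) := Real.one_le_sqrt.2 (by linarith)
  have hright : √t / √(y - t) ≤ √y :=
    (div_le_self (by positivity) hyt1).trans (Real.sqrt_le_sqrt (by linarith))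
  have hleft₁ : √(y - s) / √s ≤ √y :=
    (div_le_self (by positivity) hs1).trans (Real.sqrt_le_sqrt (by linarith))
  have hleft₂ : √y / √s / 2 ≤ √y / 2 := by
    gcongr
    exact div_le_self (by positivity) hs1
  have hone : sqrtRatio y t ≤ 1 := sqrtRatio_le_one hy (by linarith)
  have hcube : sqrtRatio y t ^ 3 ≤ 1 := pow_le_one₀ (sqrtRatio_nonneg _ _) hone
  have hs0 := sqrtRatio_nonneg y s
  have hs3 : 0 ≤ sqrtRatio y s ^ 3 := by positivity
  have hpos₁ : 0 ≤ √(y - t) / √t := by positivity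
  have hpos₂ : 0 ≤ √y / √t / 2 := by positivity
  have hpos₃ : 0 ≤ √s / √(y - s) := by positivity
  have hy1 : 1 ≤ √y := Real.one_le_sqrt.2 (by linarith)
  have heq : 2 / √y = 1 / (2 * y) * (4 * √y) := by
    have := Real.sq_sqrt hy.le
    field_simp
    linarith
  rw [heq, sqrtRatioVariation, sqrtRatioVariation, ← mul_sub]
  gcongr
  linarith

lemma sqrtRatioPrimitive_le (h0 : 0 < t) (ht : t ≤ 2) (hty : t ≤ y) :
    0 ≤ sqrtRatioPrimitive y t ∧ sqrtRatioPrimitive y t ≤ 4 / √y := by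
  have hy : 0 < y := by linarith
  obtain ⟨ξ, hξ, hmvt⟩ := exists_sqrtRatioPrimitive_sub_eq le_rfl h0 hty
  rw [sqrtRatioPrimitive_zero, sub_zero, sub_zero] at hmvt
  have hξ0 := sqrtRatio_nonneg y ξ
  rw [hmvt]
  refine ⟨by positivity, ?_⟩
  calc sqrtRatio y ξ * t ≤ 2 / √y * 2 := by
        gcongr
        exact sqrtRatio_le_two_div hy (by linarith [hξ.2])
    _ = 4 / √y := by ring

lemma abs_sqrtRatioPrimitive_self_sub_le (hy : 2 ≤ y) (h1 : y - 2 ≤ t) (h2 : t < y) :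
    |y * (2 - π / 2) - sqrtRatioPrimitive y t - (y - t)| ≤ 8 / √y := by
  obtain ⟨ξ, hξ, hmvt⟩ := exists_sqrtRatioPrimitive_sub_eq (by linarith) h2 le_rfl
  have hle := one_sub_sqrtRatio_le (y := y) (t := ξ) (by linarith) (by linarith [hξ.1])
    (by linarith [hξ.1])
  have hone := sqrtRatio_le_one (y := y) (by linarith) hξ.2.le
  rw [← sqrtRatioPrimitive_self (by linarith), hmvt, abs_sub_comm]
  have heq : y - t - sqrtRatio y ξ * (y - t) = (1 - sqrtRatio y ξ) * (y - t) := by ring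
  rw [heq, abs_of_nonneg (mul_nonneg (by linarith) (by linarith))]
  calc (1 - sqrtRatio y ξ) * (y - t) ≤ 4 / √y * 2 := by
        gcongr
        linarith
    _ = 8 / √y := by ring

lemma abs_sum_sqrtRatio_sub_le {b : ℝ} {N : ℕ} (hb1 : 1 ≤ b) (hb2 : b ≤ 2)
    (hN1 : y - 2 ≤ b + N) (hN2 : b + N ≤ y - 1) :
    |∑ j ∈ range (N + 1), sqrtRatio y (b + j) - (1 / 2 + y * (2 - π / 2) - (y - b - N))| ≤
      20 / √y := by
  have hN : (0 : ℝ) ≤ N := by positivity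
  have hy : 2 ≤ y := by linarith
  have htrapezoid := abs_sum_sub_trapezoid_le (b := b) (W := sqrtRatioVariation y) N
    (fun t ht => hasDerivAt_sqrtRatioPrimitive (by linarith [ht.1]) (by linarith [ht.2]))
    (fun t ht => hasDerivAt_sqrtRatio (by linarith [ht.1]) (by linarith [ht.2]))
    (fun s hs t ht hst => abs_sqrtRatioDeriv_sub_le (by linarith [hs.1]) hst (by linarith [ht.2]))
  have hvariation := sqrtRatioVariation_sub_le (y := y) hb1 (le_add_of_nonneg_right hN) hN2
  obtain ⟨hstart0, hstart⟩ := sqrtRatioPrimitive_le (y := y) (by linarith) hb2 (by linarith)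
  have hend := abs_sqrtRatioPrimitive_self_sub_le hy hN1 (by linarith)
  have hb := sqrtRatio_le_two_div (y := y) (by linarith) hb2
  have hb0 := sqrtRatio_nonneg y b
  have hbN := one_sub_sqrtRatio_le (y := y) (t := b + N) (by linarith) (by linarith)
    (by linarith)
  have hbN1 := sqrtRatio_le_one (y := y) (t := b + N) (by linarith) (by linarith)
  have hY : 0 < (√y)⁻¹ := inv_pos.2 (Real.sqrt_pos.2 (by linarith))
  simp only [div_eq_mul_inv _ √y] at hvariation hstart hend hb hbN ⊢
  rw [abs_le] at htrapezoid hend ⊢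
  constructor <;> linarith

end SqrtRatio

/-! ### The convolution of `k^(-1/2)` with itself -/

/-- The additive convolution `∑_{0 < k < y} k^(-1/2) (y - k)^(-1/2)`; the index `k = 0`
contributes `0` because `1 / 0 = 0`. -/
noncomputable def sqrtConvolution (y : ℝ) : ℝ := ∑ k ∈ range ⌈y⌉₊, 1 / (√k * √(y - k))

/-- The error in the approximation of `sqrtConvolution y` by `π`, corrected by the two boundary
terms of the summation formula. -/
noncomputable def convolutionError (y : ℝ) : ℝ :=
  periodicHurwitz y / √y + π + zetaHalf / √y - sqrtConvolution y

lemma sqrtConvolution_eq_sum_range {y : ℝ} {L : ℕ} (h : y ≤ L) :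
    sqrtConvolution y = ∑ k ∈ range L, 1 / (√k * √(y - k)) := by
  refine sum_subset (range_subset_range.2 (Nat.ceil_le.2 h)) fun k _ hk => ?_
  have : y - k ≤ 0 := sub_nonpos.2 (Nat.ceil_le.1 (not_lt.1 (mem_range.not.1 hk)))
  rw [Real.sqrt_eq_zero_of_nonpos this, mul_zero, div_zero]

lemma mul_one_div_sqrt_mul_sqrt_sub {y k : ℝ} (h0 : 0 < k) (h1 : k < y) :
    y * (1 / (√k * √(y - k))) =
      √y * (1 / √k) - sqrtRatio y k + (√y * (1 / √(y - k)) - sqrtRatio y (y - k)) := by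
  obtain ⟨P, Q, Y, hP, hQ, hY, hsP, hsQ, hsY, hyY, hpyth⟩ := exists_sqrt_pythagorean h0 h1
  rw [sqrtRatio, sqrtRatio, sub_sub_cancel, hsP, hsQ, hsY, hyY]
  have hPQ : P / (Y + Q) = (Y - Q) / P := by field_simp; linear_combination hpyth
  have hQP : Q / (Y + P) = (Y - P) / Q := by field_simp; linear_combination hpyth
  rw [hPQ, hQP]
  field_simp
  linear_combination -hpyth

lemma sum_range_sub_one_add_eq_sum_add (F : ℝ → ℝ) (x : ℝ) (n : ℕ) :
    ∑ k ∈ range n, F (x + n - (1 + k)) = ∑ k ∈ range n, F (x + k) := by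
  rw [← sum_range_reflect]
  refine sum_congr rfl fun k hk => ?_
  have hk : 1 + k ≤ n := by rw [mem_range] at hk; omega
  rw [Nat.sub_sub, Nat.cast_sub hk, Nat.cast_add, Nat.cast_one]
  ring_nf

lemma mul_sqrtConvolution_add_natCast {x : ℝ} (h0 : 0 < x) (h1 : x ≤ 1) (n : ℕ) :
    (x + n) * sqrtConvolution (x + n) =
      √(x + n) * (zetaHalf - hurwitzHalf (1 + n))
        + √(x + n) * (periodicHurwitz (x + n) - hurwitzHalf (x + n))
        - ∑ k ∈ range n, sqrtRatio (x + n) (1 + k) - ∑ k ∈ range n, sqrtRatio (x + n) (x + k) := by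
  have hconv : sqrtConvolution (x + n) = ∑ k ∈ range n, 1 / (√(1 + k) * √(x + n - (1 + k))) := by
    rw [sqrtConvolution_eq_sum_range (L := n + 1) (by push_cast; linarith), sum_range_succ']
    simp [add_comm (1 : ℝ)]
  have hleft : zetaHalf - hurwitzHalf (1 + n) = ∑ k ∈ range n, 1 / √(1 + k) := by
    rw [zetaHalf, hurwitzHalf_eq_sum_add one_pos n, add_sub_cancel_right]
  have hright : periodicHurwitz (x + n) - hurwitzHalf (x + n) =
      ∑ k ∈ range n, 1 / √(x + n - (1 + k)) := by
    rw [periodicHurwitz_add_natCast h0 h1, add_sub_cancel_right,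
      sum_range_sub_one_add_eq_sum_add fun t => 1 / √t]
  rw [hconv, hleft, hright, ← sum_range_sub_one_add_eq_sum_add (sqrtRatio (x + n)) x, mul_sum,
    mul_sum, mul_sum, ← sum_add_distrib, ← sum_sub_distrib, ← sum_sub_distrib]
  refine sum_congr rfl fun k hk => ?_
  have : (k : ℝ) + 1 ≤ n := by exact_mod_cast mem_range.1 hk
  rw [mul_one_div_sqrt_mul_sqrt_sub (by positivity) (by linarith)]
  ring

lemma abs_sqrt_mul_sqrt_sub_le {y u : ℝ} (hy : 1 ≤ y) (hu0 : 0 ≤ u) (hu1 : u ≤ 1) :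
    |√y * √(y + u) - (y + u / 2)| ≤ 1 / y := by
  have hY2 : √y ^ 2 = y := Real.sq_sqrt (by linarith)
  have hW2 : √(y + u) ^ 2 = y + u := Real.sq_sqrt (by linarith)
  have hmul : 0 ≤ √y * √(y + u) := by positivity
  have hle : √y * √(y + u) ≤ y + u / 2 := by nlinarith [sq_nonneg (√y - √(y + u))]
  have hconj : (y + u / 2 - √y * √(y + u)) * (y + u / 2 + √y * √(y + u)) = u ^ 2 / 4 := by
    linear_combination (-√(y + u) ^ 2) * hY2 - y * hW2
  have hfactor : y ≤ y + u / 2 + √y * √(y + u) := by linarith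
  rw [abs_sub_comm, abs_of_nonneg (sub_nonneg.2 hle), le_div_iff₀ (by linarith)]
  nlinarith [mul_le_mul_of_nonneg_left hfactor (sub_nonneg.2 hle)]

lemma abs_sqrt_div_two_sqrt_sub_le {y u : ℝ} (hy : 1 ≤ y) (hu0 : 0 ≤ u) (hu1 : u ≤ 1) :
    |√y * (1 / (2 * √(y + u))) - 1 / 2| ≤ 1 / y := by
  have hY2 : √y ^ 2 = y := Real.sq_sqrt (by linarith)
  have hW2 : √(y + u) ^ 2 = y + u := Real.sq_sqrt (by linarith)
  have hYW : √y ≤ √(y + u) := Real.sqrt_le_sqrt (by linarith)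
  have hW : 0 < √(y + u) := Real.sqrt_pos.2 (by linarith)
  have heq : √y * (1 / (2 * √(y + u))) - 1 / 2 = -((√(y + u) - √y) / (2 * √(y + u))) := by
    field_simp; ring
  have : (√(y + u) - √y) * (√(y + u) + √y) = u := by linear_combination hW2 - hY2
  have hdiff : 0 ≤ √(y + u) - √y := sub_nonneg.2 hYW
  rw [heq, abs_neg, abs_of_nonneg (by positivity), div_le_div_iff₀ (by positivity) (by linarith)]
  nlinarith [mul_le_mul_of_nonneg_left hYW hdiff, mul_nonneg hdiff (Real.sqrt_nonneg y)]

lemma abs_sqrt_mul_hurwitzHalf_add_le {y u : ℝ} (hy : 1 ≤ y) (hu0 : 0 ≤ u) (hu1 : u ≤ 1) :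
    |√y * hurwitzHalf (y + u) + 2 * y + u - 1 / 2| ≤ 4 / √y := by
  have : 1 ≤ √y := Real.one_le_sqrt.2 hy
  have : 0 < √(y + u) := Real.sqrt_pos.2 (by linarith)
  have hinv : 1 / y ≤ 1 / √y := by
    gcongr
    exact Real.sqrt_le_left (by linarith) |>.2 (by nlinarith)
  have hmain := abs_sqrt_mul_sqrt_sub_le hy hu0 hu1
  have hhalf := abs_sqrt_div_two_sqrt_sub_le hy hu0 hu1
  have htail : |√y * (hurwitzHalf (y + u) + 2 * √(y + u) - 1 / (2 * √(y + u)))| ≤ 1 / y := by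
    rw [abs_mul, abs_of_nonneg (Real.sqrt_nonneg y)]
    calc √y * |hurwitzHalf (y + u) + 2 * √(y + u) - 1 / (2 * √(y + u))|
        ≤ √(y + u) * (1 / ((y + u) * √(y + u))) := by
          gcongr
          · linarith
          · exact abs_hurwitzHalf_asymptotic_le (by linarith)
      _ = 1 / (y + u) := by field_simp
      _ ≤ 1 / y := by gcongr; linarith
  have hfour : 4 / √y = 4 * (1 / √y) := by ring
  rw [hfour]
  rw [abs_le] at hmain hhalf htail ⊢
  constructor <;> linarith

lemma abs_mul_convolutionError_add_natCast_le {x : ℝ} (h0 : 0 < x) (h1 : x ≤ 1) (m : ℕ) :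
    |(x + (m + 2 : ℕ)) * convolutionError (x + (m + 2 : ℕ))| ≤ 60 / √(x + (m + 2 : ℕ)) := by
  have hconv := mul_sqrtConvolution_add_natCast h0 h1 (m + 2)
  have : (0 : ℝ) ≤ m := by positivity
  obtain ⟨y, hy⟩ : ∃ y, y = x + (m + 2 : ℕ) := ⟨_, rfl⟩
  have hy' : y = x + m + 2 := by rw [hy]; push_cast; ring
  rw [← hy] at hconv ⊢
  have hY : 0 < √y := Real.sqrt_pos.2 (by linarith)
  have hsplit_last : ∑ k ∈ range (m + 2), sqrtRatio y (1 + k) =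
      ∑ j ∈ range (m + 1), sqrtRatio y (1 + j) + sqrtRatio y (m + 2) := by
    rw [sum_range_succ, Nat.cast_succ, show (1 : ℝ) + (m + 1) = m + 2 by ring]
  have hsplit_first : ∑ k ∈ range (m + 2), sqrtRatio y (x + k) =
      ∑ j ∈ range (m + 1), sqrtRatio y (x + 1 + j) + sqrtRatio y x := by
    simp [sum_range_succ' _ (m + 1), add_assoc, add_comm (1 : ℝ)]
  have hsum₁ := abs_sum_sqrtRatio_sub_le (y := y) (b := 1) (N := m) le_rfl (by norm_num)
    (by linarith) (by linarith)
  have hsum₂ := abs_sum_sqrtRatio_sub_le (y := y) (b := x + 1) (N := m) (by linarith)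
    (by linarith) (by linarith) (by linarith)
  have hlast := one_sub_sqrtRatio_le (y := y) (t := m + 2) (by linarith) (by linarith)
    (by linarith)
  have hlast1 := sqrtRatio_le_one (y := y) (t := m + 2) (by linarith) (by linarith)
  have hfirst := sqrtRatio_le_two_div (y := y) (t := x) (by linarith) (by linarith)
  have hfirst0 := sqrtRatio_nonneg y x
  have hzeta₁ := abs_sqrt_mul_hurwitzHalf_add_le (y := y) (u := 0) (by linarith) le_rfl zero_le_one
  have hzeta₂ := abs_sqrt_mul_hurwitzHalf_add_le (y := y) (u := 1 - x) (by linarith)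
    (by linarith) (by linarith)
  simp only [add_zero] at hzeta₁
  rw [show y + (1 - x) = 1 + (m + 2 : ℕ) by rw [hy]; ring] at hzeta₂
  rw [hsplit_last, hsplit_first] at hconv
  have hdiv : y * (√y)⁻¹ = √y := by rw [← div_eq_mul_inv, Real.div_sqrt]
  have hexpand : y * convolutionError y = π * y + √y * hurwitzHalf (1 + (m + 2 : ℕ))
      + √y * hurwitzHalf y
      + (∑ j ∈ range (m + 1), sqrtRatio y (1 + j) + sqrtRatio y (m + 2))
      + (∑ j ∈ range (m + 1), sqrtRatio y (x + 1 + j) + sqrtRatio y x) := by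
    rw [convolutionError]
    linear_combination (periodicHurwitz y + zetaHalf) * hdiv - hconv
  have hinv : 0 < (√y)⁻¹ := inv_pos.2 hY
  rw [hexpand]
  simp only [div_eq_mul_inv _ √y] at hsum₁ hsum₂ hlast hfirst hzeta₁ hzeta₂ ⊢
  rw [abs_le] at hsum₁ hsum₂ hzeta₁ hzeta₂ ⊢
  constructor <;> linarith

lemma convolutionError_one : convolutionError 1 = 2 * zetaHalf + π := by
  have hperiodic : periodicHurwitz 1 = zetaHalf := by exact_mod_cast periodicHurwitz_intCast 1
  have hconv : sqrtConvolution 1 = 0 := by simp [sqrtConvolution]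
  rw [convolutionError, hperiodic, hconv, Real.sqrt_one]
  ring

lemma convolutionError_add_one {x : ℝ} (h0 : 0 < x) (h1 : x ≤ 1) :
    convolutionError (x + 1) =
      (1 / √x / √(x + 1) - 1 / √x) + hurwitzHalf (x + 1) / √(x + 1) + π + zetaHalf / √(x + 1) := by
  have hperiodic : periodicHurwitz (x + 1) = 1 / √x + hurwitzHalf (x + 1) := by
    simpa using periodicHurwitz_add_natCast h0 h1 1
  have hconv : sqrtConvolution (x + 1) = 1 / √x := by
    rw [sqrtConvolution_eq_sum_range (L := 2) (by push_cast; linarith)]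
    simp [sum_range_succ]
  rw [convolutionError, hperiodic, hconv]
  ring

lemma abs_div_sqrt_sub_div_le {x : ℝ} (h0 : 0 < x) (h1 : x ≤ 1) :
    |1 / √x / √(x + 1) - 1 / √x| ≤ 1 := by
  have hX : 0 < √x := Real.sqrt_pos.2 h0
  have hY : 1 ≤ √(x + 1) := Real.one_le_sqrt.2 (by linarith)
  have : √x ≤ 1 := Real.sqrt_le_one.2 h1
  have heq : 1 / √x / √(x + 1) - 1 / √x = -((√(x + 1) - 1) / (√x * √(x + 1))) := by
    field_simp; ring
  rw [heq, abs_neg, abs_of_nonneg (div_nonneg (by linarith) (by positivity)),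
    div_le_one (by positivity)]
  nlinarith [Real.sq_sqrt h0.le, Real.sq_sqrt (show 0 ≤ x + 1 by linarith)]

lemma abs_hurwitzHalf_le_six {y : ℝ} (h1 : 1 ≤ y) (h2 : y ≤ 2) : |hurwitzHalf y| ≤ 6 := by
  have hY : 1 ≤ √y := Real.one_le_sqrt.2 h1
  have hY2 : √y ≤ 2 := by
    rw [Real.sqrt_le_left (by norm_num)]; linarith
  have hasymp := abs_hurwitzHalf_asymptotic_le (y := y) (by linarith)
  have herr : 1 / (y * √y) ≤ 1 := by
    rw [div_le_one (by positivity)]; nlinarith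
  have hhalf : 1 / (2 * √y) ≤ 1 := by
    rw [div_le_one (by linarith)]; linarith
  have hhalf0 : 0 ≤ 1 / (2 * √y) := by positivity
  rw [abs_le] at hasymp ⊢
  constructor <;> linarith

lemma abs_convolutionError_le_of_le_two {y : ℝ} (h1 : 1 ≤ y) (h2 : y ≤ 2) :
    |convolutionError y| ≤ 2 * |zetaHalf| + 12 := by
  have hY : 1 ≤ √y := Real.one_le_sqrt.2 h1
  have hpi := Real.pi_le_four
  have hpi0 := Real.pi_pos
  have hz := abs_nonneg zetaHalf
  rcases h1.eq_or_lt with rfl | h1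
  · rw [convolutionError_one]
    refine (abs_add_le _ _).trans ?_
    rw [abs_mul, abs_two, abs_of_pos hpi0]
    linarith
  obtain ⟨x, rfl⟩ : ∃ x, y = x + 1 := ⟨y - 1, by ring⟩
  have hdiv (c : ℝ) : |c / √(x + 1)| ≤ |c| := by
    rw [abs_div, abs_of_nonneg (Real.sqrt_nonneg _)]
    exact div_le_self (abs_nonneg _) hY
  have hsing := abs_div_sqrt_sub_div_le (x := x) (by linarith) (by linarith)
  have hzeta := (hdiv _).trans (abs_hurwitzHalf_le_six h1.le h2)
  rw [convolutionError_add_one (by linarith) (by linarith)]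
  calc |(1 / √x / √(x + 1) - 1 / √x) + hurwitzHalf (x + 1) / √(x + 1) + π + zetaHalf / √(x + 1)|
      ≤ |1 / √x / √(x + 1) - 1 / √x| + |hurwitzHalf (x + 1) / √(x + 1)| + |π|
        + |zetaHalf / √(x + 1)| :=
      (abs_add_le _ _).trans (by gcongr; exact abs_add_three _ _ _)
    _ ≤ 2 * |zetaHalf| + 12 := by
      rw [abs_of_pos hpi0]
      linarith [hdiv zetaHalf]

lemma exists_abs_convolutionError_le :
    ∃ C : ℝ, 0 < C ∧ ∀ y : ℝ, 1 ≤ y → |convolutionError y| ≤ C / (y * √y) := by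
  refine ⟨60 + 4 * (2 * |zetaHalf| + 12), by positivity, fun y hy => ?_⟩
  have hY : 0 < √y := Real.sqrt_pos.2 (by linarith)
  have hz := abs_nonneg zetaHalf
  rw [le_div_iff₀ (by positivity)]
  rcases le_or_gt y 2 with hy2 | hy2
  · have hden : y * √y ≤ 4 := by nlinarith [Real.sq_sqrt (show 0 ≤ y by linarith)]
    calc |convolutionError y| * (y * √y) ≤ (2 * |zetaHalf| + 12) * 4 := by
          gcongr
          exact abs_convolutionError_le_of_le_two hy hy2
      _ ≤ 60 + 4 * (2 * |zetaHalf| + 12) := by linarith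
  obtain ⟨n, x, h0, h1, rfl, -⟩ := exists_eq_add_natCast_of_pos (show 0 < y by linarith)
  obtain ⟨m, rfl⟩ : ∃ m, n = m + 2 := by
    have : (1 : ℝ) < n := by linarith
    exact Nat.exists_eq_add_of_le' (by exact_mod_cast this)
  have hlarge := abs_mul_convolutionError_add_natCast_le h0 h1 m
  rw [abs_mul, abs_of_pos (by linarith), le_div_iff₀ hY] at hlarge
  linarith

/-! ### Correlation sums of Hurwitz zeta values -/

/-- The periodic Hurwitz zeta function `ζ(1/2, z / q)` as a function on `ZMod q`. -/
noncomputable def zmodHurwitz (q : ℕ) (z : ZMod q) : ℝ := periodicHurwitz (z.val / q)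

lemma periodicHurwitz_intCast_div (q : ℕ) [NeZero q] (n : ℤ) :
    periodicHurwitz (n / q) = zmodHurwitz q n := by
  have hq : (q : ℝ) ≠ 0 := Nat.cast_ne_zero.2 (NeZero.ne q)
  have hval : ((n : ZMod q).val : ℝ) = (n % q : ℤ) := by exact_mod_cast ZMod.val_intCast n
  have hdiv : (n : ℝ) / q = (n % q : ℤ) / q + (n / q : ℤ) := by
    have : (n : ℝ) = (n % q : ℤ) + q * (n / q : ℤ) := by
      exact_mod_cast (Int.emod_add_mul_ediv n q).symm
    rw [div_add' _ _ _ hq, mul_comm _ (q : ℝ), ← this]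
  rw [hdiv, periodicHurwitz_add_intCast, zmodHurwitz, hval]

lemma sum_range_natCast_succ_zmod (q : ℕ) [NeZero q] (F : ZMod q → ℝ) :
    ∑ h ∈ range q, F ((h + 1 : ℕ) : ZMod q) = ∑ z, F z := by
  rw [← Equiv.sum_comp (Equiv.addRight (1 : ZMod q)) F]
  refine sum_bij' (fun h _ => (h : ZMod q)) (fun z _ => z.val) ?_ ?_ ?_ ?_ ?_
  · exact fun _ _ => mem_univ _
  · exact fun z _ => mem_range.2 (ZMod.val_lt z)
  · exact fun h hh => ZMod.val_cast_of_lt (mem_range.1 hh)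
  · exact fun z _ => ZMod.natCast_zmod_val z
  · simp

/-- The correlation `q^(-1/2) ∑_h ζ(1/2, h / q) ζ(1/2, a h / q)` over `h` modulo `q`. -/
noncomputable def hurwitzCorrelation (a : ℤ) (q : ℕ) : ℝ :=
  (∑ h ∈ range q, periodicHurwitz ((h + 1) / q) * periodicHurwitz (a * (h + 1) / q)) / √q

lemma hurwitzCorrelation_eq_sum_zmod (a : ℤ) (q : ℕ) [NeZero q] :
    hurwitzCorrelation a q = (∑ z : ZMod q, zmodHurwitz q z * zmodHurwitz q (a * z)) / √q := by
  rw [hurwitzCorrelation, ← sum_range_natCast_succ_zmod]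
  congr 1
  refine sum_congr rfl fun h _ => ?_
  have hleft := periodicHurwitz_intCast_div q (h + 1)
  have hright := periodicHurwitz_intCast_div q (a * (h + 1))
  push_cast at hleft hright ⊢
  rw [hleft, hright]

lemma tendsto_hurwitzHalf_add_two_sqrt {x : ℝ} (hx : 0 < x) :
    Tendsto (fun N : ℕ => hurwitzHalf (x + N) + 2 * √N) atTop (𝓝 0) := by
  refine squeeze_zero_norm' ?_ (by simpa using tendsto_inv_sqrt_natCast.const_mul (4 + 2 * x))
  filter_upwards [eventually_ge_atTop 1] with N hN
  have hN1 : (1 : ℝ) ≤ N := by exact_mod_cast hN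
  have hS : 1 ≤ √(N : ℝ) := Real.one_le_sqrt.2 hN1
  have hle : √(N : ℝ) ≤ √(x + N) := Real.sqrt_le_sqrt (by linarith)
  have hdiff : √(x + N) - √N ≤ x * (√N)⁻¹ := by
    rw [← div_eq_mul_inv, le_div_iff₀ (by linarith)]
    nlinarith [Real.sq_sqrt (show 0 ≤ (N : ℝ) by linarith),
      Real.sq_sqrt (show 0 ≤ x + N by linarith)]
  have herr : 1 / ((x + N) * √(x + N)) ≤ (√N)⁻¹ := by
    rw [← one_div]
    exact one_div_le_one_div_of_le (by linarith) (by nlinarith)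
  have hhalf : 1 / (2 * √(x + N)) ≤ (√N)⁻¹ := by
    rw [← one_div]
    exact one_div_le_one_div_of_le (by linarith) (by linarith)
  have hhalf0 : 0 ≤ 1 / (2 * √(x + N)) := by positivity
  have hasymp := abs_hurwitzHalf_asymptotic_le (y := x + N) (by positivity)
  rw [Real.norm_eq_abs]
  rw [abs_le] at hasymp ⊢
  constructor <;> linarith

lemma sum_range_mul_eq_sum_sum (q N : ℕ) (F : ℕ → ℝ) :
    ∑ m ∈ range (q * N), F m = ∑ h ∈ range q, ∑ n ∈ range N, F (q * n + h) := by
  induction N with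
  | zero => simp
  | succ N ih =>
    rw [mul_add_one, sum_range_add, ih, ← sum_add_distrib]
    exact sum_congr rfl fun h _ => (sum_range_succ _ _).symm

lemma one_div_sqrt_block {q : ℕ} (hq : 0 < q) (h n : ℕ) :
    1 / √((q * n + h : ℕ) + 1) = 1 / √q * (1 / √((h + 1) / q + n)) := by
  have hq' : (0 : ℝ) < q := Nat.cast_pos.2 hq
  rw [one_div_mul_one_div, ← Real.sqrt_mul hq'.le]
  congr 2
  push_cast
  field_simp
  ring

lemma sum_div_sqrt_eq_of_periodic {q : ℕ} (hq : 0 < q) (N : ℕ) {c : ℕ → ℝ}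
    (hc : ∀ n h, c (q * n + h) = c h) :
    ∑ m ∈ range (q * N), c m / √(m + 1) =
      (∑ h ∈ range q, c h * hurwitzHalf ((h + 1) / q)) / √q
        - (∑ h ∈ range q, c h * hurwitzHalf ((h + 1) / q + N)) / √q := by
  rw [sum_range_mul_eq_sum_sum, ← sub_div, ← sum_sub_distrib, sum_div]
  refine sum_congr rfl fun h _ => ?_
  have hpos : (0 : ℝ) < (h + 1) / q := by positivity
  have hterm : ∀ n ∈ range N,
      c (q * n + h) / √((q * n + h : ℕ) + 1) = c h / √q * (1 / √((h + 1) / q + n)) := by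
    intro n _
    rw [hc, div_eq_mul_one_div, one_div_sqrt_block hq]
    ring
  rw [sum_congr rfl hterm, ← mul_sum, ← mul_sub, hurwitzHalf_eq_sum_add hpos N]
  ring

lemma tendsto_sum_div_sqrt_of_periodic {q : ℕ} (hq : 0 < q) {c : ℕ → ℝ}
    (hc : ∀ n h, c (q * n + h) = c h) :
    Tendsto (fun N : ℕ => ∑ m ∈ range (q * N), c m / √(m + 1)
      - 2 * √N * ((∑ h ∈ range q, c h) / √q)) atTop
      (𝓝 ((∑ h ∈ range q, c h * hurwitzHalf ((h + 1) / q)) / √q)) := by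
  have htail : Tendsto (fun N : ℕ =>
      (∑ h ∈ range q, c h * (hurwitzHalf ((h + 1) / q + N) + 2 * √N)) / √q) atTop
      (𝓝 ((∑ h ∈ range q, c h * 0) / √q)) :=
    (tendsto_finsetSum _ fun h _ =>
      (tendsto_hurwitzHalf_add_two_sqrt (by positivity)).const_mul (c h)).div_const _
  have hlim := htail.const_sub ((∑ h ∈ range q, c h * hurwitzHalf ((h + 1) / q)) / √q)
  simp only [mul_zero, sum_const_zero, zero_div, sub_zero] at hlim
  refine hlim.congr fun N => ?_
  rw [sum_div_sqrt_eq_of_periodic hq N hc]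
  simp only [mul_add, sum_add_distrib, ← sum_mul]
  ring

lemma tendsto_mul_atTop_nat {q : ℕ} (hq : 0 < q) : Tendsto (fun N : ℕ => q * N) atTop atTop :=
  tendsto_id.const_mul_atTop' hq

lemma sum_range_one_div_sqrt (N : ℕ) :
    ∑ m ∈ range N, 1 / √((m : ℝ) + 1) = zetaHalf - hurwitzHalf (1 + N) := by
  rw [zetaHalf, hurwitzHalf_eq_sum_add one_pos N, add_sub_cancel_right]
  simp only [add_comm (1 : ℝ)]

lemma sum_hurwitzHalf_div {q : ℕ} (hq : 0 < q) :
    ∑ h ∈ range q, hurwitzHalf ((h + 1) / q) = √q * zetaHalf := by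
  have hsqrt : 0 < √(q : ℝ) := Real.sqrt_pos.2 (Nat.cast_pos.2 hq)
  have hblock := tendsto_sum_div_sqrt_of_periodic hq (c := fun _ => 1) fun _ _ => rfl
  have hdirect : Tendsto (fun N : ℕ => zetaHalf - (hurwitzHalf (1 + (q * N : ℕ))
      + 2 * √(q * N : ℕ))) atTop (𝓝 zetaHalf) := by
    simpa using ((tendsto_hurwitzHalf_add_two_sqrt one_pos).comp
      (tendsto_mul_atTop_nat hq)).const_sub zetaHalf
  have hlim := tendsto_nhds_unique hblock (hdirect.congr fun N => by
    rw [sum_range_one_div_sqrt, sum_const, card_range, nsmul_one, Real.div_sqrt, Nat.cast_mul,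
      Real.sqrt_mul (Nat.cast_nonneg q)]
    ring)
  simp only [one_mul] at hlim
  rw [(div_eq_iff hsqrt.ne').1 hlim, mul_comm]

lemma periodicHurwitz_succ_div {q h : ℕ} (hh : h ∈ range q) :
    periodicHurwitz ((h + 1) / q) = hurwitzHalf ((h + 1) / q) := by
  have hle : (h : ℝ) + 1 ≤ q := by exact_mod_cast mem_range.1 hh
  have hq : (0 : ℝ) < q := by linarith [(Nat.cast_nonneg h : (0 : ℝ) ≤ h)]
  exact periodicHurwitz_eq_hurwitzHalf (by positivity) ((div_le_one hq).2 hle)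

lemma sum_zmodHurwitz (q : ℕ) [NeZero q] : ∑ z, zmodHurwitz q z = √q * zetaHalf := by
  rw [← sum_hurwitzHalf_div (NeZero.pos q), ← sum_range_natCast_succ_zmod]
  refine sum_congr rfl fun h hh => ?_
  have hcast := periodicHurwitz_intCast_div q (h + 1)
  push_cast at hcast ⊢
  rw [← periodicHurwitz_succ_div hh, hcast]

lemma sum_periodicHurwitz_mul_div {a : ℤ} {q : ℕ} (hq : 0 < q) (hc : IsCoprime a (q : ℤ)) :
    ∑ h ∈ range q, periodicHurwitz (a * (h + 1) / q) = √q * zetaHalf := by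
  have : NeZero q := ⟨hq.ne'⟩
  obtain ⟨u, hu⟩ := (ZMod.coe_int_isUnit_iff_isCoprime a q).2 hc.symm
  rw [← sum_zmodHurwitz, ← Equiv.sum_comp (Units.mulLeft u) (zmodHurwitz q),
    ← sum_range_natCast_succ_zmod]
  refine sum_congr rfl fun h _ => ?_
  have hcast := periodicHurwitz_intCast_div q (a * (h + 1))
  push_cast at hcast
  rw [hcast, Units.mulLeft_apply, hu]
  push_cast
  rfl

lemma tendsto_hurwitzCorrelation {a : ℤ} {q : ℕ} (hq : 0 < q) (hc : IsCoprime a (q : ℤ)) :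
    Tendsto (fun N : ℕ => ∑ m ∈ range (q * N), periodicHurwitz (a * (m + 1) / q) / √(m + 1)
      - 2 * √N * zetaHalf) atTop (𝓝 (hurwitzCorrelation a q)) := by
  have hq' : (0 : ℝ) < q := Nat.cast_pos.2 hq
  have hperiodic (n h : ℕ) : periodicHurwitz (a * ((q * n + h : ℕ) + 1) / q) =
      periodicHurwitz (a * (h + 1) / q) := by
    rw [← periodicHurwitz_add_intCast (a * (h + 1) / q) (a * n)]
    congr 1
    push_cast
    field_simp
    ring
  have hlim := tendsto_sum_div_sqrt_of_periodic hq
    (c := fun m => periodicHurwitz (a * (m + 1) / q)) hperiodic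
  rw [sum_periodicHurwitz_mul_div hq hc, mul_div_cancel_left₀ _ (Real.sqrt_pos.2 hq').ne'] at hlim
  convert hlim using 2
  rw [hurwitzCorrelation]
  congr 1
  exact sum_congr rfl fun h hh => by rw [periodicHurwitz_succ_div hh, mul_comm]

/-! ### Reciprocity -/

lemma mul_sqrt_eq_rpow {x : ℝ} (hx : 0 ≤ x) : x * √x = x ^ (3 / 2 : ℝ) := by
  rw [Real.sqrt_eq_rpow, ← Real.rpow_one_add' hx (by norm_num)]
  norm_num

lemma summable_one_div_mul_sqrt : Summable fun m : ℕ => 1 / (((m : ℝ) + 1) * √(m + 1)) := by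
  have hrpow := (summable_nat_add_iff 1).2
    ((Real.summable_one_div_nat_rpow (p := 3 / 2)).2 (by norm_num))
  refine hrpow.congr fun m => ?_
  rw [mul_sqrt_eq_rpow (by positivity), Nat.cast_add_one]

/-- The sum `∑_{m ≥ 1} convolutionError (θ m)`, which measures the failure of the correlation
sums `hurwitzCorrelation` to be invariant under `θ ↦ -1 / θ`. -/
noncomputable def reciprocityError (θ : ℝ) : ℝ := ∑' m : ℕ, convolutionError (θ * (m + 1))

lemma summable_convolutionError {θ : ℝ} (hθ : 0 < θ) :
    Summable fun m : ℕ => convolutionError (θ * (m + 1)) := by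
  obtain ⟨C, -, hbound⟩ := exists_abs_convolutionError_le
  refine .of_norm_bounded_eventually_nat
    (summable_one_div_mul_sqrt.mul_left (C / (θ * √θ))) ?_
  filter_upwards [eventually_ge_atTop ⌈1 / θ⌉₊] with m hm
  have hm : 1 / θ ≤ m := Nat.ceil_le.1 hm
  rw [div_le_iff₀ hθ] at hm
  rw [Real.norm_eq_abs, div_mul_div_comm, mul_one, mul_mul_mul_comm, ← Real.sqrt_mul hθ.le]
  exact hbound _ (by linarith)

lemma sum_one_div_sqrt_sub {M : ℕ} {u : ℝ} (h0 : 0 ≤ u) (hu : u < M) :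
    ∑ m ∈ range M, 1 / √(m + 1 - u) = periodicHurwitz (-u) - hurwitzHalf (M - u + 1) := by
  obtain ⟨n, x, hx0, hx1, hx, -⟩ := exists_eq_add_natCast_of_pos (sub_pos.2 hu)
  have hnM : n + 1 ≤ M := by
    have : (n : ℝ) < M := by linarith
    exact_mod_cast this
  have hperiod : periodicHurwitz (-u) = periodicHurwitz (x + (n + 1 : ℕ)) := by
    rw [← periodicHurwitz_add_intCast (-u) (M + 1)]
    congr 1
    push_cast
    linarith
  have hreflect : ∑ m ∈ range M, 1 / √((m : ℝ) + 1 - u) = ∑ k ∈ range M, 1 / √(M - u - k) := by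
    have := sum_range_sub_one_add_eq_sum_add (fun t => 1 / √t) (1 - u) M
    convert this.symm using 4 <;> ring
  have hzero : ∀ k ∈ range M, k ∉ range (n + 1) → 1 / √((M : ℝ) - u - k) = 0 := by
    intro k _ hk
    have : (n : ℝ) + 1 ≤ k := by exact_mod_cast not_lt.1 (mem_range.not.1 hk)
    rw [Real.sqrt_eq_zero_of_nonpos (by linarith), div_zero]
  have hlast : M - u + 1 = x + (n + 1 : ℕ) := by rw [hx]; push_cast; ring
  rw [hperiod, hlast, periodicHurwitz_add_natCast hx0 hx1, add_sub_cancel_right, hreflect,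
    ← sum_subset (range_subset_range.2 hnM) hzero, hx,
    ← sum_range_sub_one_add_eq_sum_add (fun t => 1 / √t) x]
  refine sum_congr rfl fun k _ => ?_
  congr 2
  push_cast
  ring

lemma two_mul_sum_sqrt_sub_div_sqrt (K : ℕ) :
    2 * ∑ k ∈ range K, √(K - k) / √k = K * sqrtConvolution K := by
  have hreflect : ∑ k ∈ range K, √(K - k : ℝ) / √k = ∑ k ∈ range K, √k / √(K - k : ℝ) := by
    have hleft := sum_range_succ (fun k : ℕ => √(K - k : ℝ) / √k) K
    have hright := sum_range_succ (fun k : ℕ => √k / √(K - k : ℝ)) K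
    simp only [sub_self, Real.sqrt_zero, zero_div, div_zero, add_zero] at hleft hright
    rw [← hleft, ← hright, ← sum_range_reflect]
    refine sum_congr rfl fun k hk => ?_
    rw [Nat.add_sub_cancel, Nat.cast_sub (mem_range_succ_iff.1 hk), sub_sub_cancel]
  rw [two_mul]
  nth_rw 2 [hreflect]
  rw [sqrtConvolution_eq_sum_range le_rfl, mul_sum, ← sum_add_distrib]
  refine sum_congr rfl fun k hk => ?_
  rcases Nat.eq_zero_or_pos k with rfl | hk0
  · simp
  have hkK : (k : ℝ) < K := by exact_mod_cast mem_range.1 hk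
  have : 0 < √(k : ℝ) := Real.sqrt_pos.2 (by exact_mod_cast hk0)
  have : 0 < √(K - k : ℝ) := Real.sqrt_pos.2 (by linarith)
  have hsqk := Real.sq_sqrt (Nat.cast_nonneg k : (0 : ℝ) ≤ k)
  have hsqd := Real.sq_sqrt (show (0 : ℝ) ≤ K - k by linarith)
  field_simp
  linear_combination hsqk + hsqd

lemma harmonic_eq_sum_one_div (N : ℕ) : (harmonic N : ℝ) = ∑ k ∈ range N, 1 / ((k : ℝ) + 1) := by
  simp [harmonic]

lemma sum_one_div_succ_le_one_add_log (N : ℕ) :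
    ∑ k ∈ range N, 1 / ((k : ℝ) + 1) ≤ 1 + Real.log N :=
  harmonic_eq_sum_one_div N ▸ harmonic_le_one_add_log N

lemma one_div_sqrt_mul_one_div_mul_sqrt_le {k d : ℝ} (hk : 0 ≤ k) (hd : 1 ≤ d) :
    1 / √k * (1 / (d * √d)) ≤ 1 / √(k + d) * (1 / k + 1 / d) := by
  have : 0 < d := by linarith
  rcases hk.eq_or_lt with rfl | hk
  · simp only [Real.sqrt_zero, div_zero, zero_mul]
    positivity
  have : 0 < √(k + d) := Real.sqrt_pos.2 (by linarith)
  calc 1 / √k * (1 / (d * √d)) ≤ 1 / √k * (1 / (d * 1)) := by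
        gcongr
        exact Real.one_le_sqrt.2 hd
    _ = √k / (k * d) := by
        rw [mul_one, ← Real.sqrt_div_self', div_mul_div_comm, mul_one]
    _ ≤ √(k + d) / (k * d) := by gcongr; linarith
    _ = 1 / √(k + d) * (1 / k + 1 / d) := by
        rw [← Real.sqrt_div_self']
        field_simp
        ring

lemma sum_one_div_sqrt_mul_le (K : ℕ) :
    ∑ k ∈ range K, 1 / √(k : ℝ) * (1 / ((K - k) * √(K - k))) ≤ 2 * (1 + Real.log K) / √K := by
  have hterm : ∀ k ∈ range K, 1 / √(k : ℝ) * (1 / ((K - k) * √(K - k))) ≤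
      1 / √K * (1 / (k : ℝ) + 1 / (K - k)) := by
    intro k hk
    have hkK : (k : ℝ) + 1 ≤ K := by exact_mod_cast mem_range.1 hk
    simpa using one_div_sqrt_mul_one_div_mul_sqrt_le (k := k) (d := K - k) (by positivity)
      (by linarith)
  have hshift : ∑ k ∈ range K, 1 / (k : ℝ) ≤ ∑ k ∈ range K, 1 / ((k : ℝ) + 1) := by
    have := (sum_range_succ (fun k : ℕ => 1 / (k : ℝ)) K).symm.trans (sum_range_succ' _ K)
    simp only [Nat.cast_zero, div_zero, add_zero, Nat.cast_add_one] at this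
    rw [← this]
    exact le_add_of_nonneg_right (by positivity)
  have hreflect : ∑ k ∈ range K, 1 / ((K : ℝ) - k) = ∑ k ∈ range K, 1 / ((k : ℝ) + 1) := by
    have := sum_range_sub_one_add_eq_sum_add (fun t => 1 / t) 1 K
    convert this using 3 <;> ring
  have hharm := sum_one_div_succ_le_one_add_log K
  calc _ ≤ 1 / √K * (∑ k ∈ range K, 1 / (k : ℝ) + ∑ k ∈ range K, 1 / ((K : ℝ) - k)) := by
        rw [← sum_add_distrib, mul_sum]
        exact sum_le_sum hterm
    _ ≤ 1 / √K * (2 * (1 + Real.log K)) := by gcongr; linarith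
    _ = 2 * (1 + Real.log K) / √K := by ring

lemma tendsto_one_add_log_div_sqrt :
    Tendsto (fun x : ℝ => 2 * (1 + Real.log x) / √x) atTop (𝓝 0) := by
  have hlog := (isLittleO_log_rpow_atTop (r := 1 / 2) (by norm_num)).tendsto_div_nhds_zero
  have hlim := (Real.tendsto_sqrt_atTop.inv_tendsto_atTop.add hlog).const_mul 2
  simp only [add_zero, mul_zero] at hlim
  refine hlim.congr fun x => ?_
  rw [← Real.sqrt_eq_rpow, Pi.inv_apply]
  ring

lemma sqrt_mul_sum_sqrtConvolution {θ : ℝ} (hθ : 0 < θ) {M K : ℕ} (hMK : θ * M = K) :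
    √θ * ∑ m ∈ range M, sqrtConvolution (θ * (m + 1)) =
      ∑ k ∈ range K,
        1 / √(k : ℝ) * (periodicHurwitz (-(k / θ)) - hurwitzHalf ((K - k) / θ + 1)) := by
  have hterm : ∀ m ∈ range M, sqrtConvolution (θ * (m + 1)) =
      ∑ k ∈ range K, 1 / √(k : ℝ) * (1 / √θ * (1 / √(m + 1 - k / θ))) := by
    intro m hm
    have hmM : (m : ℝ) + 1 ≤ M := by exact_mod_cast mem_range.1 hm
    rw [sqrtConvolution_eq_sum_range (L := K) (by rw [← hMK]; gcongr)]
    refine sum_congr rfl fun k _ => ?_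
    rw [show θ * (m + 1) - k = θ * (m + 1 - k / θ) by field_simp, Real.sqrt_mul hθ.le,
      one_div_mul_one_div, one_div_mul_one_div]
  rw [sum_congr rfl hterm, sum_comm, mul_sum]
  refine sum_congr rfl fun k hk => ?_
  have hkK : (k : ℝ) < K := by exact_mod_cast mem_range.1 hk
  have hsqrt : √θ ≠ 0 := (Real.sqrt_pos.2 hθ).ne'
  have hsub : ((K : ℝ) - k) / θ = M - k / θ := by rw [← hMK]; field_simp
  rw [← mul_sum, ← mul_sum, hsub,
    sum_one_div_sqrt_sub (by positivity) (by rw [div_lt_iff₀ hθ]; linarith)]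
  field_simp

lemma abs_hurwitzHalf_add_one_asymptotic_le {w : ℝ} (hw : 0 < w) :
    |hurwitzHalf (w + 1) + 2 * √w + 1 / (2 * √w)| ≤ 1 / (w * √w) := by
  have : 0 < √w := Real.sqrt_pos.2 hw
  have heq : hurwitzHalf (w + 1) + 2 * √w + 1 / (2 * √w) =
      hurwitzHalf w + 2 * √w - 1 / (2 * √w) := by
    rw [hurwitzHalf_eq_add hw]; field_simp; ring
  exact heq ▸ abs_hurwitzHalf_asymptotic_le hw

lemma sum_periodicHurwitz_neg_div {θ : ℝ} {K M : ℕ} (hKM : (K : ℝ) / θ = M) :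
    ∑ k ∈ range K, periodicHurwitz (-(k / θ)) / √k =
      ∑ k ∈ range K, periodicHurwitz (-((k + 1) / θ)) / √(k + 1) - zetaHalf / √K := by
  have hlast : periodicHurwitz (-(K / θ)) = zetaHalf := by
    rw [hKM]
    exact_mod_cast periodicHurwitz_intCast (-M)
  have hshift := (sum_range_succ (fun k : ℕ => periodicHurwitz (-(k / θ)) / √k) K).symm.trans
    (sum_range_succ' _ K)
  simp only [hlast, Nat.cast_zero, Real.sqrt_zero, div_zero, add_zero, Nat.cast_add_one] at hshift
  linarith

lemma abs_sqrt_mul_sum_sqrtConvolution_sub_le {θ : ℝ} (hθ : 0 < θ) {M K : ℕ} (hMK : θ * M = K) :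
    |√θ * ∑ m ∈ range M, sqrtConvolution (θ * (m + 1)) -
      (∑ k ∈ range K, periodicHurwitz (-((k + 1) / θ)) / √(k + 1) - zetaHalf / √K
        + 1 / √θ * (K * sqrtConvolution K) + √θ * sqrtConvolution K / 2)| ≤
      θ * √θ * (2 * (1 + Real.log K) / √K) := by
  have : 0 < √θ := Real.sqrt_pos.2 hθ
  have hdiff : √θ * ∑ m ∈ range M, sqrtConvolution (θ * (m + 1)) -
      (∑ k ∈ range K, periodicHurwitz (-((k + 1) / θ)) / √(k + 1) - zetaHalf / √K
        + 1 / √θ * (K * sqrtConvolution K) + √θ * sqrtConvolution K / 2) =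
      -∑ k ∈ range K, 1 / √(k : ℝ) * (hurwitzHalf ((K - k) / θ + 1) + 2 * √((K - k) / θ)
        + 1 / (2 * √((K - k) / θ))) := by
    rw [sqrt_mul_sum_sqrtConvolution hθ hMK, ← two_mul_sum_sqrt_sub_div_sqrt,
      ← sum_periodicHurwitz_neg_div (M := M) (by rw [← hMK]; field_simp),
      sqrtConvolution_eq_sum_range (L := K) le_rfl, mul_sum, mul_sum, mul_sum, sum_div,
      ← sum_add_distrib, ← sum_add_distrib, ← sum_sub_distrib, ← sum_neg_distrib]
    refine sum_congr rfl fun k hk => ?_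
    have hkK : (k : ℝ) < K := by exact_mod_cast mem_range.1 hk
    have : 0 < √((K : ℝ) - k) := Real.sqrt_pos.2 (by linarith)
    rw [Real.sqrt_div (by linarith),
      show 1 / (2 * (√((K : ℝ) - k) / √θ)) = √θ / (2 * √(K - k)) by field_simp]
    ring
  rw [hdiff, abs_neg]
  refine (abs_sum_le_sum_abs _ _).trans
    (le_trans ?_ (mul_le_mul_of_nonneg_left (sum_one_div_sqrt_mul_le K) (by positivity)))
  rw [mul_sum]
  refine sum_le_sum fun k hk => ?_
  have hkK : (k : ℝ) < K := by exact_mod_cast mem_range.1 hk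
  have hpos : 0 < ((K : ℝ) - k) / θ := div_pos (by linarith) hθ
  rw [abs_mul, abs_of_nonneg (show 0 ≤ 1 / √(k : ℝ) by positivity)]
  calc _ ≤ 1 / √(k : ℝ) * (1 / ((K - k) / θ * √((K - k) / θ))) := by
        gcongr
        exact abs_hurwitzHalf_add_one_asymptotic_le hpos
    _ = _ := by
        rw [Real.sqrt_div (by linarith)]
        field_simp

lemma sqrtConvolution_natCast (K : ℕ) :
    sqrtConvolution K = π + 2 * zetaHalf / √K - convolutionError K := by
  have hperiodic : periodicHurwitz K = zetaHalf := by exact_mod_cast periodicHurwitz_intCast K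
  rw [convolutionError, hperiodic]
  ring

lemma tendsto_natCast_mul_convolutionError :
    Tendsto (fun K : ℕ => K * convolutionError K) atTop (𝓝 0) := by
  obtain ⟨C, -, hbound⟩ := exists_abs_convolutionError_le
  refine squeeze_zero_norm' ?_ (by simpa using tendsto_inv_sqrt_natCast.const_mul C)
  filter_upwards [eventually_ge_atTop 1] with K hK
  have hK1 : (1 : ℝ) ≤ K := by exact_mod_cast hK
  have : 0 < √(K : ℝ) := Real.sqrt_pos.2 (by linarith)
  rw [Real.norm_eq_abs, abs_mul, Nat.abs_cast]
  calc (K : ℝ) * |convolutionError K| ≤ K * (C / (K * √K)) := by gcongr; exact hbound K hK1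
    _ = C * (√K)⁻¹ := by field_simp

lemma tendsto_sqrtConvolution_natCast :
    Tendsto (fun K : ℕ => sqrtConvolution K) atTop (𝓝 π) := by
  have herror : Tendsto (fun K : ℕ => convolutionError K) atTop (𝓝 0) := by
    refine squeeze_zero_norm' ?_ (tendsto_norm_zero.comp tendsto_natCast_mul_convolutionError)
    filter_upwards [eventually_ge_atTop 1] with K hK
    rw [Function.comp_apply, norm_mul, Real.norm_natCast]
    exact le_mul_of_one_le_left (norm_nonneg _) (by exact_mod_cast hK)
  have hlim := ((tendsto_inv_sqrt_natCast.const_mul (2 * zetaHalf)).const_add π).sub herror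
  rw [mul_zero, add_zero, sub_zero] at hlim
  exact hlim.congr fun K => by rw [sqrtConvolution_natCast, div_eq_mul_inv]

lemma sqrt_mul_sum_sqrtConvolution_eq_sub {θ : ℝ} (hθ : 0 < θ) (M : ℕ) :
    √θ * ∑ m ∈ range M, sqrtConvolution (θ * (m + 1)) =
      ∑ m ∈ range M, periodicHurwitz (θ * (m + 1)) / √(m + 1) + π * M * √θ
        + zetaHalf * (zetaHalf - hurwitzHalf (1 + M))
        - √θ * ∑ m ∈ range M, convolutionError (θ * (m + 1)) := by
  have hterm : ∀ m ∈ range M, √θ * sqrtConvolution (θ * (m + 1)) =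
      periodicHurwitz (θ * (m + 1)) / √(m + 1) + π * √θ + zetaHalf * (1 / √(m + 1))
        - √θ * convolutionError (θ * (m + 1)) := by
    intro m _
    have : 0 < √θ := Real.sqrt_pos.2 hθ
    rw [convolutionError, Real.sqrt_mul hθ.le]
    field_simp
    ring
  rw [mul_sum, sum_congr rfl hterm, sum_sub_distrib, sum_add_distrib, sum_add_distrib, sum_const,
    ← mul_sum, ← mul_sum, sum_range_one_div_sqrt, card_range, nsmul_eq_mul]
  ring

lemma abs_truncated_reciprocity_le {θ : ℝ} (hθ : 0 < θ) {M K : ℕ} (hMK : θ * M = K) (Z : ℝ) :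
    |(∑ m ∈ range M, periodicHurwitz (θ * (m + 1)) / √(m + 1) - Z)
        + zetaHalf * (zetaHalf - (hurwitzHalf (1 + M) + 2 * √M))
        - √θ * ∑ m ∈ range M, convolutionError (θ * (m + 1))
      - ((∑ k ∈ range K, periodicHurwitz (-((k + 1) / θ)) / √(k + 1) - Z) - zetaHalf * (√K)⁻¹
        + √θ * sqrtConvolution K / 2 - 1 / √θ * (K * convolutionError K))| ≤
      θ * √θ * (2 * (1 + Real.log K) / √K) := by
  refine le_of_eq_of_le ?_ (abs_sqrt_mul_sum_sqrtConvolution_sub_le hθ hMK)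
  congr 1
  have : 0 < √θ := Real.sqrt_pos.2 hθ
  have hK : 1 / √θ * (K * sqrtConvolution K) =
      π * M * √θ + 2 * zetaHalf * √M - 1 / √θ * (K * convolutionError K) := by
    have hsplit : K * sqrtConvolution K =
        π * K + 2 * zetaHalf * (K / √K) - K * convolutionError K := by
      rw [sqrtConvolution_natCast]; ring
    rw [hsplit, Real.div_sqrt, ← hMK, Real.sqrt_mul hθ.le]
    have hsq := Real.mul_self_sqrt hθ.le
    field_simp
    linear_combination (-(π * M)) * hsq
  rw [sqrt_mul_sum_sqrtConvolution_eq_sub hθ, hK]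
  ring

lemma hurwitzCorrelation_sub_hurwitzCorrelation_neg {a q : ℕ} (ha : 0 < a) (hq : 0 < q)
    (hc : Nat.Coprime a q) :
    hurwitzCorrelation a q - hurwitzCorrelation (-(q : ℤ)) a =
      √(a / q) * (reciprocityError (a / q) + π / 2) - zetaHalf ^ 2 := by
  obtain ⟨θ, hθ_eq⟩ : ∃ θ, θ = (a : ℝ) / q := ⟨_, rfl⟩
  have hθ : 0 < θ := by rw [hθ_eq]; positivity
  have hX := tendsto_hurwitzCorrelation hq hc.isCoprime
  have hY := tendsto_hurwitzCorrelation ha hc.symm.isCoprime.neg_left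
  have hargX (m : ℕ) : ((a : ℤ) : ℝ) * (m + 1) / q = θ * (m + 1) := by
    rw [hθ_eq, Int.cast_natCast, div_mul_eq_mul_div]
  have hargY (m : ℕ) : ((-(q : ℤ) : ℤ) : ℝ) * (m + 1) / a = -((m + 1) / θ) := by
    rw [hθ_eq]; push_cast; field_simp
  simp only [hargX, hargY] at hX hY
  have hM := tendsto_mul_atTop_nat hq
  have hK := tendsto_mul_atTop_nat ha
  have hzeta := (tendsto_hurwitzHalf_add_two_sqrt one_pos).comp hM
  have herror := (summable_convolutionError hθ).hasSum.tendsto_sum_nat.comp hM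
  have hlim := ((hX.add ((hzeta.const_sub zetaHalf).const_mul zetaHalf)).sub
      (herror.const_mul √θ)).sub
    (((hY.sub ((tendsto_inv_sqrt_natCast.comp hK).const_mul zetaHalf)).add
      (((tendsto_sqrtConvolution_natCast.comp hK).const_mul √θ).div_const 2)).sub
      ((tendsto_natCast_mul_convolutionError.comp hK).const_mul (1 / √θ)))
  have hbound := (tendsto_one_add_log_div_sqrt.comp
    ((tendsto_natCast_atTop_atTop (R := ℝ)).comp hK)).const_mul (θ * √θ)
  have hzero := le_of_tendsto_of_tendsto' hlim.abs hbound fun N =>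
    abs_truncated_reciprocity_le hθ (by rw [hθ_eq]; push_cast; field_simp) _
  simp only [mul_zero, sub_zero, abs_nonpos_iff] at hzero
  rw [← hθ_eq, reciprocityError]
  linarith

/-! ### The reciprocity error under scaling -/

lemma one_div_add_one_mul_sqrt_le {v : ℝ} (hv : 0 < v) :
    1 / ((v + 1) * √(v + 1)) ≤ 2 * (1 / √v - 1 / √(v + 1)) := by
  obtain ⟨x, X, hx, hX, rfl, hvX⟩ : ∃ x X : ℝ, 0 < x ∧ 0 < X ∧ v = x ^ 2 ∧ v + 1 = X ^ 2 :=
    ⟨√v, √(v + 1), by positivity, by positivity, (Real.sq_sqrt hv.le).symm,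
      (Real.sq_sqrt (by positivity)).symm⟩
  rw [hvX, Real.sqrt_sq hx.le, Real.sqrt_sq hX.le]
  have hle : x ≤ X := by nlinarith
  have hgap : 1 ≤ 2 * X * (X - x) := by nlinarith
  calc 1 / (X ^ 2 * X) ≤ 2 * X * (X - x) / (X ^ 2 * X) := by gcongr
    _ ≤ 2 * X * (X - x) / (X ^ 2 * x) := by gcongr
    _ = 2 * (1 / x - 1 / X) := by field_simp

lemma hasSum_one_div_sqrt_sub_one_div_sqrt {v : ℝ} (hv : 0 < v) :
    HasSum (fun i : ℕ => 1 / √(v + i) - 1 / √(v + i + 1)) (1 / √v) := by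
  rw [hasSum_iff_tendsto_nat_of_nonneg fun i => sub_nonneg.2
    (one_div_le_one_div_of_le (by positivity) (Real.sqrt_le_sqrt (by linarith)))]
  have hpartial : ∀ N : ℕ, ∑ i ∈ range N, (1 / √(v + i) - 1 / √(v + i + 1)) =
      1 / √v - 1 / √(v + N) := fun N => by
    simpa [add_assoc] using sum_range_sub' (fun i : ℕ => 1 / √(v + i)) N
  simp_rw [hpartial]
  simpa using (tendsto_sqrt_natCast_add v).inv_tendsto_atTop.const_sub (1 / √v)

lemma exists_abs_reciprocityError_sub_sum_le :
    ∃ C : ℝ, 0 < C ∧ ∀ (θ : ℝ) (M : ℕ), 0 < θ → 1 ≤ θ * M →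
      |reciprocityError θ - ∑ m ∈ range M, convolutionError (θ * (m + 1))| ≤
        C / (θ * √(θ * M)) := by
  obtain ⟨C, hC, hbound⟩ := exists_abs_convolutionError_le
  refine ⟨2 * C, by positivity, fun θ M hθ hθM => ?_⟩
  have hM : (0 : ℝ) < M := pos_of_mul_pos_right (by linarith) hθ.le
  have hterm : ∀ i : ℕ, |convolutionError (θ * ((i + M : ℕ) + 1))| ≤
      2 * C / (θ * √θ) * (1 / √(M + i : ℝ) - 1 / √(M + i + 1)) := by
    intro i
    have hv : (0 : ℝ) < M + i := by positivity
    have hy : 1 ≤ θ * (M + i + 1) := hθM.trans (by gcongr; linarith)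
    calc |convolutionError (θ * ((i + M : ℕ) + 1))|
        ≤ C / (θ * (M + i + 1) * √(θ * (M + i + 1))) := by
          rw [Nat.cast_add, add_comm (i : ℝ)]; exact hbound _ hy
      _ = C / (θ * √θ) * (1 / ((M + i + 1) * √(M + i + 1))) := by
          rw [Real.sqrt_mul hθ.le]; field_simp
      _ ≤ C / (θ * √θ) * (2 * (1 / √(M + i : ℝ) - 1 / √(M + i + 1))) := by
          gcongr
          exact one_div_add_one_mul_sqrt_le hv
      _ = _ := by ring
  have htail := tsum_of_norm_bounded (f := fun i : ℕ => convolutionError (θ * ((i + M : ℕ) + 1)))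
    ((hasSum_one_div_sqrt_sub_one_div_sqrt hM).mul_left (2 * C / (θ * √θ))) hterm
  rw [reciprocityError, ← (summable_convolutionError hθ).sum_add_tsum_nat_add M,
    add_sub_cancel_left]
  refine htail.trans_eq ?_
  rw [Real.sqrt_mul hθ.le]
  field_simp

lemma exists_abs_sqrt_mul_reciprocityError_le :
    ∃ C : ℝ, ∀ θ : ℝ, 1 ≤ θ → |√θ * reciprocityError θ| ≤ C := by
  obtain ⟨C₁, hC₁, hbound⟩ := exists_abs_convolutionError_le
  obtain ⟨C₂, hC₂, htail⟩ := exists_abs_reciprocityError_sub_sum_le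
  refine ⟨C₂ + C₁, fun θ hθ => ?_⟩
  have htail := htail θ 1 (by linarith) (by simpa using hθ)
  simp only [sum_range_one, Nat.cast_zero, zero_add, Nat.cast_one, mul_one] at htail
  have hsqrt : 0 < √θ := Real.sqrt_pos.2 (by linarith)
  have hle : |reciprocityError θ| ≤ (C₂ + C₁) / (θ * √θ) := by
    rw [add_div]
    simpa using (abs_add_le (reciprocityError θ - convolutionError θ) _).trans
      (add_le_add htail (hbound θ hθ))
  calc |√θ * reciprocityError θ| = √θ * |reciprocityError θ| := by
        rw [abs_mul, abs_of_pos hsqrt]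
    _ ≤ √θ * ((C₂ + C₁) / (θ * √θ)) := by gcongr
    _ = (C₂ + C₁) / θ := by field_simp
    _ ≤ C₂ + C₁ := div_le_self (by positivity) hθ

section RiemannSum

variable {F W : ℝ → ℝ} {θ : ℝ} {n : ℕ}

lemma mul_eq_sum_div_mul (hn : 0 < n) (θ x : ℝ) : θ * x = ∑ _i ∈ range n, θ / n * x := by
  rw [sum_const, card_range, nsmul_eq_mul]
  field_simp

lemma abs_cell_riemannSum_sub_le (hθ : 0 < θ) (hn : 0 < n) (m : ℕ)
    (h : ∀ s, 0 < s → s ≤ θ * (m + 1) →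
      |F (θ * (m + 1)) - F s| ≤ W (θ * (m + 1)) - W s) :
    |θ * F (θ * (m + 1)) - θ / n * ∑ i ∈ range n, F (θ / n * ((n * m + i : ℕ) + 1))| ≤
      ∑ i ∈ range n, θ / n * (W (θ * (m + 1)) - W (θ * m + θ / n * (i + 1))) := by
  rw [mul_eq_sum_div_mul hn, mul_sum, ← sum_sub_distrib]
  refine (abs_sum_le_sum_abs _ _).trans (sum_le_sum fun i hi => ?_)
  have hi : (i : ℝ) + 1 ≤ n := by exact_mod_cast mem_range.1 hi
  have hpoint : θ / n * ((n * m + i : ℕ) + 1) = θ * m + θ / n * (i + 1) := by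
    push_cast
    field_simp
    ring
  have hle : θ * m + θ / n * (i + 1) ≤ θ * (m + 1) :=
    calc θ * m + θ / n * (i + 1) ≤ θ * m + θ / n * n := by gcongr
      _ = θ * (m + 1) := by field_simp
  rw [hpoint, ← mul_sub, abs_mul, abs_of_pos (by positivity)]
  gcongr
  exact h _ (by positivity) hle

lemma abs_riemannSum_sub_riemannSum_div_le (hθ : 0 < θ) (hn : 0 < n) (M : ℕ)
    (h : ∀ s t, 0 < s → s ≤ t → t ≤ θ * (M + 1) → |F t - F s| ≤ W t - W s) :
    |θ * ∑ m ∈ range (M + 1), F (θ * (m + 1)) -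
        θ / n * ∑ j ∈ range (n * (M + 1)), F (θ / n * (j + 1))| ≤
      θ * (W (θ * (M + 1)) - W θ) + ∑ i ∈ range n, θ / n * (W θ - W (θ / n * (i + 1))) := by
  induction M with
  | zero =>
    have hcell := abs_cell_riemannSum_sub_le hθ hn 0 fun s h0 hs => h s _ h0 hs le_rfl
    simpa using hcell
  | succ M ih =>
    have ih := ih fun s t h0 hst ht => h s t h0 hst (ht.trans (by gcongr; simp))
    have hcell := abs_cell_riemannSum_sub_le hθ hn (M + 1) fun s h0 hs => h s _ h0 hs le_rfl
    have hmono : ∑ i ∈ range n, θ / n * (W (θ * ((M + 1 : ℕ) + 1)) -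
        W (θ * (M + 1 : ℕ) + θ / n * (i + 1))) ≤
        θ * (W (θ * ((M + 1 : ℕ) + 1)) - W (θ * (M + 1 : ℕ))) := by
      rw [mul_eq_sum_div_mul hn θ (W _ - W _)]
      refine sum_le_sum fun i hi => ?_
      have hi : (i : ℝ) + 1 ≤ n := by exact_mod_cast mem_range.1 hi
      have hle : θ * (M + 1 : ℕ) + θ / n * (i + 1) ≤ θ * ((M + 1 : ℕ) + 1) :=
        calc θ * (M + 1 : ℕ) + θ / n * (i + 1) ≤ θ * (M + 1 : ℕ) + θ / n * n := by gcongr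
          _ = θ * ((M + 1 : ℕ) + 1) := by field_simp
      have hvar := h (θ * (M + 1 : ℕ)) _ (by positivity)
        (le_add_of_nonneg_right (by positivity)) hle
      have : W (θ * (M + 1 : ℕ)) ≤ W (θ * (M + 1 : ℕ) + θ / n * (i + 1)) :=
        sub_nonneg.1 ((abs_nonneg _).trans hvar)
      gcongr
    rw [sum_range_succ, mul_add_one n, sum_range_add (fun j : ℕ => F (θ / n * (j + 1))),
      mul_add θ (∑ _ ∈ _, _), mul_add (θ / n), add_sub_add_comm]
    refine (abs_add_le _ _).trans ((add_le_add ih (hcell.trans hmono)).trans_eq ?_)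
    push_cast
    ring

end RiemannSum

lemma one_div_sqrt_add_one_sub_eq {v : ℝ} (hv : 0 ≤ v) :
    1 / √(v + 1) - 2 * (√(v + 1) - √v) = -(1 / (√(v + 1) * (√(v + 1) + √v) ^ 2)) := by
  have : 0 < √(v + 1) := Real.sqrt_pos.2 (by linarith)
  have hgap : √(v + 1) - √v = 1 / (√(v + 1) + √v) := by
    rw [eq_div_iff (by positivity)]
    nlinarith [Real.sq_sqrt hv, Real.sq_sqrt (show 0 ≤ v + 1 by linarith)]
  calc 1 / √(v + 1) - 2 * (√(v + 1) - √v)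
      = (√v - √(v + 1)) / (√(v + 1) * (√(v + 1) + √v)) := by
        rw [hgap]
        field_simp
        ring
    _ = -(1 / (√(v + 1) * (√(v + 1) + √v) ^ 2)) := by
        rw [← neg_sub, hgap]
        field_simp

lemma hurwitzHalf_anti {s t : ℝ} (hs : 0 < s) (hst : s ≤ t) : hurwitzHalf t ≤ hurwitzHalf s := by
  have hlim := (tendsto_hurwitzHalf_add_two_sqrt (hs.trans_le hst)).sub
    (tendsto_hurwitzHalf_add_two_sqrt hs)
  rw [sub_zero] at hlim
  refine sub_nonpos.1 (ge_of_tendsto' hlim fun N => ?_)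
  have hsum : ∑ n ∈ range N, 1 / √(t + n) ≤ ∑ n ∈ range N, 1 / √(s + n) := by gcongr
  linarith [hurwitzHalf_eq_sum_add hs N, hurwitzHalf_eq_sum_add (hs.trans_le hst) N]

lemma hurwitzHalf_one_add_eq_sum_add {s : ℝ} (hs : 0 ≤ s) (N : ℕ) :
    hurwitzHalf (1 + s) + 2 * √s =
      ∑ n ∈ range N, (1 / √(s + n + 1) - 2 * (√(s + n + 1) - √(s + n))) +
        (hurwitzHalf (1 + s + N) + 2 * √(s + N)) := by
  have htele := sum_range_sub (fun n : ℕ => √(s + n)) N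
  have hsum := hurwitzHalf_eq_sum_add (show 0 < 1 + s by linarith) N
  simp only [Nat.cast_add, Nat.cast_one, Nat.cast_zero, add_zero, ← add_assoc] at htele
  rw [sum_sub_distrib, ← mul_sum, htele, hsum]
  simp only [add_assoc, add_comm (1 : ℝ)]
  ring

lemma hurwitzHalf_one_add_add_two_sqrt_mono {s t : ℝ} (hs : 0 ≤ s) (hst : s ≤ t) :
    hurwitzHalf (1 + s) + 2 * √s ≤ hurwitzHalf (1 + t) + 2 * √t := by
  have hlim := (tendsto_hurwitzHalf_add_two_sqrt (show 0 < 1 + s by linarith)).sub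
    (tendsto_hurwitzHalf_add_two_sqrt (show 0 < 1 + t by linarith))
  rw [sub_zero] at hlim
  refine sub_nonpos.1 (ge_of_tendsto' hlim fun N => ?_)
  have hsum : ∑ n ∈ range N, (1 / √(s + n + 1) - 2 * (√(s + n + 1) - √(s + n))) ≤
      ∑ n ∈ range N, (1 / √(t + n + 1) - 2 * (√(t + n + 1) - √(t + n))) := by
    refine sum_le_sum fun n _ => ?_
    have : 0 < √(s + n + 1) := Real.sqrt_pos.2 (by positivity)
    have ht : 0 ≤ t := hs.trans hst
    rw [one_div_sqrt_add_one_sub_eq (by positivity), one_div_sqrt_add_one_sub_eq (by positivity)]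
    gcongr
  have hsqrt : √(s + N) ≤ √(t + N) := Real.sqrt_le_sqrt (by linarith)
  linarith [hurwitzHalf_one_add_eq_sum_add hs N, hurwitzHalf_one_add_eq_sum_add (hs.trans hst) N]

lemma sub_div_le_sub_add_one_div_sub {x y : ℝ} (hx : 0 < x) (hxy : x ≤ y) :
    (y - x) / y ≤ (y - x) + (1 / x - 1 / y) := by
  have hy : 0 < y := hx.trans_le hxy
  have hxy1 : x ≤ x * y + 1 := by
    rcases le_total y 1 with h1 | h1 <;> nlinarith
  have : 0 ≤ y - x := sub_nonneg.2 hxy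
  calc (y - x) / y = (y - x) * x / (x * y) := by field_simp
    _ ≤ (y - x) * (x * y + 1) / (x * y) := by gcongr
    _ = (y - x) + (1 / x - 1 / y) := by field_simp

lemma abs_hurwitzHalf_add_zetaHalf_div_sqrt_sub_le {s t : ℝ} (hs : 0 < s) (hst : s ≤ t) :
    |(hurwitzHalf (1 + t) + zetaHalf) / √t - (hurwitzHalf (1 + s) + zetaHalf) / √s| ≤
      (4 * √t - (2 * |zetaHalf| + 4) / √t) - (4 * √s - (2 * |zetaHalf| + 4) / √s) := by
  have hdiff := hurwitzHalf_anti (show 0 < 1 + s by linarith) (add_le_add_right hst 1)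
  have hdiff' := hurwitzHalf_one_add_add_two_sqrt_mono hs.le hst
  have hzeta := hurwitzHalf_anti one_pos (le_add_of_nonneg_right hs.le)
  have hzeta' := hurwitzHalf_one_add_add_two_sqrt_mono le_rfl hs.le
  simp only [add_zero, Real.sqrt_zero, mul_zero] at hzeta'
  rw [← zetaHalf] at hzeta hzeta'
  have hx : 0 < √s := Real.sqrt_pos.2 hs
  have hxy : √s ≤ √t := Real.sqrt_le_sqrt hst
  set x := √s
  set y := √t
  have hy : 0 < y := by linarith
  have hratio := sub_div_le_sub_add_one_div_sub hx hxy
  have hfirst : |(zetaHalf + hurwitzHalf (1 + s)) * (1 / x - 1 / y)| ≤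
      2 * |zetaHalf| * (1 / x - 1 / y) + 2 * ((y - x) / y) := by
    have hr : 0 ≤ 1 / x - 1 / y := sub_nonneg.2 (one_div_le_one_div_of_le hx hxy)
    have hsum : |zetaHalf + hurwitzHalf (1 + s)| ≤ 2 * |zetaHalf| + 2 * x := by
      rw [abs_le]
      constructor <;> linarith [le_abs_self zetaHalf, neg_abs_le zetaHalf]
    rw [abs_mul, abs_of_nonneg hr]
    calc _ ≤ (2 * |zetaHalf| + 2 * x) * (1 / x - 1 / y) := by gcongr
      _ = _ := by field_simp
  have hsecond : |(hurwitzHalf (1 + s) - hurwitzHalf (1 + t)) / y| ≤ 2 * ((y - x) / y) := by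
    rw [abs_of_nonneg (div_nonneg (by linarith) hy.le), mul_div_assoc']
    gcongr
    linarith
  calc |(hurwitzHalf (1 + t) + zetaHalf) / y - (hurwitzHalf (1 + s) + zetaHalf) / x|
      = |(zetaHalf + hurwitzHalf (1 + s)) * (1 / x - 1 / y) +
          (hurwitzHalf (1 + s) - hurwitzHalf (1 + t)) / y| := by
        rw [← abs_neg]
        congr 1
        field_simp
        ring
    _ ≤ 2 * |zetaHalf| * (1 / x - 1 / y) + 4 * ((y - x) + (1 / x - 1 / y)) := by
        refine (abs_add_le _ _).trans ?_
        linarith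
    _ = _ := by ring

/-- For `0 < k < y` this is `1 / (√k √(y - k)) - 1 / (√y √(y - k))`, see
`one_div_sub_one_div_eq_kernelDefect`; for `0 < y ≤ k` the junk value of the square root makes
it vanish. -/
noncomputable def kernelDefect (k y : ℝ) : ℝ := √(1 - k / y) * (1 / (√k * (√y + √k)))

/-- An increasing function of `y` whose increments dominate those of `kernelDefect k`. -/
noncomputable def kernelVariation (k y : ℝ) : ℝ := 1 / k * √(1 - k / y) - 1 / (√k * (√y + √k))

section Kernel

variable {k y s t : ℝ}

lemma sqrt_one_sub_div_le_one (hk : 0 ≤ k) (hy : 0 < y) : √(1 - k / y) ≤ 1 :=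
  Real.sqrt_le_one.2 (sub_le_self 1 (by positivity))

lemma one_div_sqrt_mul_add_le (hk : 0 < k) (y : ℝ) : 1 / (√k * (√y + √k)) ≤ 1 / k := by
  have : 0 < √k := Real.sqrt_pos.2 hk
  refine one_div_le_one_div_of_le hk ?_
  nlinarith [Real.mul_self_sqrt hk.le, Real.sqrt_nonneg y]

lemma kernelVariation_sub_le (hk : 0 < k) (hs : 0 < s) (hst : s ≤ t) :
    kernelVariation k t - kernelVariation k s ≤ 2 * (1 / k) := by
  have hupper : 1 / k * √(1 - k / t) ≤ 1 / k :=
    mul_le_of_le_one_right (by positivity) (sqrt_one_sub_div_le_one hk.le (hs.trans_le hst))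
  have hlower : 0 ≤ 1 / k * √(1 - k / s) := by positivity
  have : 0 ≤ 1 / (√k * (√t + √k)) := by positivity
  unfold kernelVariation
  linarith [one_div_sqrt_mul_add_le hk s]

lemma abs_mul_sub_mul_le {p p' r r' c : ℝ} (hp : p ≤ p') (hp0 : 0 ≤ p') (hp1 : p' ≤ 1)
    (hr : r' ≤ r) (hr0 : 0 ≤ r) (hrc : r ≤ c) :
    |p' * r' - p * r| ≤ (c * p' - r') - (c * p - r) := by
  rw [abs_le]
  constructor <;> nlinarith [mul_nonneg hr0 (sub_nonneg.2 hp), mul_nonneg hp0 (sub_nonneg.2 hr)]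

lemma abs_kernelDefect_sub_le (hk : 0 < k) (hs : 0 < s) (hst : s ≤ t) :
    |kernelDefect k t - kernelDefect k s| ≤ kernelVariation k t - kernelVariation k s :=
  have : 0 < √k := Real.sqrt_pos.2 hk
  abs_mul_sub_mul_le (by gcongr) (Real.sqrt_nonneg _)
    (sqrt_one_sub_div_le_one hk.le (hs.trans_le hst)) (by gcongr) (by positivity)
    (one_div_sqrt_mul_add_le hk s)

lemma one_div_sub_one_div_eq_kernelDefect (hk : 0 < k) (hky : k < y) :
    1 / (√k * √(y - k)) - 1 / √(y - k) / √y = kernelDefect k y := by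
  have hy : 0 < y := hk.trans hky
  have : 0 < √k := Real.sqrt_pos.2 hk
  have : 0 < √y := Real.sqrt_pos.2 hy
  have : 0 < √(y - k) := Real.sqrt_pos.2 (sub_pos.2 hky)
  have hsqrt : √(1 - k / y) = √(y - k) / √y := by
    rw [← Real.sqrt_div (sub_nonneg.2 hky.le), sub_div, div_self hy.ne']
  rw [kernelDefect, hsqrt]
  field_simp
  rw [mul_comm, ← sq_sub_sq, Real.sq_sqrt hy.le, Real.sq_sqrt hk.le,
    Real.sq_sqrt (sub_nonneg.2 hky.le)]

lemma kernelDefect_eq_zero (hy : 0 < y) (hyk : y ≤ k) : kernelDefect k y = 0 := by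
  rw [kernelDefect, Real.sqrt_eq_zero_of_nonpos, zero_mul]
  rwa [sub_nonpos, one_le_div hy]

end Kernel

lemma periodicHurwitz_eq_sum_range {x : ℝ} (h0 : 0 < x) (h1 : x ≤ 1) (n : ℕ) :
    periodicHurwitz (x + n) =
      ∑ k ∈ range n, 1 / √(x + n - (k + 1)) + 1 / √(x + n) + hurwitzHalf (1 + (x + n)) := by
  rw [periodicHurwitz_add_natCast h0 h1, hurwitzHalf_eq_add (by positivity),
    ← sum_range_sub_one_add_eq_sum_add fun t => 1 / √t]
  simp only [add_comm (1 : ℝ), add_assoc]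

lemma convolutionError_eq_sub_sum_kernelDefect {y : ℝ} (hy : 0 < y) {L : ℕ} (hL : y ≤ L) :
    convolutionError y = 1 / y + (hurwitzHalf (1 + y) + zetaHalf) / √y + π -
      ∑ k ∈ range L, kernelDefect (k + 1) y := by
  obtain ⟨n, x, h0, h1, rfl, -⟩ := exists_eq_add_natCast_of_pos hy
  have hnL : n ≤ L := by
    have : (n : ℝ) ≤ L := by linarith
    exact_mod_cast this
  have htrunc : ∑ k ∈ range L, kernelDefect (k + 1) (x + n) =
      ∑ k ∈ range n, kernelDefect (k + 1) (x + n) := by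
    refine (sum_subset (range_subset_range.2 hnL) fun k _ hk => ?_).symm
    have hk : (n : ℝ) ≤ k := by exact_mod_cast not_lt.1 (mem_range.not.1 hk)
    exact kernelDefect_eq_zero hy (by linarith)
  have hconv : sqrtConvolution (x + n) =
      ∑ k ∈ range n, 1 / (√(k + 1) * √(x + n - (k + 1))) := by
    rw [sqrtConvolution_eq_sum_range (L := n + 1) (by push_cast; linarith), sum_range_succ']
    simp
  have hdefect : sqrtConvolution (x + n) - (∑ k ∈ range n, 1 / √(x + n - (k + 1))) / √(x + n) =
      ∑ k ∈ range n, kernelDefect (k + 1) (x + n) := by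
    rw [hconv, sum_div, ← sum_sub_distrib]
    refine sum_congr rfl fun k hk => one_div_sub_one_div_eq_kernelDefect (by positivity) ?_
    have hk : (k : ℝ) + 1 ≤ n := by exact_mod_cast mem_range.1 hk
    linarith
  have hfirst : 1 / √(x + n) / √(x + n) = 1 / (x + n) := by
    rw [div_div, Real.mul_self_sqrt hy.le]
  rw [htrunc, convolutionError, periodicHurwitz_eq_sum_range h0 h1, ← hdefect, add_div, add_div,
    hfirst, add_div]
  ring

/-- An increasing function whose increments dominate those of `y ↦ convolutionError y - 1 / y` on
`(0, L]`. -/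
noncomputable def convolutionVariation (L : ℕ) (y : ℝ) : ℝ :=
  4 * √y - (2 * |zetaHalf| + 4) / √y + ∑ k ∈ range L, kernelVariation (k + 1) y

lemma convolutionVariation_sub_le (L : ℕ) {s t : ℝ} (hs : 0 < s) (hst : s ≤ t) :
    convolutionVariation L t - convolutionVariation L s ≤
      4 * √t + (2 * |zetaHalf| + 4) / √s + 2 * harmonic L := by
  have hsum : ∑ k ∈ range L, kernelVariation (k + 1) t -
      ∑ k ∈ range L, kernelVariation (k + 1) s ≤ 2 * harmonic L := by
    rw [harmonic_eq_sum_one_div, mul_sum, ← sum_sub_distrib]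
    exact sum_le_sum fun k _ => kernelVariation_sub_le (by positivity) hs hst
  have hsqrt : 0 ≤ 4 * √s := by positivity
  have hinv : 0 ≤ (2 * |zetaHalf| + 4) / √t := by positivity
  unfold convolutionVariation
  linarith

lemma abs_convolutionError_sub_inv_sub_le {L : ℕ} {s t : ℝ} (hs : 0 < s) (hst : s ≤ t)
    (htL : t ≤ L) :
    |(convolutionError t - 1 / t) - (convolutionError s - 1 / s)| ≤
      convolutionVariation L t - convolutionVariation L s := by
  have hkernel : |∑ k ∈ range L, kernelDefect (k + 1) t - ∑ k ∈ range L, kernelDefect (k + 1) s| ≤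
      ∑ k ∈ range L, kernelVariation (k + 1) t - ∑ k ∈ range L, kernelVariation (k + 1) s := by
    rw [← sum_sub_distrib, ← sum_sub_distrib]
    exact (abs_sum_le_sum_abs _ _).trans
      (sum_le_sum fun k _ => abs_kernelDefect_sub_le (by positivity) hs hst)
  rw [convolutionError_eq_sub_sum_kernelDefect hs (hst.trans htL),
    convolutionError_eq_sub_sum_kernelDefect (hs.trans_le hst) htL]
  calc _ = |((hurwitzHalf (1 + t) + zetaHalf) / √t - (hurwitzHalf (1 + s) + zetaHalf) / √s) -
        (∑ k ∈ range L, kernelDefect (k + 1) t - ∑ k ∈ range L, kernelDefect (k + 1) s)| := by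
        congr 1
        ring
    _ ≤ _ := (abs_sub _ _).trans
        (add_le_add (abs_hurwitzHalf_add_zetaHalf_div_sqrt_sub_le hs hst) hkernel)
    _ = _ := by
        unfold convolutionVariation
        ring

lemma mul_sum_inv_eq_harmonic {θ : ℝ} (hθ : 0 < θ) (N : ℕ) :
    θ * ∑ m ∈ range N, 1 / (θ * (m + 1)) = harmonic N := by
  rw [harmonic_eq_sum_one_div, mul_sum]
  refine sum_congr rfl fun m _ => ?_
  field_simp

lemma sum_one_div_sqrt_le (n : ℕ) : ∑ i ∈ range n, 1 / √((i : ℝ) + 1) ≤ 2 * √n := by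
  induction n with
  | zero => simp
  | succ n ih =>
    have hstep : 1 / √((n : ℝ) + 1) - 2 * (√(n + 1) - √n) ≤ 0 := by
      rw [one_div_sqrt_add_one_sub_eq n.cast_nonneg]
      exact neg_nonpos.2 (by positivity)
    rw [sum_range_succ, Nat.cast_succ]
    linarith

lemma sum_convolutionVariation_sub_le (L : ℕ) {θ : ℝ} (hθ : 0 < θ) {n : ℕ} (hn : 0 < n) :
    ∑ i ∈ range n, θ / n * (convolutionVariation L θ - convolutionVariation L (θ / n * (i + 1))) ≤
      θ * (4 * √θ + 2 * harmonic L) + 2 * (2 * |zetaHalf| + 4) * √θ := by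
  set B := 2 * |zetaHalf| + 4
  have hδ : 0 < θ / n := by positivity
  have hterm : ∀ i ∈ range n,
      θ / n * (convolutionVariation L θ - convolutionVariation L (θ / n * (i + 1))) ≤
        θ / n * (4 * √θ + 2 * harmonic L) + B * √(θ / n) * (1 / √(i + 1)) := by
    intro i hi
    have hi : (i : ℝ) + 1 ≤ n := by exact_mod_cast mem_range.1 hi
    have hle : θ / n * (i + 1) ≤ θ :=
      calc θ / n * (i + 1) ≤ θ / n * n := by gcongr
        _ = θ := by field_simp
    calc _ ≤ θ / n * (4 * √θ + B / √(θ / n * (i + 1)) + 2 * harmonic L) := by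
          gcongr
          exact convolutionVariation_sub_le L (by positivity) hle
      _ = θ / n * (4 * √θ + 2 * harmonic L) + B * (θ / n / √(θ / n)) * (1 / √(i + 1)) := by
          rw [Real.sqrt_mul hδ.le]
          ring
      _ = _ := by rw [Real.div_sqrt]
  refine (sum_le_sum hterm).trans ?_
  rw [sum_add_distrib, ← mul_eq_sum_div_mul hn, ← mul_sum]
  refine add_le_add le_rfl ?_
  calc B * √(θ / n) * ∑ i ∈ range n, 1 / √((i : ℝ) + 1) ≤ B * √(θ / n) * (2 * √n) := by
        gcongr
        exact sum_one_div_sqrt_le n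
    _ = 2 * B * √(θ / n * n) := by
        rw [Real.sqrt_mul hδ.le]
        ring
    _ = 2 * B * √θ := by rw [div_mul_cancel₀ θ (by positivity)]

lemma abs_sum_convolutionError_sub_sum_div_le {θ : ℝ} (hθ : 0 < θ) {n L : ℕ} (hn : 0 < n) (M : ℕ)
    (hML : θ * (M + 1) ≤ L) :
    |θ * ∑ m ∈ range (M + 1), convolutionError (θ * (m + 1)) -
        θ / n * ∑ j ∈ range (n * (M + 1)), convolutionError (θ / n * (j + 1)) +
        (harmonic (n * (M + 1)) - harmonic (M + 1))| ≤
      θ * (4 * √(θ * (M + 1)) + 4 * √θ + 4 * harmonic L) + 3 * (2 * |zetaHalf| + 4) * √θ := by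
  have hle : θ ≤ θ * (M + 1) := le_mul_of_one_le_right hθ.le (by simp)
  have hriemann := abs_riemannSum_sub_riemannSum_div_le (F := fun y => convolutionError y - 1 / y)
    hθ hn M fun s t hs hst ht => abs_convolutionError_sub_inv_sub_le hs hst (ht.trans hML)
  simp only [sum_sub_distrib] at hriemann
  rw [mul_sub, mul_sub, mul_sum_inv_eq_harmonic hθ, mul_sum_inv_eq_harmonic (by positivity)]
    at hriemann
  have hupper : θ * (convolutionVariation L (θ * (M + 1)) - convolutionVariation L θ) ≤
      θ * (4 * √(θ * (M + 1)) + (2 * |zetaHalf| + 4) / √θ + 2 * harmonic L) := by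
    gcongr
    exact convolutionVariation_sub_le L hθ hle
  have hdiv : θ * ((2 * |zetaHalf| + 4) / √θ) = (2 * |zetaHalf| + 4) * √θ := by
    rw [mul_div_left_comm, Real.div_sqrt]
  calc _ = _ := by
        congr 1
        ring
    _ ≤ _ := hriemann
    _ ≤ _ := by linarith [sum_convolutionVariation_sub_le L hθ hn]

lemma abs_harmonic_sub_log_sub_eulerMascheroniConstant_le {N : ℕ} (hN : 0 < N) :
    |harmonic N - Real.log N - eulerMascheroniConstant| ≤ 1 / N := by
  have hlower := eulerMascheroniSeq_lt_eulerMascheroniConstant N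
  have hupper := eulerMascheroniConstant_lt_eulerMascheroniSeq' N
  rw [eulerMascheroniSeq] at hlower
  rw [eulerMascheroniSeq', if_neg hN.ne'] at hupper
  have hlog : Real.log (N + 1) - Real.log N ≤ 1 / N := by
    rw [← Real.log_div (by positivity) (by positivity)]
    refine (Real.log_le_sub_one_of_pos (by positivity)).trans_eq ?_
    field_simp
    ring
  have : (0 : ℝ) < 1 / N := by positivity
  rw [abs_le]
  constructor <;> linarith

lemma abs_harmonic_mul_sub_harmonic_sub_log_le {n N : ℕ} (hn : 0 < n) (hN : 0 < N) :
    |(harmonic (n * N) - harmonic N : ℝ) - Real.log n| ≤ 2 / N := by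
  have hnN := abs_harmonic_sub_log_sub_eulerMascheroniConstant_le (Nat.mul_pos hn hN)
  have hle : (1 : ℝ) / (n * N : ℕ) ≤ 1 / N := by
    gcongr
    exact Nat.le_mul_of_pos_left N hn
  rw [Nat.cast_mul, Real.log_mul (by positivity) (by positivity), ← Nat.cast_mul] at hnN
  calc |(harmonic (n * N) - harmonic N : ℝ) - Real.log n|
      = |(harmonic (n * N) - (Real.log n + Real.log N) - eulerMascheroniConstant) -
          (harmonic N - Real.log N - eulerMascheroniConstant)| := by
        congr 1
        ring
    _ ≤ 1 / N + 1 / N := (abs_sub _ _).trans (add_le_add (hnN.trans hle)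
        (abs_harmonic_sub_log_sub_eulerMascheroniConstant_le hN))
    _ = 2 / N := by ring

lemma exists_abs_mul_reciprocityError_sub_mul_sum_le :
    ∃ C : ℝ, 0 < C ∧ ∀ (θ : ℝ) (M : ℕ), 0 < θ → 1 ≤ θ * M →
      |θ * reciprocityError θ - θ * ∑ m ∈ range M, convolutionError (θ * (m + 1))| ≤
        C / √(θ * M) := by
  obtain ⟨C, hC, htail⟩ := exists_abs_reciprocityError_sub_sum_le
  refine ⟨C, hC, fun θ M hθ hM => ?_⟩
  rw [← mul_sub, abs_mul, abs_of_pos hθ]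
  calc _ ≤ θ * (C / (θ * √(θ * M))) := by
        gcongr
        exact htail θ M hθ hM
    _ = C / √(θ * M) := by field_simp

lemma one_add_log_le {θ N : ℝ} (hθ : 0 < θ) (hN : 0 < N) (hle : N ≤ 2 / θ ^ 2) :
    1 + Real.log N ≤ 8 / √θ := by
  have : 0 < √θ := Real.sqrt_pos.2 hθ
  have hpow : N ≤ (2 / √θ) ^ 4 := by
    refine hle.trans ?_
    rw [div_pow, show √θ ^ 4 = (√θ ^ 2) ^ 2 by ring, Real.sq_sqrt hθ.le]
    gcongr
    norm_num
  calc 1 + Real.log N ≤ 1 + 4 * Real.log (2 / √θ) := by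
        have := Real.log_le_log hN hpow
        rw [Real.log_pow] at this
        push_cast at this
        linarith
    _ ≤ 1 + 4 * (2 / √θ - 1) := by
        gcongr
        exact Real.log_le_sub_one_of_pos (by positivity)
    _ ≤ 8 / √θ := by
        ring_nf
        linarith

lemma sqrt_sq_mul_mem_Icc {s N : ℝ} (hs : 0 < s) (hlower : 1 / (s ^ 2) ^ 2 ≤ N)
    (hupper : N ≤ 2 / (s ^ 2) ^ 2) : √(s ^ 2 * N) ∈ Set.Icc (1 / s) (2 / s) := by
  constructor
  · refine Real.le_sqrt_of_sq_le ?_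
    calc (1 / s) ^ 2 = s ^ 2 * (1 / (s ^ 2) ^ 2) := by field_simp
      _ ≤ s ^ 2 * N := by gcongr
  · rw [Real.sqrt_le_left (by positivity)]
    calc s ^ 2 * N ≤ s ^ 2 * (2 / (s ^ 2) ^ 2) := by gcongr
      _ = 2 / s ^ 2 := by field_simp
      _ ≤ (2 / s) ^ 2 := by
        rw [div_pow]
        gcongr
        norm_num

lemma exists_natCast_add_one_mem_Icc {θ : ℝ} (hθ : 0 < θ) (hθ1 : θ ≤ 1) :
    ∃ M : ℕ, 1 / θ ^ 2 ≤ (M : ℝ) + 1 ∧ (M : ℝ) + 1 ≤ 2 / θ ^ 2 := by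
  have hpos : 0 < 1 / θ ^ 2 := by positivity
  have hone : 1 ≤ 1 / θ ^ 2 := one_le_one_div (by positivity) (pow_le_one₀ hθ.le hθ1)
  obtain ⟨M, hM⟩ := Nat.exists_eq_succ_of_ne_zero (Nat.ceil_pos.2 hpos).ne'
  have hlower := Nat.le_ceil (1 / θ ^ 2)
  have hupper := Nat.ceil_lt_add_one hpos.le
  rw [hM, Nat.cast_succ] at hlower hupper
  refine ⟨M, hlower, hupper.le.trans ?_⟩
  linarith [show 2 / θ ^ 2 = 1 / θ ^ 2 + 1 / θ ^ 2 by ring]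

lemma exists_abs_mul_reciprocityError_sub_le_of_natCast :
    ∃ C : ℝ, 0 < C ∧ ∀ (θ : ℝ) (n M : ℕ), 0 < θ → θ ≤ 1 → 0 < n → 1 ≤ θ * (M + 1) →
      |θ * reciprocityError θ - θ / n * reciprocityError (θ / n) + Real.log n| ≤
        C / √(θ * (M + 1)) + 2 / (M + 1) + C * √θ +
          4 * θ * (√(θ * (M + 1)) + √θ + (1 + Real.log (M + 1))) := by
  obtain ⟨C, hC, htail⟩ := exists_abs_mul_reciprocityError_sub_mul_sum_le
  refine ⟨2 * C + 3 * (2 * |zetaHalf| + 4), by positivity, fun θ n M hθ hθ1 hn hM => ?_⟩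
  have hn' : (n : ℝ) ≠ 0 := by positivity
  have hcast : θ / n * (n * (M + 1) : ℕ) = θ * (M + 1) := by
    push_cast
    field_simp
  have hcoarse := htail θ (M + 1) hθ (by exact_mod_cast hM)
  have hfine := htail (θ / n) (n * (M + 1)) (by positivity) (by rwa [hcast])
  have hriemann := abs_sum_convolutionError_sub_sum_div_le (L := M + 1) hθ hn M
    (by push_cast; exact mul_le_of_le_one_left (by positivity) hθ1)
  have hharmonic := abs_harmonic_mul_sub_harmonic_sub_log_le hn M.succ_pos
  have hlog : (harmonic (M + 1) : ℝ) ≤ 1 + Real.log (M + 1) := by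
    exact_mod_cast harmonic_le_one_add_log (M + 1)
  rw [hcast] at hfine
  push_cast at hcoarse hharmonic
  have hlog := mul_le_mul_of_nonneg_left hlog (show 0 ≤ 4 * θ by positivity)
  have hdouble : (2 * C + 3 * (2 * |zetaHalf| + 4)) / √(θ * (M + 1)) =
      C / √(θ * (M + 1)) + C / √(θ * (M + 1)) +
        3 * (2 * |zetaHalf| + 4) / √(θ * (M + 1)) := by ring
  have : 0 ≤ 3 * (2 * |zetaHalf| + 4) / √(θ * (M + 1)) := by positivity
  have : 0 ≤ C * √θ := by positivity
  calc _ = |((θ * reciprocityError θ -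
            θ * ∑ m ∈ range (M + 1), convolutionError (θ * (m + 1))) -
          (θ / n * reciprocityError (θ / n) -
            θ / n * ∑ j ∈ range (n * (M + 1)), convolutionError (θ / n * (j + 1)))) +
        ((θ * ∑ m ∈ range (M + 1), convolutionError (θ * (m + 1)) -
            θ / n * ∑ j ∈ range (n * (M + 1)), convolutionError (θ / n * (j + 1)) +
            (harmonic (n * (M + 1)) - harmonic (M + 1))) -
          ((harmonic (n * (M + 1)) - harmonic (M + 1) : ℝ) - Real.log n))| := by
        congr 1
        ring
    _ ≤ _ := (abs_add_le _ _).trans (add_le_add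
        ((abs_sub _ _).trans (add_le_add hcoarse hfine))
        ((abs_sub _ _).trans (add_le_add hriemann hharmonic)))
    _ ≤ _ := by linarith

lemma exists_abs_mul_reciprocityError_sub_le :
    ∃ C : ℝ, ∀ (θ : ℝ) (n : ℕ), 0 < θ → θ ≤ 1 → 0 < n →
      |θ * reciprocityError θ - θ / n * reciprocityError (θ / n) + Real.log n| ≤ C * √θ := by
  obtain ⟨C, hC, hbound⟩ := exists_abs_mul_reciprocityError_sub_le_of_natCast
  refine ⟨2 * C + 46, fun θ n hθ hθ1 hn => ?_⟩
  -- For `θ (M + 1) ≍ 1 / θ` the tails, the variation and the harmonic sums are all `O(√θ)`.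
  obtain ⟨M, hlower, hupper⟩ := exists_natCast_add_one_mem_Icc hθ hθ1
  have hlog := one_add_log_le hθ (by positivity) hupper
  obtain ⟨s, hs, rfl⟩ : ∃ s : ℝ, 0 < s ∧ θ = s ^ 2 :=
    ⟨√θ, Real.sqrt_pos.2 hθ, (Real.sq_sqrt hθ.le).symm⟩
  have hs1 : s ≤ 1 := by nlinarith
  rw [Real.sqrt_sq hs.le] at hlog ⊢
  obtain ⟨hsqrt, hsqrt'⟩ := sqrt_sq_mul_mem_Icc hs hlower hupper
  have hone : 1 ≤ s ^ 2 * (M + 1) := Real.one_le_sqrt.1 ((one_le_one_div hs hs1).trans hsqrt)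
  have hinv : 2 / ((M : ℝ) + 1) ≤ 2 * s :=
    calc 2 / ((M : ℝ) + 1) ≤ 2 / (1 / (s ^ 2) ^ 2) := by gcongr
      _ = 2 * (s ^ 3 * s) := by field_simp
      _ ≤ 2 * s := by
        gcongr
        exact mul_le_of_le_one_left hs.le (pow_le_one₀ hs.le hs1)
  calc _ ≤ _ := hbound (s ^ 2) n M hθ hθ1 hn hone
    _ ≤ C / (1 / s) + 2 * s + C * √(s ^ 2) + 4 * s ^ 2 * (2 / s + √(s ^ 2) + 8 / s) := by
        gcongr
    _ = 2 * C * s + 42 * s + 4 * (s ^ 2 * s) := by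
        rw [Real.sqrt_sq hs.le]
        field_simp
        ring
    _ ≤ (2 * C + 46) * s := by
        linarith [mul_le_of_le_one_left hs.le hθ1]

/-! ### The mean square of `hurwitzHalf` -/

/-- Only `F`, not `f`, has to behave at `0`: the integral of `f` may be improper there. -/
lemma riemannSum_mem_Icc_of_antitoneOn {f F : ℝ → ℝ} (hcont : ContinuousOn F (Set.Ici 0))
    (hderiv : ∀ t, 0 < t → HasDerivAt F (f t) t) (hf : AntitoneOn f (Set.Ioi 0)) {Q : ℕ}
    (hQ : 0 < Q) :
    1 / (Q : ℝ) * ∑ h ∈ range Q, f ((h + 1) / Q) ∈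
      Set.Icc (F (1 + 1 / Q) - F (1 / Q)) (F 1 - F 0) := by
  have hQ' : (0 : ℝ) < Q := Nat.cast_pos.2 hQ
  have hslope {s : ℝ} (hs : 0 ≤ s) :
      ∃ ξ ∈ Set.Ioo s (s + 1 / Q), F (s + 1 / Q) - F s = 1 / Q * f ξ := by
    have hst : s < s + 1 / Q := by simpa using hQ
    obtain ⟨ξ, hξ, heq⟩ := exists_hasDerivAt_eq_slope F f hst (hcont.mono fun u hu => hs.trans hu.1)
      fun u hu => hderiv u (hs.trans_lt hu.1)
    refine ⟨ξ, hξ, ?_⟩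
    rw [heq, add_sub_cancel_left]
    field_simp
  rw [mul_sum]
  constructor
  · have htel := sum_range_sub (fun h : ℕ => F ((h : ℝ) / Q + 1 / Q)) Q
    rw [div_self hQ'.ne', Nat.cast_zero, zero_div, zero_add] at htel
    rw [← htel]
    refine sum_le_sum fun h _ => ?_
    have hpos : (0 : ℝ) < (h + 1) / Q := by positivity
    obtain ⟨ξ, hξ, heq⟩ := hslope hpos.le
    rw [← add_div (h : ℝ), Nat.cast_succ, heq]
    gcongr
    exact hf hpos (hpos.trans hξ.1) hξ.1.le
  · have htel := sum_range_sub (fun h : ℕ => F ((h : ℝ) / Q)) Q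
    rw [div_self hQ'.ne', Nat.cast_zero, zero_div] at htel
    rw [← htel]
    refine sum_le_sum fun h _ => ?_
    have hpos : (0 : ℝ) ≤ h / Q := by positivity
    obtain ⟨ξ, hξ, heq⟩ := hslope hpos
    rw [Nat.cast_succ, add_div, heq]
    gcongr
    exact hf (hpos.trans_lt hξ.1) (hpos.trans_lt (hξ.1.trans hξ.2)) hξ.2.le

lemma tendsto_riemannSum_of_antitoneOn {f F : ℝ → ℝ} (hcont : ContinuousOn F (Set.Ici 0))
    (hderiv : ∀ t, 0 < t → HasDerivAt F (f t) t) (hf : AntitoneOn f (Set.Ioi 0)) :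
    Tendsto (fun Q : ℕ => 1 / (Q : ℝ) * ∑ h ∈ range Q, f ((h + 1) / Q)) atTop
      (𝓝 (F 1 - F 0)) := by
  have hinv : Tendsto (fun Q : ℕ => 1 / (Q : ℝ)) atTop (𝓝 0) := tendsto_one_div_atTop_nhds_zero_nat
  have hone : Tendsto (fun Q : ℕ => F (1 + 1 / (Q : ℝ))) atTop (𝓝 (F 1)) :=
    (hderiv 1 one_pos).continuousAt.tendsto.comp (by simpa using hinv.const_add (1 : ℝ))
  have hzero : Tendsto (fun Q : ℕ => F (1 / (Q : ℝ))) atTop (𝓝 (F 0)) :=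
    (hcont 0 Set.self_mem_Ici).tendsto.comp (tendsto_nhdsWithin_iff.2
      ⟨hinv, Eventually.of_forall fun Q => Set.mem_Ici.2 (by positivity)⟩)
  refine tendsto_of_tendsto_of_tendsto_of_le_of_le' (hone.sub hzero) tendsto_const_nhds ?_ ?_ <;>
    filter_upwards [eventually_gt_atTop 0] with Q hQ
  · exact (riemannSum_mem_Icc_of_antitoneOn hcont hderiv hf hQ).1
  · exact (riemannSum_mem_Icc_of_antitoneOn hcont hderiv hf hQ).2

lemma antitoneOn_one_div_sqrt_add_natCast (n : ℕ) :
    AntitoneOn (fun x : ℝ => 1 / √(x + n)) (Set.Ioi 0) := by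
  intro s hs t _ hst
  have : (0 : ℝ) < s := hs
  dsimp only
  gcongr

lemma hasDerivAt_sqrt_add_natCast (n : ℕ) {t : ℝ} (ht : 0 < t) :
    HasDerivAt (fun x : ℝ => √(x + n)) (1 / (2 * √(t + n))) t :=
  ((hasDerivAt_id t).add_const (n : ℝ)).sqrt (by simp only [id_eq]; positivity)

lemma tendsto_riemannSum_one_div_sqrt (n : ℕ) :
    Tendsto (fun Q : ℕ => 1 / (Q : ℝ) * ∑ h ∈ range Q, 1 / √((h + 1) / Q + n)) atTop
      (𝓝 (2 * √(n + 1) - 2 * √n)) := by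
  have hlim := tendsto_riemannSum_of_antitoneOn (F := fun x : ℝ => 2 * √(x + n)) (by fun_prop)
    (fun t ht => ?_) (antitoneOn_one_div_sqrt_add_natCast n)
  · simpa [add_comm] using hlim
  · exact ((hasDerivAt_sqrt_add_natCast n ht).const_mul 2).congr_deriv (by field_simp)

lemma tendsto_riemannSum_one_div_sqrt_mul {n m : ℕ} (hnm : 0 < n + m) :
    Tendsto (fun Q : ℕ => 1 / (Q : ℝ) * ∑ h ∈ range Q,
        1 / √((h + 1) / Q + n) * (1 / √((h + 1) / Q + m))) atTop
      (𝓝 (2 * Real.log (√(n + 1) + √(m + 1)) - 2 * Real.log (√n + √m))) := by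
  have hpos : ∀ s : ℝ, 0 ≤ s → √(s + n) + √(s + m) ≠ 0 := by
    intro s hs
    rcases Nat.add_pos_iff_pos_or_pos.1 hnm with h | h <;> positivity
  have hlim := tendsto_riemannSum_of_antitoneOn
    (f := fun x : ℝ => 1 / √(x + n) * (1 / √(x + m)))
    (F := fun x : ℝ => 2 * Real.log (√(x + n) + √(x + m))) ?_ (fun t ht => ?_) ?_
  · simpa [add_comm] using hlim
  · exact continuousOn_const.mul
      (ContinuousOn.log (by fun_prop) fun s hs => hpos s (Set.mem_Ici.1 hs))
  · refine ((((hasDerivAt_sqrt_add_natCast n ht).add (hasDerivAt_sqrt_add_natCast m ht)).log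
      (hpos t ht.le)).const_mul 2).congr_deriv ?_
    simp only [Pi.add_apply]
    have : 0 < √(t + n) := by positivity
    have : 0 < √(t + m) := by positivity
    field_simp
    ring
  · intro s hs t ht hst
    exact mul_le_mul (antitoneOn_one_div_sqrt_add_natCast n hs ht hst)
      (antitoneOn_one_div_sqrt_add_natCast m hs ht hst) (by positivity) (by positivity)

lemma abs_log_one_add_sub_le {x : ℝ} (h0 : 0 ≤ x) (h1 : x ≤ 1 / 2) :
    |Real.log (1 + x) - (x - x ^ 2 / 2)| ≤ 2 * x ^ 3 := by
  have hneg : |-x| = x := by rw [abs_neg, abs_of_nonneg h0]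
  have htaylor := Real.abs_log_sub_add_sum_range_le (x := -x) (by rw [hneg]; linarith) 2
  have hsum : ∑ i ∈ range 2, (-x) ^ (i + 1) / ((i : ℝ) + 1) + Real.log (1 - -x) =
      Real.log (1 + x) - (x - x ^ 2 / 2) := by
    rw [sum_range_succ, sum_range_one, sub_neg_eq_add]
    push_cast
    ring
  rw [hsum, hneg, two_add_one_eq_three] at htaylor
  refine htaylor.trans ?_
  rw [div_le_iff₀ (by linarith)]
  nlinarith [mul_nonneg (pow_nonneg h0 3) (sub_nonneg.2 h1)]

lemma abs_sum_log_sqrt_add_sqrt_sub_trapezoid_le {N : ℕ} (hN : 0 < N) :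
    |∑ d ∈ range N, Real.log (√N + √(d + 1)) -
        (N / 2 - ((1 - N) * Real.log (√N + 1) - 1 / 2 + √N)) -
        (Real.log (√N + 1) + Real.log (√N + √N)) / 2| ≤ 1 / √N := by
  have hN' : (0 : ℝ) < N := Nat.cast_pos.2 hN
  have hR : 0 < √(N : ℝ) := Real.sqrt_pos.2 hN'
  have hsucc : (1 : ℝ) + (N - 1 : ℕ) = N := by rw [Nat.cast_pred hN]; ring
  have hlog {t : ℝ} (ht : 0 < t) : HasDerivAt (fun t => Real.log (√N + √t))
      (1 / (2 * √t) / (√N + √t)) t :=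
    ((Real.hasDerivAt_sqrt ht.ne').const_add _).log (by positivity)
  have hprim {t : ℝ} (ht : 0 < t) : HasDerivAt
      (fun t => (t - N) * Real.log (√N + √t) - t / 2 + √N * √t) (Real.log (√N + √t)) t := by
    refine (((((hasDerivAt_id t).sub_const (N : ℝ)).mul (hlog ht)).sub
      ((hasDerivAt_id t).div_const 2)).add
      ((Real.hasDerivAt_sqrt ht.ne').const_mul √(N : ℝ))).congr_deriv ?_
    simp only [id_eq]
    have : 0 < √t := Real.sqrt_pos.2 ht
    field_simp
    linear_combination Real.sq_sqrt hN'.le - Real.sq_sqrt ht.le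
  have htrap := abs_sum_sub_trapezoid_le (W := fun t => -(1 / (2 * √t) / (√N + √t))) (b := 1)
    (N - 1) (fun t ht => hprim (one_pos.trans_le ht.1)) (fun t ht => hlog (one_pos.trans_le ht.1))
    (fun s hs t _ hst => ?_)
  · rw [hsucc, Nat.sub_add_cancel hN] at htrap
    simp only [add_comm (1 : ℝ) (Nat.cast _), Real.sqrt_one, sub_self, zero_mul,
      Real.mul_self_sqrt hN'.le] at htrap
    have hfin : 1 / (2 * 1) / (√(N : ℝ) + 1) ≤ 1 / √N := by
      rw [div_div]
      gcongr
      linarith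
    have : 0 < 1 / (2 * √(N : ℝ)) / (√N + √N) := by positivity
    refine (le_of_eq ?_).trans (htrap.trans ((by linarith : _ ≤ _).trans hfin))
    ring_nf
  · have hs0 : 0 < s := one_pos.trans_le hs.1
    have hmono : 1 / (2 * √t) / (√N + √t) ≤ 1 / (2 * √s) / (√N + √s) := by gcongr
    rw [abs_of_nonneg (sub_nonneg.2 hmono)]
    exact le_of_eq (by ring)

lemma abs_sum_log_sqrt_add_sqrt_sub_le {N : ℕ} (hN : 4 ≤ N) :
    |∑ d ∈ range N, Real.log (√N + √(d + 1)) - (N * Real.log √N + N / 2 + Real.log 2 / 2)| ≤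
      4 * (1 / √N) := by
  have hN' : (4 : ℝ) ≤ N := by exact_mod_cast hN
  have hR : 2 ≤ √(N : ℝ) := Real.le_sqrt_of_sq_le (by linarith)
  have hNsq : (N : ℝ) = √N ^ 2 := (Real.sq_sqrt (by linarith)).symm
  have htrap := abs_sum_log_sqrt_add_sqrt_sub_trapezoid_le (by omega : 0 < N)
  set x : ℝ := 1 / √N with hx
  have hRx : √(N : ℝ) * x = 1 := by rw [hx]; field_simp
  have hx0 : 0 < x := by positivity
  have hx1 : x ≤ 1 / 2 := by rw [hx]; gcongr
  have hlog : Real.log (√N + 1) = Real.log √N + Real.log (1 + x) := by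
    rw [← Real.log_mul (by positivity) (by positivity), mul_add, hRx, mul_one]
  have hlog2 : Real.log (√(N : ℝ) + √N) = Real.log 2 + Real.log √N := by
    rw [← two_mul, Real.log_mul two_ne_zero (by positivity)]
  have hmain : |(N - 1 / 2) * Real.log (1 + x) - (√N - 1 / 2)| ≤ 3 * x := by
    have hexp : (N - 1 / 2) * Real.log (1 + x) - (√N - 1 / 2) =
        (N - 1 / 2) * (Real.log (1 + x) - (x - x ^ 2 / 2)) - (x - x ^ 2 / 2) / 2 := by
      linear_combination (x - x ^ 2 / 2) * hNsq + (√N - (√N * x + 1) / 2) * hRx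
    have hcubic : |(N - 1 / 2) * (Real.log (1 + x) - (x - x ^ 2 / 2))| ≤ 2 * x := by
      rw [abs_mul, abs_of_nonneg (by linarith)]
      calc (N - 1 / 2) * |Real.log (1 + x) - (x - x ^ 2 / 2)| ≤ N * (2 * x ^ 3) := by
            gcongr
            · linarith
            · exact abs_log_one_add_sub_le hx0.le hx1
        _ = 2 * x := by
            rw [hNsq]
            linear_combination 2 * x * (√N * x + 1) * hRx
    rw [hexp]
    rw [abs_le] at hcubic ⊢
    constructor <;> nlinarith
  rw [hlog, hlog2] at htrap
  rw [abs_le] at *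
  constructor <;> linarith

lemma sum_sum_succ_sub_of_symm {R : Type*} [CommRing R] {F : ℕ → ℕ → R}
    (hF : ∀ n m, F n m = F m n) (N : ℕ) :
    ∑ n ∈ range N, ∑ m ∈ range N, (F (n + 1) (m + 1) - F n m) =
      2 * ∑ m ∈ range N, F N (m + 1) - F N N + 2 * F N 0 - 2 * ∑ m ∈ range N, F 0 (m + 1) -
        F 0 0 := by
  have hlast : ∑ n ∈ range (N + 1), ∑ m ∈ range (N + 1), F n m =
      ∑ n ∈ range N, ∑ m ∈ range N, F n m + ∑ m ∈ range N, F N m + ∑ m ∈ range N, F N m +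
        F N N := by
    simp only [sum_range_succ, sum_add_distrib, fun n => hF n N]
    ring
  have hfirst : ∑ n ∈ range (N + 1), ∑ m ∈ range (N + 1), F n m =
      ∑ n ∈ range N, ∑ m ∈ range N, F (n + 1) (m + 1) + ∑ m ∈ range N, F 0 (m + 1) +
        ∑ m ∈ range N, F 0 (m + 1) + F 0 0 := by
    simp only [sum_range_succ', sum_add_distrib, fun n => hF (n + 1) 0]
    ring
  have hrow := (sum_range_succ (F N) N).symm.trans (sum_range_succ' (F N) N)
  simp only [sum_sub_distrib]
  linear_combination hlast - hfirst + 2 * hrow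

/-- The integral over `[0, 1]` of `1 / (√(x + n) * √(x + m))` for `(n, m) ≠ (0, 0)`. -/
noncomputable def pairIntegral (n m : ℕ) : ℝ :=
  2 * Real.log (√(n + 1) + √(m + 1)) - 2 * Real.log (√n + √m)

/-- The limit of `1 / Q * ∑ h ∈ range Q, truncatedHurwitz N ((h + 1) / Q) ^ 2 - log Q - γ`. The term
`pairIntegral 0 0 = 2 * log 2`, coming from `log 0 = 0`, has no meaning and is subtracted. -/
noncomputable def truncatedMeanSquare (N : ℕ) : ℝ :=
  ∑ n ∈ range N, ∑ m ∈ range N, pairIntegral n m - 2 * Real.log 2 - 4 * N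

lemma truncatedMeanSquare_eq {N : ℕ} (hN : 0 < N) :
    truncatedMeanSquare N = 4 * ∑ d ∈ range N, Real.log (√N + √(d + 1)) - 4 * Real.log 2 +
      Real.log N - 2 * Real.log N.factorial - 4 * N := by
  have hR : 0 < √(N : ℝ) := Real.sqrt_pos.2 (Nat.cast_pos.2 hN)
  have htel := sum_sum_succ_sub_of_symm (F := fun n m : ℕ => Real.log (√n + √m))
    (fun n m => by rw [add_comm]) N
  have hdiag : Real.log (√(N : ℝ) + √N) = Real.log 2 + Real.log √N := by
    rw [← two_mul, Real.log_mul two_ne_zero hR.ne']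
  have hfact : ∑ m ∈ range N, Real.log √((m + 1 : ℕ) : ℝ) = Real.log N.factorial / 2 := by
    rw [← prod_range_add_one_eq_factorial, Nat.cast_prod, Real.log_prod
      fun m _ => by positivity, sum_div]
    exact sum_congr rfl fun m _ => Real.log_sqrt (Nat.cast_nonneg _)
  simp only [hdiag, Nat.cast_zero, Real.sqrt_zero, add_zero, zero_add, Real.log_zero, hfact] at htel
  simp only [truncatedMeanSquare, pairIntegral, ← mul_sub, ← mul_sum, ← Nat.cast_succ, htel]
  rw [Real.log_sqrt (Nat.cast_nonneg N)]
  ring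

lemma tendsto_truncatedMeanSquare :
    Tendsto truncatedMeanSquare atTop (𝓝 (-Real.log (8 * π))) := by
  have hstirling := (Real.continuousAt_log (Real.sqrt_pos.2 Real.pi_pos).ne').tendsto.comp
    Stirling.tendsto_stirlingSeq_sqrt_pi
  have hsum : Tendsto (fun N : ℕ => ∑ d ∈ range N, Real.log (√N + √(d + 1)) -
      (N * Real.log √N + N / 2 + Real.log 2 / 2)) atTop (𝓝 0) := by
    refine squeeze_zero_norm' ?_ (by simpa using tendsto_inv_sqrt_natCast.const_mul 4)
    filter_upwards [eventually_ge_atTop 4] with N hN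
    rw [← one_div]
    exact abs_sum_log_sqrt_add_sqrt_sub_le hN
  have hlim := ((hsum.const_mul 4).sub (hstirling.const_mul 2)).sub_const (3 * Real.log 2)
  have hconst : 4 * 0 - 2 * Real.log √π - 3 * Real.log 2 = -Real.log (8 * π) := by
    have : (8 : ℝ) = 2 ^ 3 := by norm_num
    rw [Real.log_sqrt Real.pi_pos.le, Real.log_mul (by norm_num) Real.pi_ne_zero, this,
      Real.log_pow]
    push_cast
    ring
  rw [hconst] at hlim
  refine hlim.congr' ?_
  filter_upwards [eventually_gt_atTop 0] with N hN
  have hN' : (N : ℝ) ≠ 0 := Nat.cast_ne_zero.2 hN.ne'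
  simp only [Function.comp, truncatedMeanSquare_eq hN, Stirling.log_stirlingSeq_formula,
    Real.log_sqrt (Nat.cast_nonneg N), Real.log_mul two_ne_zero hN',
    Real.log_div hN' (Real.exp_ne_zero _), Real.log_exp]
  ring

/-- The truncation of the regularised series for `ζ(1/2, x)` after `N` terms. -/
noncomputable def truncatedHurwitz (N : ℕ) (x : ℝ) : ℝ := ∑ n ∈ range N, 1 / √(x + n) - 2 * √N

lemma sum_truncatedHurwitz_sq (N Q : ℕ) (x : ℕ → ℝ) :
    ∑ h ∈ range Q, truncatedHurwitz N (x h) ^ 2 =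
      ∑ n ∈ range N, ∑ m ∈ range N, ∑ h ∈ range Q, 1 / √(x h + n) * (1 / √(x h + m)) -
        4 * √N * ∑ n ∈ range N, ∑ h ∈ range Q, 1 / √(x h + n) + Q * (4 * N) := by
  have hsq (y : ℝ) : truncatedHurwitz N y ^ 2 =
      ∑ n ∈ range N, ∑ m ∈ range N, 1 / √(y + n) * (1 / √(y + m)) -
        4 * √N * ∑ n ∈ range N, 1 / √(y + n) + 4 * N := by
    rw [← sum_mul_sum, truncatedHurwitz]
    linear_combination 4 * Real.sq_sqrt (Nat.cast_nonneg N)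
  simp only [hsq, sum_add_distrib, sum_sub_distrib, ← mul_sum _ _ (4 * √(N : ℝ)), sum_const,
    card_range, nsmul_eq_mul]
  rw [sum_comm, sum_comm (s := range Q)]
  simp only [sum_comm (s := range Q)]

lemma tendsto_riemannSum_one_div_sqrt_mul_sub (n m : ℕ) :
    Tendsto (fun Q : ℕ => 1 / (Q : ℝ) * ∑ h ∈ range Q,
        1 / √((h + 1) / Q + n) * (1 / √((h + 1) / Q + m)) -
          if n = 0 ∧ m = 0 then Real.log Q else 0) atTop
      (𝓝 (pairIntegral n m +
        if n = 0 ∧ m = 0 then Real.eulerMascheroniConstant - 2 * Real.log 2 else 0)) := by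
  by_cases hnm : n = 0 ∧ m = 0
  · obtain ⟨rfl, rfl⟩ := hnm
    have hlim : pairIntegral 0 0 + (Real.eulerMascheroniConstant - 2 * Real.log 2) =
        Real.eulerMascheroniConstant := by
      norm_num [pairIntegral]
    simp only [and_self, if_true, hlim]
    refine Real.tendsto_harmonic_sub_log.congr' ?_
    filter_upwards [eventually_gt_atTop 0] with Q hQ
    have : (0 : ℝ) < Q := Nat.cast_pos.2 hQ
    rw [harmonic_eq_sum_one_div, mul_sum, sub_left_inj]
    refine sum_congr rfl fun h _ => ?_
    rw [Nat.cast_zero, add_zero, div_mul_div_comm, Real.mul_self_sqrt (by positivity)]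
    field_simp
  · simp only [if_neg hnm, sub_zero, add_zero]
    exact tendsto_riemannSum_one_div_sqrt_mul (by omega)

lemma tendsto_meanSquare_truncatedHurwitz_sub_log {N : ℕ} (hN : 0 < N) :
    Tendsto (fun Q : ℕ => 1 / (Q : ℝ) * ∑ h ∈ range Q, truncatedHurwitz N ((h + 1) / Q) ^ 2 -
        Real.log Q) atTop (𝓝 (Real.eulerMascheroniConstant + truncatedMeanSquare N)) := by
  have horigin (c : ℝ) :
      ∑ n ∈ range N, ∑ m ∈ range N, (if n = 0 ∧ m = 0 then c else 0) = c := by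
    simp [ite_and, hN]
  have hlinear := (tendsto_finsetSum (range N)
    fun n _ => tendsto_riemannSum_one_div_sqrt n).const_mul (4 * √(N : ℝ))
  have hpairs := tendsto_finsetSum (range N) fun n _ => tendsto_finsetSum (range N)
    fun m _ => tendsto_riemannSum_one_div_sqrt_mul_sub n m
  simp only [sum_sub_distrib, sum_add_distrib, horigin] at hpairs
  have htel : ∑ n ∈ range N, 2 * √((n : ℝ) + 1) - ∑ n ∈ range N, 2 * √(n : ℝ) = 2 * √N := by
    simpa using sum_range_sub (fun n : ℕ => 2 * √(n : ℝ)) N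
  have hlim := (hpairs.sub hlinear).add_const (4 * (N : ℝ))
  have hconst : ∑ n ∈ range N, ∑ m ∈ range N, pairIntegral n m +
      (Real.eulerMascheroniConstant - 2 * Real.log 2) -
      4 * √N * ∑ n ∈ range N, (2 * √(n + 1) - 2 * √n) + 4 * N =
      Real.eulerMascheroniConstant + truncatedMeanSquare N := by
    rw [sum_sub_distrib, htel, truncatedMeanSquare]
    linear_combination (-8) * Real.mul_self_sqrt (Nat.cast_nonneg N)
  rw [hconst] at hlim
  refine hlim.congr' ?_
  filter_upwards [eventually_gt_atTop 0] with Q hQ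
  have hQ' : (Q : ℝ) ≠ 0 := Nat.cast_ne_zero.2 hQ.ne'
  rw [sum_truncatedHurwitz_sq]
  simp only [← mul_sum]
  field_simp
  ring

lemma abs_hurwitzHalf_sub_truncatedHurwitz_le {N : ℕ} (hN : 0 < N) {x : ℝ} (h0 : 0 < x)
    (h1 : x ≤ 1) : |hurwitzHalf x - truncatedHurwitz N x| ≤ 4 / √N := by
  have hN' : (1 : ℝ) ≤ N := Nat.one_le_cast.2 hN
  have hR : 1 ≤ √(N : ℝ) := Real.one_le_sqrt.2 hN'
  have hle : √(N : ℝ) ≤ √(x + N) := Real.sqrt_le_sqrt (by linarith)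
  have hasym := abs_hurwitzHalf_asymptotic_le (y := x + N) (by linarith)
  have hsqrt : 2 * (√(x + N) - √N) ≤ 2 * (1 / √N) := by
    gcongr
    rw [le_div_iff₀ (by linarith)]
    nlinarith [Real.mul_self_sqrt (show 0 ≤ x + N by linarith),
      Real.mul_self_sqrt (show (0 : ℝ) ≤ N by linarith)]
  have hfirst : 1 / (2 * √(x + N)) ≤ 1 / √N := by gcongr; linarith
  have hsecond : 1 / ((x + N) * √(x + N)) ≤ 1 / √N := by gcongr; nlinarith
  have hfirst0 : 0 < 1 / (2 * √(x + N)) := by positivity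
  have hfour : 4 / √(N : ℝ) = 4 * (1 / √N) := by ring
  rw [hurwitzHalf_eq_sum_add h0 N, truncatedHurwitz, hfour]
  rw [abs_le] at *
  constructor <;> linarith

lemma abs_hurwitzHalf_le_one_div_sqrt_add {x : ℝ} (h0 : 0 < x) (h1 : x ≤ 1) :
    |hurwitzHalf x| ≤ 1 / √x + 6 := by
  rw [hurwitzHalf_eq_add h0]
  calc |1 / √x + hurwitzHalf (x + 1)| ≤ |1 / √x| + |hurwitzHalf (x + 1)| := abs_add_le _ _
    _ ≤ 1 / √x + 6 := by
      rw [abs_of_pos (by positivity)]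
      gcongr
      exact abs_hurwitzHalf_le_six (by linarith) (by linarith)

lemma riemannSum_one_div_sqrt_le_two {Q : ℕ} (hQ : 0 < Q) :
    1 / (Q : ℝ) * ∑ h ∈ range Q, 1 / √((h + 1) / Q) ≤ 2 := by
  have hle := (riemannSum_mem_Icc_of_antitoneOn (F := fun x : ℝ => 2 * √(x + (0 : ℕ)))
    (by fun_prop)
    (fun t ht => ((hasDerivAt_sqrt_add_natCast 0 ht).const_mul 2).congr_deriv (by field_simp))
    (antitoneOn_one_div_sqrt_add_natCast 0) hQ).2
  simpa using hle

lemma abs_meanSquare_hurwitzHalf_sub_le {N Q : ℕ} (hN : 0 < N) (hQ : 0 < Q) :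
    |1 / (Q : ℝ) * ∑ h ∈ range Q, hurwitzHalf ((h + 1) / Q) ^ 2 -
      1 / (Q : ℝ) * ∑ h ∈ range Q, truncatedHurwitz N ((h + 1) / Q) ^ 2| ≤ 80 * (1 / √N) := by
  have hQ' : (0 : ℝ) < Q := Nat.cast_pos.2 hQ
  have hfour : 4 / √(N : ℝ) ≤ 4 :=
    div_le_self (by norm_num) (Real.one_le_sqrt.2 (Nat.one_le_cast.2 hN))
  have hterm : ∀ h ∈ range Q,
      |hurwitzHalf ((h + 1) / Q) ^ 2 - truncatedHurwitz N ((h + 1) / Q) ^ 2| ≤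
        4 / √N * (2 * (1 / √((h + 1) / Q)) + 16) := by
    intro h hh
    have hle : ((h : ℝ) + 1) / Q ≤ 1 := by
      rw [div_le_one hQ']
      exact_mod_cast mem_range.1 hh
    have hsize := abs_hurwitzHalf_le_one_div_sqrt_add (by positivity) hle
    have hdiff := abs_hurwitzHalf_sub_truncatedHurwitz_le hN (by positivity) hle
    set u := hurwitzHalf ((h + 1) / Q)
    set v := truncatedHurwitz N ((h + 1) / Q)
    have hsum : |2 * u - (u - v)| ≤ 2 * |u| + |u - v| := by
      refine (abs_sub _ _).trans ?_
      rw [abs_mul, abs_two]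
    rw [show u ^ 2 - v ^ 2 = (u - v) * (2 * u - (u - v)) by ring, abs_mul]
    gcongr
    linarith
  rw [← mul_sub, ← sum_sub_distrib, abs_mul, abs_of_pos (by positivity)]
  calc _ ≤ 1 / (Q : ℝ) * ∑ h ∈ range Q, 4 / √N * (2 * (1 / √((h + 1) / Q)) + 16) := by
        gcongr
        exact (abs_sum_le_sum_abs _ _).trans (sum_le_sum hterm)
    _ = 4 / √N * (2 * (1 / (Q : ℝ) * ∑ h ∈ range Q, 1 / √((h + 1) / Q)) + 16) := by
        simp only [← mul_sum, sum_add_distrib, sum_const, card_range, nsmul_eq_mul]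
        field_simp
    _ ≤ 4 / √N * (2 * 2 + 16) := by gcongr; exact riemannSum_one_div_sqrt_le_two hQ
    _ = 80 * (1 / √N) := by ring

lemma tendsto_meanSquare_hurwitzHalf_sub_log :
    Tendsto (fun Q : ℕ => 1 / (Q : ℝ) * ∑ h ∈ range Q, hurwitzHalf ((h + 1) / Q) ^ 2 - Real.log Q)
      atTop (𝓝 (Real.eulerMascheroniConstant - Real.log (8 * π))) := by
  have herror := tendsto_inv_sqrt_natCast.const_mul 80
  rw [mul_zero] at herror
  refine Metric.tendsto_atTop.2 fun ε hε => ?_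
  have hε3 : 0 < ε / 3 := by positivity
  obtain ⟨N, hclose, hsmall, hN⟩ :=
    ((tendsto_truncatedMeanSquare.eventually (Metric.ball_mem_nhds _ hε3)).and
      ((herror.eventually (Metric.ball_mem_nhds _ hε3)).and (eventually_gt_atTop 0))).exists
  obtain ⟨Q₀, hQ₀⟩ := Metric.tendsto_atTop.1
    (tendsto_meanSquare_truncatedHurwitz_sub_log hN) (ε / 3) hε3
  refine ⟨max Q₀ 1, fun Q hQ => ?_⟩
  have htrunc := abs_meanSquare_hurwitzHalf_sub_le hN (le_of_max_le_right hQ)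
  have hlimit := hQ₀ Q (le_of_max_le_left hQ)
  simp only [Real.dist_eq, ← one_div] at *
  rw [abs_le] at htrunc
  rw [abs_lt] at *
  constructor <;> linarith

/-! ### Size of the reciprocity defect -/

lemma hurwitzCorrelation_one_right (a : ℤ) : hurwitzCorrelation a 1 = zetaHalf ^ 2 := by
  have hint := periodicHurwitz_intCast a
  have hone := periodicHurwitz_intCast 1
  rw [Int.cast_one] at hone
  simp only [hurwitzCorrelation, sum_range_one, Nat.cast_zero, Nat.cast_one, zero_add, div_one,
    mul_one, Real.sqrt_one, hone, hint]
  ring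

lemma one_div_mul_reciprocityError_one_div {Q : ℕ} (hQ : 0 < Q) :
    1 / (Q : ℝ) * reciprocityError (1 / Q) =
      1 / Q * ∑ h ∈ range Q, hurwitzHalf ((h + 1) / Q) ^ 2 - 1 / Q * (π / 2) := by
  have hrecip := hurwitzCorrelation_sub_hurwitzCorrelation_neg one_pos hQ (Nat.coprime_one_left Q)
  have hsum : hurwitzCorrelation 1 Q = (∑ h ∈ range Q, hurwitzHalf ((h + 1) / Q) ^ 2) / √Q := by
    refine congrArg (· / √(Q : ℝ)) (sum_congr rfl fun h hh => ?_)
    rw [Int.cast_one, one_mul, periodicHurwitz_succ_div hh, sq]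
  rw [hurwitzCorrelation_one_right, Nat.cast_one, Nat.cast_one, hsum,
    Real.sqrt_div zero_le_one, Real.sqrt_one] at hrecip
  have hQ' : (0 : ℝ) < Q := Nat.cast_pos.2 hQ
  have hsq : √(Q : ℝ) ^ 2 = Q := Real.sq_sqrt hQ'.le
  have : 0 < √(Q : ℝ) := Real.sqrt_pos.2 hQ'
  rw [← hsq] at hrecip ⊢
  field_simp at hrecip ⊢
  rw [Real.sqrt_sq (by positivity)] at hrecip
  linear_combination -hrecip

lemma tendsto_one_div_mul_reciprocityError_sub_log :
    Tendsto (fun Q : ℕ => 1 / (Q : ℝ) * reciprocityError (1 / Q) - Real.log Q) atTop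
      (𝓝 (Real.eulerMascheroniConstant - Real.log (8 * π))) := by
  have hpi := (tendsto_one_div_atTop_nhds_zero_nat (𝕜 := ℝ)).mul_const (π / 2)
  have hlim := tendsto_meanSquare_hurwitzHalf_sub_log.sub hpi
  rw [zero_mul, sub_zero] at hlim
  refine hlim.congr' ?_
  filter_upwards [eventually_gt_atTop 0] with Q hQ
  rw [one_div_mul_reciprocityError_one_div hQ]
  ring

lemma exists_abs_mul_reciprocityError_add_log_sub_le :
    ∃ C : ℝ, ∀ a q : ℕ, 0 < a → a ≤ q →
      |(a : ℝ) / q * reciprocityError (a / q) + Real.log (a / q) -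
        (Real.eulerMascheroniConstant - Real.log (8 * π))| ≤ C * √(a / q) := by
  obtain ⟨C, hscale⟩ := exists_abs_mul_reciprocityError_sub_le
  refine ⟨C, fun a q ha haq => ?_⟩
  have hq : 0 < q := ha.trans_le haq
  have hθ1 : (a : ℝ) / q ≤ 1 := div_le_one_of_le₀ (Nat.cast_le.2 haq) q.cast_nonneg
  have hlim := ((tendsto_one_div_mul_reciprocityError_sub_log.comp
    (tendsto_mul_atTop_nat hq)).const_sub
      ((a : ℝ) / q * reciprocityError (a / q) + Real.log (a / q))).abs
  refine le_of_tendsto hlim ?_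
  filter_upwards [eventually_gt_atTop 0] with l hl
  have hbound := hscale (a / q) (a * l) (by positivity) hθ1 (Nat.mul_pos ha hl)
  have hdiv : (a : ℝ) / q / (a * l : ℕ) = 1 / (q * l : ℕ) := by
    push_cast
    field_simp
  have hlog : Real.log (a * l : ℕ) = Real.log ((a : ℝ) / q) + Real.log (q * l : ℕ) := by
    rw [← Real.log_mul (by positivity) (by positivity)]
    congr 1
    push_cast
    field_simp
  rw [hdiv, hlog] at hbound
  refine le_of_eq_of_le (congrArg abs ?_) hbound
  simp only [Function.comp_apply]
  ring

lemma exists_abs_hurwitzCorrelation_sub_neg_sub_log_le :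
    ∃ C : ℝ, ∀ a q : ℕ, 0 < a → a ≤ q → Nat.Coprime a q →
      |hurwitzCorrelation a q - hurwitzCorrelation (-(q : ℤ)) a -
        √(q / a) * (Real.log (q / a) + Real.eulerMascheroniConstant - Real.log (8 * π))| ≤ C := by
  obtain ⟨C, hbound⟩ := exists_abs_mul_reciprocityError_add_log_sub_le
  refine ⟨C + π / 2 + zetaHalf ^ 2, fun a q ha haq hc => ?_⟩
  have hq : 0 < q := ha.trans_le haq
  have hbound := hbound a q ha haq
  rw [hurwitzCorrelation_sub_hurwitzCorrelation_neg ha hq hc, ← inv_div (a : ℝ), Real.log_inv,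
    Real.sqrt_inv]
  have hθ1 : (a : ℝ) / q ≤ 1 := div_le_one_of_le₀ (Nat.cast_le.2 haq) q.cast_nonneg
  have hθ : 0 < (a : ℝ) / q := by positivity
  generalize (a : ℝ) / q = θ at *
  have hs : 0 < √θ := Real.sqrt_pos.2 hθ
  set δ := θ * reciprocityError θ + Real.log θ -
    (Real.eulerMascheroniConstant - Real.log (8 * π)) with hδ
  calc _ = |(√θ)⁻¹ * δ + √θ * (π / 2) - zetaHalf ^ 2| := by
        congr 1
        rw [hδ]
        linear_combination -reciprocityError θ * inv_mul_eq_div (√θ) θ -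
          reciprocityError θ * Real.div_sqrt (x := θ)
    _ ≤ |(√θ)⁻¹ * δ| + |√θ * (π / 2)| + |zetaHalf ^ 2| :=
        (abs_sub _ _).trans (add_le_add_left (abs_add_le _ _) _)
    _ ≤ C + π / 2 + zetaHalf ^ 2 := by
        rw [abs_mul, abs_of_pos (inv_pos.2 hs),
          abs_of_pos (by positivity : 0 < √θ * (π / 2)), abs_sq]
        gcongr
        · exact (inv_mul_le_iff₀ hs).2 (by linarith)
        · exact mul_le_of_le_one_left (by positivity) (Real.sqrt_le_one.2 hθ1)

lemma exists_abs_hurwitzCorrelation_sub_neg_sub_pi_le :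
    ∃ C : ℝ, ∀ a q : ℕ, 0 < q → q ≤ a → Nat.Coprime a q →
      |hurwitzCorrelation a q - hurwitzCorrelation (-(q : ℤ)) a - √(a / q) * (π / 2)| ≤ C := by
  obtain ⟨C, hbound⟩ := exists_abs_sqrt_mul_reciprocityError_le
  refine ⟨C + zetaHalf ^ 2, fun a q hq hqa hc => ?_⟩
  have hθ : 1 ≤ (a : ℝ) / q := (one_le_div (Nat.cast_pos.2 hq)).2 (Nat.cast_le.2 hqa)
  rw [hurwitzCorrelation_sub_hurwitzCorrelation_neg (hq.trans_le hqa) hq hc]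
  calc _ = |√(a / q) * reciprocityError (a / q) - zetaHalf ^ 2| := by
        congr 1
        ring
    _ ≤ |√(a / q) * reciprocityError (a / q)| + |zetaHalf ^ 2| := abs_sub _ _
    _ ≤ C + zetaHalf ^ 2 := by
        rw [abs_sq]
        gcongr
        exact hbound _ hθ

/-! ### The Euclidean algorithm -/

/-- The part of `hurwitzCorrelation a q` contributed by the characters of parity `ε = ±1`. -/
noncomputable def parityCorrelation (ε : ℝ) (a : ℤ) (q : ℕ) : ℝ :=
  (hurwitzCorrelation a q + ε * hurwitzCorrelation (-a) q) / 2

/-- The contribution of a partial quotient `x` to the moment over the characters of parity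
`ε = ±1`. It is defined for real `x` in order to compare `q / a` with its integer part. -/
noncomputable def momentWeight (ε x : ℝ) : ℝ :=
  √x * (Real.log x + Real.eulerMascheroniConstant - Real.log (8 * π) - ε * π / 2)

lemma exists_abs_parityCorrelation_sub_mul_sub_momentWeight_le :
    ∃ C : ℝ, ∀ ε : ℝ, |ε| = 1 → ∀ a q : ℕ, 0 < a → a ≤ q → Nat.Coprime a q →
      |parityCorrelation ε a q - ε * parityCorrelation ε q a - momentWeight ε (q / a) / 2| ≤ C := by
  obtain ⟨C₁, hlog⟩ := exists_abs_hurwitzCorrelation_sub_neg_sub_log_le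
  obtain ⟨C₂, hpi⟩ := exists_abs_hurwitzCorrelation_sub_neg_sub_pi_le
  refine ⟨(C₁ + C₂) / 2, fun ε hε a q ha haq hc => ?_⟩
  have hε2 : ε ^ 2 = 1 := by rw [← sq_abs, hε, one_pow]
  have hlog := hlog a q ha haq hc
  have hpi := hpi q a ha haq hc.symm
  set u := hurwitzCorrelation a q - hurwitzCorrelation (-(q : ℤ)) a -
    √(q / a) * (Real.log (q / a) + Real.eulerMascheroniConstant - Real.log (8 * π)) with hu
  set v := hurwitzCorrelation q a - hurwitzCorrelation (-(a : ℤ)) q - √(q / a) * (π / 2) with hv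
  calc _ = |(u - ε * v) / 2| := by
        congr 1
        rw [hu, hv, parityCorrelation, parityCorrelation, momentWeight]
        linear_combination -hurwitzCorrelation (-(q : ℤ)) a / 2 * hε2
    _ ≤ (|u| + |ε * v|) / 2 := by
        rw [abs_div, abs_two]
        gcongr
        exact abs_sub _ _
    _ ≤ (C₁ + C₂) / 2 := by
        rw [abs_mul, hε, one_mul]
        gcongr

lemma hurwitzCorrelation_congr {q : ℕ} [NeZero q] {a b : ℤ} (hab : (a : ZMod q) = b) :
    hurwitzCorrelation a q = hurwitzCorrelation b q := by
  rw [hurwitzCorrelation_eq_sum_zmod, hurwitzCorrelation_eq_sum_zmod, hab]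

lemma parityCorrelation_natCast_mod (ε : ℝ) (a q : ℕ) [NeZero q] :
    parityCorrelation ε (a % q : ℕ) q = parityCorrelation ε a q := by
  rw [parityCorrelation, parityCorrelation,
    hurwitzCorrelation_congr (a := (a % q : ℕ)) (b := a) (by simp),
    hurwitzCorrelation_congr (a := -(a % q : ℕ)) (b := -a) (by simp)]

lemma abs_sqrt_mul_log_add_sub_le (k : ℝ) {b x : ℝ} (hb : 1 ≤ b) (hbx : b ≤ x) (hx : x ≤ b + 1) :
    |√x * (Real.log x + k) - √b * (Real.log b + k)| ≤ 4 + |k| := by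
  have hb0 : 0 < b := one_pos.trans_le hb
  have hx0 : 0 < x := hb0.trans_le hbx
  have hsb : 1 ≤ √b := Real.one_le_sqrt.2 hb
  have hsx : √b ≤ √x := Real.sqrt_le_sqrt hbx
  have hsqb := Real.mul_self_sqrt hb0.le
  have hsqx := Real.mul_self_sqrt hx0.le
  have hsqrt : (√x - √b) * √b ≤ 1 := by nlinarith
  have hsqrt_one : √x - √b ≤ 1 := by nlinarith
  have hlog_sqrt : Real.log b ≤ 2 * √b := by
    have := Real.log_le_sub_one_of_pos (zero_lt_one.trans_le hsb)
    rw [Real.log_sqrt hb0.le] at this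
    linarith
  have hlog_sub : Real.log x - Real.log b ≤ 1 / b := by
    rw [← Real.log_div hx0.ne' hb0.ne']
    calc Real.log (x / b) ≤ x / b - 1 := Real.log_le_sub_one_of_pos (by positivity)
      _ = (x - b) / b := by rw [sub_div, div_self hb0.ne']
      _ ≤ 1 / b := by
          gcongr
          linarith
  have hlog_nonneg : 0 ≤ Real.log x - Real.log b := sub_nonneg.2 (Real.log_le_log hb0 hbx)
  calc _ = |√x * (Real.log x - Real.log b) + (√x - √b) * Real.log b + (√x - √b) * k| := by
        congr 1
        ring
    _ ≤ |√x * (Real.log x - Real.log b)| + |(√x - √b) * Real.log b| + |(√x - √b) * k| :=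
        abs_add_three _ _ _
    _ = √x * (Real.log x - Real.log b) + (√x - √b) * Real.log b + (√x - √b) * |k| := by
        rw [abs_mul _ k, abs_of_nonneg (sub_nonneg.2 hsx), abs_of_nonneg (by positivity),
          abs_of_nonneg (mul_nonneg (sub_nonneg.2 hsx) (Real.log_nonneg hb))]
    _ ≤ √x * (1 / b) + (√x - √b) * (2 * √b) + 1 * |k| := by
        gcongr
    _ ≤ 2 + 2 + |k| := by
        have : √x * (1 / b) ≤ 2 := by
          rw [mul_one_div, div_le_iff₀ hb0]
          nlinarith
        linarith
    _ = 4 + |k| := by ring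

lemma exists_abs_momentWeight_sub_floor_le :
    ∃ C : ℝ, 0 < C ∧ ∀ ε : ℝ, |ε| = 1 → ∀ a q : ℕ, 0 < a → a ≤ q →
      |momentWeight ε (q / a) - momentWeight ε (q / a : ℕ)| ≤ C := by
  refine ⟨4 + (|Real.eulerMascheroniConstant - Real.log (8 * π)| + π / 2), by positivity,
    fun ε hε a q ha haq => ?_⟩
  have ha' : (0 : ℝ) < a := Nat.cast_pos.2 ha
  have hdiv : (q : ℝ) / a ≤ (q / a : ℕ) + 1 := by
    rw [div_le_iff₀ ha']
    exact_mod_cast (Nat.lt_mul_of_div_lt (Nat.lt_succ_self _) ha).le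
  have hweight (x : ℝ) : momentWeight ε x =
      √x * (Real.log x + (Real.eulerMascheroniConstant - Real.log (8 * π) - ε * (π / 2))) := by
    rw [momentWeight]
    ring
  rw [hweight, hweight]
  refine (abs_sqrt_mul_log_add_sub_le _ (Nat.one_le_cast.2 (Nat.div_pos haq ha))
    Nat.cast_div_le hdiv).trans (add_le_add_right ((abs_sub _ _).trans_eq ?_) _)
  rw [abs_mul, hε, one_mul, abs_of_pos Real.pi_div_two_pos]

lemma cfList_eq_cons (a : ℕ) {q : ℕ} (hq : 0 < q) : cfList a q = a / q :: cfList q (a % q) := by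
  rw [cfList]
  exact dif_neg hq.ne'

/-- The alternating sum of the weights of a list of partial quotients, in the recursive form in
which the Euclidean algorithm produces it. -/
noncomputable def momentWeightSum (ε : ℝ) : List ℕ → ℝ
  | [] => 0
  | b :: l => momentWeight ε b / 2 + ε * momentWeightSum ε l

lemma momentWeightSum_eq_sum (ε : ℝ) (l : List ℕ) :
    momentWeightSum ε l = ∑ i ∈ range l.length, ε ^ i * (momentWeight ε (l.getD i 0) / 2) := by
  induction l with
  | nil => simp only [momentWeightSum, List.length_nil, range_zero, sum_empty]
  | cons b l ih =>
    rw [momentWeightSum, ih, List.length_cons, sum_range_succ', mul_sum, add_comm]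
    simp only [List.getD_cons_succ, List.getD_cons_zero, pow_zero, one_mul, pow_succ']
    simp only [mul_assoc]

lemma momentWeightSum_tail {ε : ℝ} (hε : |ε| = 1) (l : List ℕ) :
    momentWeightSum ε l.tail =
      ε * (1 / 2) * ∑ j ∈ Icc 1 (l.length - 1), ε ^ j * momentWeight ε (l.getD j 0) := by
  have hε2 : ε ^ 2 = 1 := by rw [← sq_abs, hε, one_pow]
  rw [momentWeightSum_eq_sum, ← Ico_add_one_right_eq_Icc, sum_Ico_eq_sum_range, mul_sum,
    List.length_tail, Nat.add_sub_cancel]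
  refine sum_congr rfl fun i _ => ?_
  rw [List.getD_eq_getElem?_getD, List.getElem?_tail, ← List.getD_eq_getElem?_getD, add_comm 1 i,
    pow_succ]
  linear_combination -(ε ^ i * (momentWeight ε (l.getD (i + 1) 0) / 2)) * hε2

lemma exists_abs_parityCorrelation_sub_momentWeightSum_le :
    ∃ C : ℝ, 0 < C ∧ ∀ ε : ℝ, |ε| = 1 → ∀ a q : ℕ, a ≤ q → Nat.Coprime a q →
      |parityCorrelation ε a q - momentWeightSum ε (cfList q a)| ≤
        C * ((cfList q a).length + 1) := by
  obtain ⟨C₁, hstep⟩ := exists_abs_parityCorrelation_sub_mul_sub_momentWeight_le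
  obtain ⟨C₂, hC₂, hfloor⟩ := exists_abs_momentWeight_sub_floor_le
  refine ⟨|C₁| + C₂ + zetaHalf ^ 2, by positivity, fun ε hε a => ?_⟩
  induction a using Nat.strong_induction_on with
  | _ a ih =>
  intro q haq hc
  rcases Nat.eq_zero_or_pos a with rfl | ha
  · obtain rfl : q = 1 := by simpa using hc
    have hnil : cfList 1 0 = [] := by
      rw [cfList]
      exact dif_pos rfl
    rw [hnil, parityCorrelation, hurwitzCorrelation_one_right, hurwitzCorrelation_one_right,
      momentWeightSum, sub_zero, List.length_nil, Nat.cast_zero, zero_add, mul_one]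
    have hle := abs_le.1 hε.le
    rw [abs_le]
    constructor <;> nlinarith [abs_nonneg C₁, sq_nonneg zetaHalf]
  have : NeZero a := ⟨ha.ne'⟩
  have hmod := ih (q % a) (Nat.mod_lt q ha) a (Nat.mod_lt q ha).le
    (by rwa [Nat.Coprime, ← Nat.gcd_rec])
  rw [parityCorrelation_natCast_mod] at hmod
  rw [cfList_eq_cons q ha, momentWeightSum, List.length_cons]
  have hstep := (hstep ε hε a q ha haq hc).trans (le_abs_self C₁)
  have hfloor := hfloor ε hε a q ha haq
  set l := cfList a (q % a)
  calc _ = |(parityCorrelation ε a q - ε * parityCorrelation ε q a - momentWeight ε (q / a) / 2) +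
          (momentWeight ε (q / a) - momentWeight ε (q / a : ℕ)) / 2 +
          ε * (parityCorrelation ε q a - momentWeightSum ε l)| := by
        congr 1
        ring
    _ ≤ |C₁| + C₂ / 2 + (|C₁| + C₂ + zetaHalf ^ 2) * (l.length + 1) := by
        refine (abs_add_three _ _ _).trans ?_
        rw [abs_mul ε, hε, one_mul, abs_div, abs_two]
        gcongr
    _ ≤ (|C₁| + C₂ + zetaHalf ^ 2) * ((l.length + 1 : ℕ) + 1) := by
        push_cast
        nlinarith [sq_nonneg zetaHalf]

lemma one_le_length_cfList_sub_one {a q : ℕ} (hq : 1 < q) (hc : Nat.Coprime a q) :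
    1 ≤ (cfList a q).length - 1 := by
  have hmod : 0 < a % q := Nat.pos_of_ne_zero fun h =>
    hq.ne' (Nat.Coprime.eq_one_of_dvd hc.symm (Nat.dvd_of_mod_eq_zero h))
  rw [cfList_eq_cons a (zero_lt_one.trans hq), cfList_eq_cons q hmod, List.length_cons,
    Nat.add_sub_cancel, List.length_cons]
  exact Nat.le_add_left _ _

lemma exists_abs_parityCorrelation_sub_sum_le :
    ∃ C : ℝ, 0 < C ∧ ∀ ε : ℝ, |ε| = 1 → ∀ a q : ℕ, 1 < q → Nat.Coprime a q →
      |parityCorrelation ε a q - ε * (1 / 2) * ∑ j ∈ Icc 1 ((cfList a q).length - 1),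
        ε ^ j * momentWeight ε ((cfList a q).getD j 0)| ≤ C * ((cfList a q).length - 1 : ℕ) := by
  obtain ⟨C, hC, hbound⟩ := exists_abs_parityCorrelation_sub_momentWeightSum_le
  refine ⟨2 * C, by positivity, fun ε hε a q hq hc => ?_⟩
  have : NeZero q := ⟨(zero_lt_one.trans hq).ne'⟩
  have hmod := hbound ε hε (a % q) q (Nat.mod_lt a (zero_lt_one.trans hq)).le
    (by rw [Nat.Coprime, ← Nat.gcd_rec]; exact hc.symm)
  rw [parityCorrelation_natCast_mod] at hmod
  have hone : (1 : ℝ) ≤ ((cfList a q).length - 1 : ℕ) :=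
    Nat.one_le_cast.2 (one_le_length_cfList_sub_one hq hc)
  rw [← momentWeightSum_tail hε, cfList_eq_cons a (zero_lt_one.trans hq), List.tail_cons,
    List.length_cons, Nat.add_sub_cancel] at *
  exact hmod.trans (by nlinarith)

/-! ### Values of Dirichlet `L`-functions at `1/2` -/

lemma norm_cpow_neg_sub_cpow_neg_le {a b : ℝ} (ha : 0 < a) (hab : a ≤ b) {s : ℂ} (hs : 0 < s.re) :
    ‖(b : ℂ) ^ (-s) - (a : ℂ) ^ (-s)‖ ≤ ‖s‖ * a ^ (-s.re - 1) * (b - a) := by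
  have hs0 : -s ≠ 0 := neg_ne_zero.2 fun h => by simp [h] at hs
  refine norm_image_sub_le_of_norm_deriv_le_segment' (f := fun u : ℝ => (u : ℂ) ^ (-s))
    (fun t ht => (hasDerivAt_ofReal_cpow_const (ha.trans_le ht.1).ne' hs0).hasDerivWithinAt)
    (fun t ht => ?_) b (Set.right_mem_Icc.2 hab)
  rw [norm_mul, norm_neg, Complex.norm_cpow_eq_rpow_re_of_pos (ha.trans_le ht.1), Complex.sub_re,
    Complex.neg_re, Complex.one_re]
  gcongr ‖s‖ * ?_
  exact Real.rpow_le_rpow_of_nonpos ha ht.1 (by linarith)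

/-- The analogue of `sqrtDefect` at a complex exponent: the summand `t^(-s)` of the Hurwitz zeta
series minus its integral over `[t, t + 1]`. -/
noncomputable def cpowDefect (t : ℝ) (s : ℂ) : ℂ :=
  (t : ℂ) ^ (-s) - (((t + 1 : ℝ) : ℂ) ^ (1 - s) - (t : ℂ) ^ (1 - s)) / (1 - s)

lemma norm_cpowDefect_le {t : ℝ} (ht : 0 < t) {s : ℂ} (hs : 0 < s.re) (hs1 : s ≠ 1) :
    ‖cpowDefect t s‖ ≤ ‖s‖ * t ^ (-s.re - 1) := by
  have hderiv (u : ℝ) (hu : u ∈ Set.Icc t (t + 1)) :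
      HasDerivWithinAt (fun u : ℝ => (t : ℂ) ^ (-s) * u - (u : ℂ) ^ (-s + 1) / (-s + 1))
        ((t : ℂ) ^ (-s) * 1 - (u : ℂ) ^ (-s)) (Set.Icc t (t + 1)) u :=
    (((Complex.ofRealCLM.hasDerivAt (x := u)).const_mul _).sub
      (hasDerivAt_ofReal_cpow_const' (ht.trans_le hu.1).ne'
        (neg_injective.ne hs1))).hasDerivWithinAt
  have hbound (u : ℝ) (hu : u ∈ Set.Ico t (t + 1)) :
      ‖(t : ℂ) ^ (-s) * 1 - (u : ℂ) ^ (-s)‖ ≤ ‖s‖ * t ^ (-s.re - 1) := by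
    rw [mul_one, norm_sub_rev]
    exact (norm_cpow_neg_sub_cpow_neg_le ht hu.1 hs).trans
      (mul_le_of_le_one_right (by positivity) (by linarith [hu.2]))
  have hmean := norm_image_sub_le_of_norm_deriv_le_segment' hderiv hbound (t + 1)
    (Set.right_mem_Icc.2 (by linarith))
  rw [add_sub_cancel_left, mul_one] at hmean
  refine le_of_eq_of_le (congrArg norm ?_) hmean
  rw [cpowDefect, neg_add_eq_sub]
  push_cast
  ring

/-- A convex open set meeting the half-plane of absolute convergence of the Hurwitz zeta function
that contains `1/2` but not the pole `1`. -/
def continuationRegion : Set ℂ := {s | 1 / 4 < s.re ∧ s.re - s.im < 3 / 4 ∧ s.im < 2}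

lemma isOpen_continuationRegion : IsOpen continuationRegion :=
  (isOpen_lt continuous_const Complex.continuous_re).inter
    ((isOpen_lt (Complex.continuous_re.sub Complex.continuous_im) continuous_const).inter
      (isOpen_lt Complex.continuous_im continuous_const))

lemma convex_continuationRegion : Convex ℝ continuationRegion :=
  (convex_halfSpace_re_gt _).inter
    ((convex_halfSpace_lt (Complex.reLm - Complex.imLm).isLinear _).inter
      (convex_halfSpace_im_lt _))

lemma ne_one_of_mem_continuationRegion {s : ℂ} (hs : s ∈ continuationRegion) : s ≠ 1 := by
  rintro rfl
  norm_num [continuationRegion] at hs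

lemma norm_cpowDefect_add_natCast_le {x : ℝ} (h0 : 0 < x) (h1 : x ≤ 1) (n : ℕ) {s : ℂ}
    (hs : s ∈ continuationRegion) :
    ‖cpowDefect (x + n) s‖ ≤ 5 * x ^ (-4 : ℝ) * (1 / ((n : ℝ) + 1) ^ (5 / 4 : ℝ)) := by
  have hs1 := ne_one_of_mem_continuationRegion hs
  obtain ⟨hre, hsub, him⟩ := hs
  have hs : ‖s‖ ≤ 5 :=
    calc ‖s‖ ≤ |s.re| + |s.im| := Complex.norm_le_abs_re_add_abs_im s
      _ ≤ 3 + 2 := by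
          gcongr <;> rw [abs_le] <;> constructor <;> linarith
      _ = 5 := by norm_num
  have hmul : x * (n + 1) ≤ x + n := by
    linarith [mul_le_of_le_one_left (Nat.cast_nonneg (α := ℝ) n) h1]
  calc ‖cpowDefect (x + n) s‖ ≤ ‖s‖ * (x + n) ^ (-s.re - 1) :=
        norm_cpowDefect_le (by positivity) (by linarith) hs1
    _ ≤ 5 * (x * (n + 1)) ^ (-s.re - 1) := by
        gcongr ?_ * ?_
        exact Real.rpow_le_rpow_of_nonpos (by positivity) hmul (by linarith)
    _ = 5 * (x ^ (-s.re - 1) * ((n : ℝ) + 1) ^ (-s.re - 1)) := by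
        rw [Real.mul_rpow h0.le (by positivity)]
    _ ≤ 5 * (x ^ (-4 : ℝ) * ((n : ℝ) + 1) ^ (-(5 / 4) : ℝ)) := by
        gcongr 5 * (?_ * ?_)
        · exact Real.rpow_le_rpow_of_exponent_ge h0 h1 (by linarith)
        · exact Real.rpow_le_rpow_of_exponent_le (by linarith [Nat.cast_nonneg (α := ℝ) n])
            (by linarith)
    _ = _ := by
        rw [Real.rpow_neg (by positivity) (5 / 4), one_div, mul_assoc]

lemma summable_cpowDefect_bound (x : ℝ) :
    Summable fun n : ℕ => 5 * x ^ (-4 : ℝ) * (1 / ((n : ℝ) + 1) ^ (5 / 4 : ℝ)) := by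
  have hsum := (summable_nat_add_iff 1).2
    ((Real.summable_one_div_nat_rpow (p := 5 / 4)).2 (by norm_num))
  simpa only [Nat.cast_add_one] using hsum.mul_left (5 * x ^ (-4 : ℝ))

lemma sum_one_div_cpow_eq (x : ℝ) (s : ℂ) (N : ℕ) :
    ∑ n ∈ range N, 1 / ((n : ℂ) + x) ^ s =
      ∑ n ∈ range N, cpowDefect (x + n) s +
        (((x + N : ℝ) : ℂ) ^ (1 - s) - (x : ℂ) ^ (1 - s)) / (1 - s) := by
  have hterm (n : ℕ) : 1 / ((n : ℂ) + x) ^ s = cpowDefect (x + n) s +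
      (((x + (n + 1 : ℕ) : ℝ) : ℂ) ^ (1 - s) / (1 - s) -
        ((x + n : ℝ) : ℂ) ^ (1 - s) / (1 - s)) := by
    have hcast : (n : ℂ) + x = ((x + n : ℝ) : ℂ) := by
      push_cast
      ring
    rw [cpowDefect, hcast, Complex.cpow_neg, one_div, Nat.cast_add_one, add_assoc x]
    ring
  rw [sum_congr rfl fun n _ => hterm n, sum_add_distrib,
    sum_range_sub (fun n : ℕ => ((x + n : ℝ) : ℂ) ^ (1 - s) / (1 - s)), Nat.cast_zero, add_zero,
    sub_div]

lemma hurwitzZeta_eq_tsum_of_one_lt_re {x : ℝ} (h0 : 0 < x) (h1 : x ≤ 1) {s : ℂ}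
    (hs : s ∈ continuationRegion) (hre : 1 < s.re) :
    HurwitzZeta.hurwitzZeta (x : UnitAddCircle) s =
      ∑' n : ℕ, cpowDefect (x + n) s - (x : ℂ) ^ (1 - s) / (1 - s) := by
  have hzeta := (HurwitzZeta.hasSum_hurwitzZeta_of_one_lt_re ⟨h0.le, h1⟩ hre).tendsto_sum_nat
  have hdefect := (Summable.of_norm_bounded (summable_cpowDefect_bound x) fun n =>
    norm_cpowDefect_add_natCast_le h0 h1 n hs).hasSum.tendsto_sum_nat
  have hpow : Tendsto (fun N : ℕ => ((x + N : ℝ) : ℂ) ^ (1 - s)) atTop (𝓝 0) := by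
    have hnorm (N : ℕ) : ‖((x + N : ℝ) : ℂ) ^ (1 - s)‖ = (x + N) ^ (-(s.re - 1)) := by
      rw [Complex.norm_cpow_eq_rpow_re_of_pos (by positivity), Complex.sub_re, Complex.one_re,
        neg_sub]
    rw [tendsto_zero_iff_norm_tendsto_zero]
    simp only [hnorm]
    exact (tendsto_rpow_neg_atTop (sub_pos.2 hre)).comp
      (tendsto_atTop_add_const_left _ _ tendsto_natCast_atTop_atTop)
  have hlim := hdefect.add ((hpow.sub_const ((x : ℂ) ^ (1 - s))).div_const (1 - s))
  rw [zero_sub, neg_div, ← sub_eq_add_neg] at hlim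
  exact tendsto_nhds_unique hzeta (hlim.congr fun N => (sum_one_div_cpow_eq x s N).symm)

lemma differentiableAt_cpowDefect {t : ℝ} (ht : 0 < t) {s : ℂ} (hs : s ≠ 1) :
    DifferentiableAt ℂ (cpowDefect t) s := by
  have ht0 : (t : ℂ) ≠ 0 := Complex.ofReal_ne_zero.2 ht.ne'
  have ht1 : ((t + 1 : ℝ) : ℂ) ≠ 0 := Complex.ofReal_ne_zero.2 (by positivity)
  have hsub : DifferentiableAt ℂ (fun s : ℂ => 1 - s) s := differentiableAt_id.const_sub 1
  exact (differentiableAt_id.neg.const_cpow (.inl ht0)).sub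
    (((hsub.const_cpow (.inl ht1)).sub (hsub.const_cpow (.inl ht0))).div hsub
      (sub_ne_zero.2 hs.symm))

lemma differentiableOn_tsum_cpowDefect {x : ℝ} (h0 : 0 < x) (h1 : x ≤ 1) :
    DifferentiableOn ℂ (fun s => ∑' n : ℕ, cpowDefect (x + n) s - (x : ℂ) ^ (1 - s) / (1 - s))
      continuationRegion := by
  refine (Complex.differentiableOn_tsum_of_summable_norm (summable_cpowDefect_bound x)
    (fun n s hs => (differentiableAt_cpowDefect (by positivity)
      (ne_one_of_mem_continuationRegion hs)).differentiableWithinAt) isOpen_continuationRegion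
    fun n s hs => norm_cpowDefect_add_natCast_le h0 h1 n hs).sub fun s hs => ?_
  have hsub : DifferentiableAt ℂ (fun s : ℂ => 1 - s) s := differentiableAt_id.const_sub 1
  exact ((hsub.const_cpow (.inl (Complex.ofReal_ne_zero.2 h0.ne'))).div hsub
    (sub_ne_zero.2 (ne_one_of_mem_continuationRegion hs).symm)).differentiableWithinAt

lemma hurwitzZeta_eqOn_tsum {x : ℝ} (h0 : 0 < x) (h1 : x ≤ 1) :
    Set.EqOn (HurwitzZeta.hurwitzZeta (x : UnitAddCircle))
      (fun s => ∑' n : ℕ, cpowDefect (x + n) s - (x : ℂ) ^ (1 - s) / (1 - s))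
      continuationRegion := by
  have hmem : (⟨3 / 2, 1⟩ : ℂ) ∈ continuationRegion := by norm_num [continuationRegion]
  have hzeta : DifferentiableOn ℂ (HurwitzZeta.hurwitzZeta (x : UnitAddCircle))
      continuationRegion := fun s hs => (HurwitzZeta.differentiableAt_hurwitzZeta _
    (ne_one_of_mem_continuationRegion hs)).differentiableWithinAt
  refine (hzeta.analyticOnNhd isOpen_continuationRegion).eqOn_of_preconnected_of_eventuallyEq
    ((differentiableOn_tsum_cpowDefect h0 h1).analyticOnNhd isOpen_continuationRegion)
    convex_continuationRegion.isPreconnected hmem ?_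
  have hopen : IsOpen {s : ℂ | 1 < s.re} := isOpen_lt continuous_const Complex.continuous_re
  filter_upwards [isOpen_continuationRegion.mem_nhds hmem,
    hopen.mem_nhds (by norm_num : (⟨3 / 2, 1⟩ : ℂ) ∈ {s : ℂ | 1 < s.re})] with s hs hre
  exact hurwitzZeta_eq_tsum_of_one_lt_re h0 h1 hs hre

lemma ofReal_cpow_half {a : ℝ} (ha : 0 ≤ a) : (a : ℂ) ^ (1 / 2 : ℂ) = (√a : ℝ) := by
  rw [Real.sqrt_eq_rpow, Complex.ofReal_cpow ha]
  norm_num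

lemma cpowDefect_half {t : ℝ} (ht : 0 ≤ t) : cpowDefect t (1 / 2) = sqrtDefect t := by
  rw [cpowDefect, sqrtDefect, Complex.cpow_neg, sub_half, ofReal_cpow_half ht,
    ofReal_cpow_half (by positivity)]
  push_cast
  ring

lemma hurwitzZeta_half {x : ℝ} (h0 : 0 < x) (h1 : x ≤ 1) :
    HurwitzZeta.hurwitzZeta (x : UnitAddCircle) (1 / 2) = hurwitzHalf x := by
  have hmem : (1 / 2 : ℂ) ∈ continuationRegion := by norm_num [continuationRegion]
  refine (hurwitzZeta_eqOn_tsum h0 h1 hmem).trans ?_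
  beta_reduce
  rw [hurwitzHalf, sub_half, ofReal_cpow_half h0.le]
  have hdefect (n : ℕ) : cpowDefect (x + n) (1 / 2) = sqrtDefect (x + n) :=
    cpowDefect_half (by positivity)
  simp only [hdefect]
  push_cast
  ring

lemma zmodHurwitz_zero (q : ℕ) : zmodHurwitz q 0 = zetaHalf := by
  rw [zmodHurwitz, ZMod.val_zero, Nat.cast_zero, zero_div, periodicHurwitz_zero]

lemma hurwitzZeta_toAddCircle_half {q : ℕ} [NeZero q] (z : ZMod q) :
    HurwitzZeta.hurwitzZeta (ZMod.toAddCircle z) (1 / 2) = zmodHurwitz q z := by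
  rcases eq_or_ne z 0 with rfl | hz
  · rw [map_zero, ← AddCircle.coe_period, hurwitzZeta_half one_pos le_rfl, zmodHurwitz_zero,
      zetaHalf]
  · have hq : (0 : ℝ) < q := Nat.cast_pos.2 (NeZero.pos q)
    have hval : (0 : ℝ) < z.val := Nat.cast_pos.2 (Nat.pos_of_ne_zero ((ZMod.val_ne_zero z).2 hz))
    have h0 : (0 : ℝ) < z.val / q := by positivity
    have h1 : (z.val : ℝ) / q ≤ 1 := (div_le_one hq).2 (Nat.cast_le.2 z.val_lt.le)
    rw [ZMod.toAddCircle_apply, hurwitzZeta_half h0 h1, zmodHurwitz,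
      periodicHurwitz_eq_hurwitzHalf h0 h1]

lemma LFunction_half {q : ℕ} [NeZero q] (χ : DirichletCharacter ℂ q) :
    χ.LFunction (1 / 2) = (∑ z : ZMod q, χ z * zmodHurwitz q z) / (√q : ℝ) := by
  simp only [DirichletCharacter.LFunction, ZMod.LFunction, hurwitzZeta_toAddCircle_half]
  rw [Complex.cpow_neg, ← Complex.ofReal_natCast, ofReal_cpow_half q.cast_nonneg,
    inv_mul_eq_div]

/-! ### The twisted second moment over all characters -/

section PrimeModulus

variable {q : ℕ} [Fact q.Prime]

lemma norm_sq_LFunction_half_mul_apply (χ : DirichletCharacter ℂ q) (a : ZMod q) :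
    (‖χ.LFunction (1 / 2)‖ ^ 2 : ℂ) * χ a =
      (∑ w, ∑ z, χ w⁻¹ * χ (a * z) * (zmodHurwitz q w * zmodHurwitz q z)) / q := by
  have hconj : (starRingEnd ℂ) (∑ w, χ w * zmodHurwitz q w) = ∑ w, χ w⁻¹ * zmodHurwitz q w := by
    rw [map_sum]
    refine sum_congr rfl fun w _ => ?_
    rw [map_mul, Complex.conj_ofReal, ← MulChar.inv_apply' χ w, ← MulChar.star_apply' χ w,
      starRingEnd_apply]
  have hsq : ((√q : ℝ) : ℂ) * (√q : ℝ) = q := by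
    rw [← Complex.ofReal_mul, Real.mul_self_sqrt q.cast_nonneg, Complex.ofReal_natCast]
  rw [← Complex.conj_mul', LFunction_half, map_div₀, Complex.conj_ofReal, hconj, div_mul_div_comm,
    hsq, div_mul_eq_mul_div, sum_mul_sum, sum_mul]
  simp only [sum_mul, map_mul]
  congr 1
  refine sum_congr rfl fun w _ => sum_congr rfl fun z _ => ?_
  ring

lemma sum_sum_char_inv_mul_char_mul (f : ZMod q → ℂ) {a : ZMod q} (ha : a ≠ 0) :
    ∑ χ : DirichletCharacter ℂ q, ∑ w, ∑ z, χ w⁻¹ * χ (a * z) * (f w * f z) =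
      q.totient * (∑ z, f z * f (a * z) - f 0 ^ 2) := by
  have horth (z w : ZMod q) : ∑ χ : DirichletCharacter ℂ q, χ w⁻¹ * χ (a * z) * (f w * f z) =
      if w = a * z then q.totient * (f z * f (a * z) - if z = 0 then f 0 ^ 2 else 0) else 0 := by
    rw [← sum_mul]
    rcases eq_or_ne w 0 with rfl | hw
    · have hz : 0 = a * z ↔ z = 0 := by rw [eq_comm, mul_eq_zero, or_iff_right ha]
      have hsum : ∑ χ : DirichletCharacter ℂ q, χ 0⁻¹ * χ (a * z) = 0 :=
        sum_eq_zero fun χ _ => by rw [inv_zero, MulChar.map_zero, zero_mul]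
      rw [hsum, zero_mul]
      split_ifs with h0 hz0
      · rw [hz0, mul_zero]
        ring
      · exact absurd (hz.1 h0) hz0
      · rfl
    · rw [DirichletCharacter.sum_char_inv_mul_char_eq ℂ (IsUnit.mk0 w hw)]
      split_ifs with h hz
      · exact absurd (by rw [h, hz, mul_zero]) hw
      · rw [h]
        ring
      · exact zero_mul _
  calc ∑ χ : DirichletCharacter ℂ q, ∑ w, ∑ z, χ w⁻¹ * χ (a * z) * (f w * f z)
      = ∑ z, ∑ w, ∑ χ : DirichletCharacter ℂ q, χ w⁻¹ * χ (a * z) * (f w * f z) := by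
        rw [sum_comm]
        simp only [sum_comm (s := (univ : Finset (DirichletCharacter ℂ q)))]
        exact sum_comm
    _ = ∑ z, q.totient * (f z * f (a * z) - if z = 0 then f 0 ^ 2 else 0) := by
        simp only [horth, sum_ite_eq', mem_univ, if_true]
    _ = q.totient * (∑ z, f z * f (a * z) - f 0 ^ 2) := by
        rw [← mul_sum, sum_sub_distrib, sum_ite_eq', if_pos (mem_univ _)]

lemma sum_norm_sq_LFunction_half_mul_apply {a : ℤ} (ha : (a : ZMod q) ≠ 0) :
    ∑ χ : DirichletCharacter ℂ q, (‖χ.LFunction (1 / 2)‖ ^ 2 : ℂ) * χ a =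
      (q.totient / √q * (hurwitzCorrelation a q - zetaHalf ^ 2 / √q) : ℝ) := by
  have hq : (0 : ℝ) < √q := Real.sqrt_pos.2 (Nat.cast_pos.2 (NeZero.pos q))
  have hsq : (q : ℂ) = (√q : ℝ) ^ 2 := by
    rw [← Complex.ofReal_pow, Real.sq_sqrt q.cast_nonneg, Complex.ofReal_natCast]
  simp only [norm_sq_LFunction_half_mul_apply]
  rw [← sum_div, sum_sum_char_inv_mul_char_mul (fun z => (zmodHurwitz q z : ℂ)) ha,
    zmodHurwitz_zero, hurwitzCorrelation_eq_sum_zmod, hsq]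
  have hq' : ((√q : ℝ) : ℂ) ≠ 0 := Complex.ofReal_ne_zero.2 hq.ne'
  push_cast
  field_simp

lemma sum_one_mul_zmodHurwitz :
    ∑ z, (1 : DirichletCharacter ℂ q) z * zmodHurwitz q z = ((√q - 1) * zetaHalf : ℝ) := by
  have hterm (z : ZMod q) : (1 : DirichletCharacter ℂ q) z * zmodHurwitz q z =
      zmodHurwitz q z - if z = 0 then (zetaHalf : ℂ) else 0 := by
    rcases eq_or_ne z 0 with rfl | hz
    · rw [MulChar.map_zero, zero_mul, if_pos rfl, zmodHurwitz_zero, sub_self]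
    · rw [MulChar.one_apply (IsUnit.mk0 z hz), one_mul, if_neg hz, sub_zero]
  rw [sum_congr rfl fun z _ => hterm z, sum_sub_distrib, sum_ite_eq', if_pos (mem_univ _),
    ← Complex.ofReal_sum, sum_zmodHurwitz]
  push_cast
  ring

lemma norm_LFunction_one_half_le :
    ‖(1 : DirichletCharacter ℂ q).LFunction (1 / 2)‖ ≤ |zetaHalf| := by
  have hq : 1 ≤ √(q : ℝ) := Real.one_le_sqrt.2 (Nat.one_le_cast.2 (NeZero.pos q))
  rw [LFunction_half, sum_one_mul_zmodHurwitz, ← Complex.ofReal_div, Complex.norm_real,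
    Real.norm_eq_abs, abs_div, abs_mul, abs_of_nonneg (sub_nonneg.2 hq),
    abs_of_nonneg (zero_le_one.trans hq), div_le_iff₀ (zero_lt_one.trans_le hq), mul_comm]
  gcongr
  linarith

/-! ### The moments over nontrivial characters -/

lemma Mtw_eq {a : ℤ} (ha : (a : ZMod q) ≠ 0) :
    Mtw a q = (hurwitzCorrelation a q - zetaHalf ^ 2 / √q : ℝ) -
      (√q / q.totient : ℝ) * ‖(1 : DirichletCharacter ℂ q).LFunction (1 / 2)‖ ^ 2 := by
  classical
  have hq : ((√q : ℝ) : ℂ) ≠ 0 :=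
    Complex.ofReal_ne_zero.2 (Real.sqrt_pos.2 (Nat.cast_pos.2 (NeZero.pos q))).ne'
  have hφ : (q.totient : ℂ) ≠ 0 := Nat.cast_ne_zero.2 (Nat.totient_pos.2 (NeZero.pos q)).ne'
  have hone := MulChar.one_apply (R' := ℂ) (IsUnit.mk0 (a : ZMod q) ha)
  have hsum : (∑ χ : DirichletCharacter ℂ q, if χ = 1 then 0 else
      (‖χ.LFunction (1 / 2)‖ ^ 2 : ℂ) * χ a) =
      (q.totient / √q * (hurwitzCorrelation a q - zetaHalf ^ 2 / √q) : ℝ) -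
        ‖(1 : DirichletCharacter ℂ q).LFunction (1 / 2)‖ ^ 2 := by
    rw [← sum_norm_sq_LFunction_half_mul_apply ha, eq_sub_iff_add_eq,
      ← Fintype.sum_ite_eq' 1 fun χ : DirichletCharacter ℂ q => (‖χ.LFunction (1 / 2)‖ ^ 2 : ℂ),
      ← sum_add_distrib]
    refine sum_congr rfl fun χ _ => ?_
    split_ifs with h
    · rw [h, hone, zero_add, mul_one]
    · rw [add_zero]
  rw [Mtw, hsum]
  push_cast
  field_simp

lemma norm_Mtw_sub_hurwitzCorrelation_le {a : ℤ} (ha : (a : ZMod q) ≠ 0) :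
    ‖Mtw a q - hurwitzCorrelation a q‖ ≤ 3 * zetaHalf ^ 2 := by
  have hq2 : (2 : ℝ) ≤ q := Nat.ofNat_le_cast.2 (Fact.out : q.Prime).two_le
  have hsqrt : 1 ≤ √(q : ℝ) := Real.one_le_sqrt.2 (by linarith)
  have hsq : √(q : ℝ) ^ 2 = q := Real.sq_sqrt q.cast_nonneg
  have hφ : (q.totient : ℝ) = q - 1 := by
    rw [Nat.totient_prime Fact.out, Nat.cast_pred (NeZero.pos q)]
  have hratio : √q / (q.totient : ℝ) ≤ 2 := by
    rw [hφ, div_le_iff₀ (by linarith)]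
    nlinarith
  calc ‖Mtw a q - hurwitzCorrelation a q‖
      = ‖((zetaHalf ^ 2 / √q +
          √q / q.totient * ‖(1 : DirichletCharacter ℂ q).LFunction (1 / 2)‖ ^ 2 : ℝ) : ℂ)‖ := by
        rw [Mtw_eq ha, ← norm_neg]
        push_cast
        ring_nf
    _ = zetaHalf ^ 2 / √q +
          √q / q.totient * ‖(1 : DirichletCharacter ℂ q).LFunction (1 / 2)‖ ^ 2 := by
        rw [Complex.norm_real, Real.norm_of_nonneg (by positivity)]
    _ ≤ zetaHalf ^ 2 + 2 * |zetaHalf| ^ 2 := by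
        gcongr
        · exact div_le_self (sq_nonneg _) hsqrt
        · exact norm_LFunction_one_half_le
    _ = 3 * zetaHalf ^ 2 := by
        rw [sq_abs]
        ring

end PrimeModulus

section Parity

variable {q : ℕ}

lemma apply_neg_one_eq_one_or (χ : DirichletCharacter ℂ q) : χ (-1) = 1 ∨ χ (-1) = -1 := by
  rw [← sq_eq_one_iff, ← map_pow, neg_one_sq, map_one]

lemma Mtw_eq_MtwParity_add [NeZero q] (a : ℤ) :
    Mtw a q = MtwParity 1 a q + MtwParity (-1) a q := by
  have hne : (1 : ℂ) ≠ -1 := by norm_num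
  rw [Mtw, MtwParity, MtwParity, ← mul_add, ← sum_add_distrib]
  refine congrArg _ (sum_congr rfl fun χ _ => ?_)
  rcases apply_neg_one_eq_one_or χ with h | h <;> by_cases hχ : χ = 1 <;>
    simp [h, hχ, hne, hne.symm]

lemma Mtw_neg_eq_MtwParity_sub [NeZero q] (a : ℤ) :
    Mtw (-a) q = MtwParity 1 a q - MtwParity (-1) a q := by
  have hne : (1 : ℂ) ≠ -1 := by norm_num
  have hneg (χ : DirichletCharacter ℂ q) : χ (-a : ℤ) = χ (-1) * χ a := by
    rw [← map_mul, neg_one_mul, Int.cast_neg]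
  rw [Mtw, MtwParity, MtwParity, ← mul_sub, ← sum_sub_distrib]
  refine congrArg _ (sum_congr rfl fun χ _ => ?_)
  rw [hneg]
  rcases apply_neg_one_eq_one_or χ with h | h <;> by_cases hχ : χ = 1 <;>
    simp [h, hχ, hne, hne.symm]

lemma norm_MtwParity_sub_parityCorrelation_le [Fact q.Prime] {a : ℤ} (ha : (a : ZMod q) ≠ 0)
    {ε : ℤ} (hε : ε = 1 ∨ ε = -1) :
    ‖MtwParity ε a q - parityCorrelation ε a q‖ ≤ 3 * zetaHalf ^ 2 := by
  have hpos := norm_Mtw_sub_hurwitzCorrelation_le ha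
  have hneg := norm_Mtw_sub_hurwitzCorrelation_le (q := q) (a := -a)
    (by rwa [Int.cast_neg, neg_ne_zero])
  have hsplit : MtwParity ε a q - parityCorrelation ε a q =
      ((Mtw a q - hurwitzCorrelation a q) +
        (ε : ℂ) * (Mtw (-a) q - hurwitzCorrelation (-a) q)) / 2 := by
    rw [Mtw_eq_MtwParity_add, Mtw_neg_eq_MtwParity_sub, parityCorrelation]
    rcases hε with rfl | rfl <;> push_cast <;> ring
  have hnorm : ‖(ε : ℂ)‖ = 1 := by rcases hε with rfl | rfl <;> simp
  calc ‖MtwParity ε a q - parityCorrelation ε a q‖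
      = ‖(Mtw a q - hurwitzCorrelation a q) +
          (ε : ℂ) * (Mtw (-a) q - hurwitzCorrelation (-a) q)‖ / 2 := by
        rw [hsplit, norm_div, Complex.norm_ofNat]
    _ ≤ (‖Mtw a q - hurwitzCorrelation a q‖ +
          ‖(ε : ℂ) * (Mtw (-a) q - hurwitzCorrelation (-a) q)‖) / 2 := by
        gcongr
        exact norm_add_le _ _
    _ ≤ (3 * zetaHalf ^ 2 + 3 * zetaHalf ^ 2) / 2 := by
        rw [norm_mul, hnorm, one_mul]
        gcongr
    _ = 3 * zetaHalf ^ 2 := by ring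

end Parity

/-! ### Continued fraction expansion of the moments -/

lemma exists_norm_MtwParity_sub_sum_le :
    ∃ C : ℝ, 0 < C ∧ ∀ q a : ℕ, ∀ [Fact q.Prime], Nat.Coprime a q →
      ∀ ε : ℤ, ε = 1 ∨ ε = -1 →
        ‖MtwParity ε a q - (ε : ℂ) * (1 / 2 : ℂ) *
          ((∑ j ∈ Icc 1 ((cfList a q).length - 1),
            (ε : ℝ) ^ j * momentWeight ε ((cfList a q).getD j 0) : ℝ) : ℂ)‖ ≤
          C * ((cfList a q).length - 1 : ℕ) := by
  obtain ⟨K, hK, hcorr⟩ := exists_abs_parityCorrelation_sub_sum_le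
  refine ⟨K + 3 * zetaHalf ^ 2, by positivity, fun q a _ hc ε hε => ?_⟩
  have hq : q.Prime := Fact.out
  have ha : ((a : ℤ) : ZMod q) ≠ 0 := by
    rw [Int.cast_natCast, ← ZMod.coe_unitOfCoprime a hc]
    exact (ZMod.unitOfCoprime a hc).ne_zero
  have hk : (1 : ℝ) ≤ ((cfList a q).length - 1 : ℕ) :=
    Nat.one_le_cast.2 (one_le_length_cfList_sub_one hq.one_lt hc)
  have hmain := hcorr ε (by rcases hε with rfl | rfl <;> simp) a q hq.one_lt hc
  set S := ∑ j ∈ Icc 1 ((cfList a q).length - 1),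
    (ε : ℝ) ^ j * momentWeight ε ((cfList a q).getD j 0)
  calc ‖MtwParity ε a q - (ε : ℂ) * (1 / 2 : ℂ) * (S : ℂ)‖
      ≤ ‖MtwParity ε a q - parityCorrelation ε a q‖ +
          ‖((parityCorrelation ε a q - ε * (1 / 2) * S : ℝ) : ℂ)‖ := by
        refine (norm_add_le _ _).trans_eq' (congrArg norm ?_)
        push_cast
        ring
    _ ≤ 3 * zetaHalf ^ 2 + K * ((cfList a q).length - 1 : ℕ) := by
        rw [Complex.norm_real]
        exact add_le_add (norm_MtwParity_sub_parityCorrelation_le ha hε) hmain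
    _ ≤ (K + 3 * zetaHalf ^ 2) * ((cfList a q).length - 1 : ℕ) := by
        linarith [mul_le_mul_of_nonneg_left hk (by positivity : 0 ≤ 3 * zetaHalf ^ 2)]

lemma sum_momentWeight_one_add_neg_one (b : ℕ → ℝ) (s : Finset ℕ) :
    1 / 2 * ∑ j ∈ s, 1 ^ j * momentWeight 1 (b j) +
        -1 * (1 / 2) * ∑ j ∈ s, (-1) ^ j * momentWeight (-1) (b j) =
      (∑ j ∈ s, if Odd j then
          √(b j) * (Real.log (b j) + Real.eulerMascheroniConstant - Real.log (8 * π)) else 0) -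
        π / 2 * ∑ j ∈ s, if Even j then √(b j) else 0 := by
  simp only [mul_sum, ← sum_sub_distrib, ← sum_add_distrib, momentWeight]
  refine sum_congr rfl fun j _ => ?_
  rcases Nat.even_or_odd j with h | h
  · rw [if_neg (Nat.not_odd_iff_even.2 h), if_pos h, h.neg_one_pow]
    ring
  · rw [if_pos h, if_neg (Nat.not_even_iff_odd.2 h), h.neg_one_pow]
    ring

end TwistedMoment

/-- Corollary 5 of the paper: `M(a,q)` in terms of the continued fraction expansion
of `a/q`, with a uniform error `O(κ)`. -/
theorem moment_continued_fraction :
    ∃ C : ℝ, 0 < C ∧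
      ∀ (q a : ℕ) (hq : q.Prime), 0 < a → Nat.Coprime a q →
        haveI : NeZero q := ⟨hq.ne_zero⟩
        (‖Mtw a q -
            ((∑ j ∈ Finset.Icc 1 ((cfList a q).length - 1),
              if Odd j then
                Real.sqrt ((cfList a q).getD j 0) *
                  (Real.log ((cfList a q).getD j 0) + Real.eulerMascheroniConstant
                    - Real.log (8*π))
              else 0 : ℝ) : ℂ)
          + ((π/2 * ∑ j ∈ Finset.Icc 1 ((cfList a q).length - 1),
              if Even j then Real.sqrt ((cfList a q).getD j 0) else 0 : ℝ) : ℂ)‖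
          ≤ C * ((cfList a q).length - 1 : ℕ)) ∧
        ∀ (ε : ℤ), ε = 1 ∨ ε = -1 →
          ‖MtwParity ε a q -
              (ε : ℂ) * (1/2 : ℂ) *
                ((∑ j ∈ Finset.Icc 1 ((cfList a q).length - 1),
                  (ε : ℝ)^j * Real.sqrt ((cfList a q).getD j 0) *
                    (Real.log ((cfList a q).getD j 0) + Real.eulerMascheroniConstant
                      - Real.log (8*π) - (ε : ℝ) * π/2) : ℝ) : ℂ)‖
            ≤ C * ((cfList a q).length - 1 : ℕ) := by
  obtain ⟨C, hC, hparity⟩ := TwistedMoment.exists_norm_MtwParity_sub_sum_le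
  refine ⟨2 * C, by positivity, fun q a hq _ hc => ?_⟩
  have : Fact q.Prime := ⟨hq⟩
  refine ⟨?_, fun ε hε => ?_⟩
  · have hsum := congrArg ((↑) : ℝ → ℂ) (TwistedMoment.sum_momentWeight_one_add_neg_one
      (fun j => (cfList a q).getD j 0) (Icc 1 ((cfList a q).length - 1)))
    have htriangle :=
      norm_add_le_of_le (hparity q a hc 1 (.inl rfl)) (hparity q a hc (-1) (.inr rfl))
    rw [TwistedMoment.Mtw_eq_MtwParity_add]
    refine (htriangle.trans_eq' (congrArg norm ?_)).trans_eq (by ring)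
    push_cast at hsum ⊢
    linear_combination -hsum
  · have hmain := hparity q a hc ε hε
    simp only [TwistedMoment.momentWeight, ← mul_assoc (_ ^ _)] at hmain
    refine hmain.trans ?_
    gcongr
    linarith
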